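/- Time-splitting approximation for the fractional Burgers equation (Proposition timesplit): Fix 0 < α < 1 and N > 0. There exist h₀ = h₀(α,N) > 0 and C = C(α,N) > 0 such that the following holds for every 0 < h ≤ h₀. Let θ : ℝ × [0,h] → ℝ be a smooth periodic-in-x solution of ∂_t θ = θ ∂_x θ − L_α θ with ‖θ(·,t)‖_{C³} ≤ N for 0 ≤ t ≤ h, where L_α f(x) = P.V. ∫_ℝ (f(x) − f(x+y))/|y|^{1+2α} dy. Let w solve the inviscid Burgers equation ∂_t w = w ∂_x w on [0,h] with w(·,0) = θ(·,0), and set v(x,h) = (Φ_h ∗ w(·,h))(x), where Φ_t is the fractional heat kernel of e^{−L_α t}. Then ‖θ(·,h) − v(·,h)‖_{C¹} ≤ C h². -/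

import Mathlib

open Set MeasureTheory Filter Topology

noncomputable section

/-- The normalization constant matching the unnormalized fractional Laplacian
`L_α f(x) = P.V.∫ (f(x)−f(x+y))/|y|^{1+2α} dy`, whose Fourier symbol is
`(∫ (1−cos u)/|u|^{1+2α} du) · |ξ|^{2α}`. -/
def fracNormConst (α : ℝ) : ℝ := ∫ u : ℝ, (1 - Real.cos u) / |u| ^ (1 + 2*α)

/-- The convolution kernel of the semigroup `e^{−L_α t}`: the inverse Fourier transform of
`exp(−c_α t |ξ|^{2α})` with the normalization constant `c_α` matching `L_α`. -/
def fracSemigroupKernel (α t x : ℝ) : ℝ :=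
  (1 / (2 * Real.pi)) *
    (∫ s : ℝ, Complex.exp (((x * s : ℝ) : ℂ) * Complex.I
      - ((fracNormConst α * t * |s| ^ (2*α) : ℝ) : ℂ))).re

open scoped BoundedContinuousFunction

/-- Quantitative `C^{1,1}` control of `f` on the interval `(a, b)` by the constant `n`, phrased with
finite differences so that it is stable under pointwise limits. -/
def C11On (f : ℝ → ℝ) (n a b : ℝ) : Prop :=
  (∀ y ∈ Ioo a b, |f y| ≤ n) ∧ (∀ y ∈ Ioo a b, ∀ z ∈ Ioo a b, |f y - f z| ≤ n * |y - z|) ∧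
    ∀ y z k, y ∈ Ioo a b → z ∈ Ioo a b → y + k ∈ Ioo a b → z + k ∈ Ioo a b →
      |f (y + k) - f y - (f (z + k) - f z)| ≤ n * (|k| * |y - z|)

theorem C11On.mono {f : ℝ → ℝ} {n m a b a' b' : ℝ} (hf : C11On f n a b) (hnm : n ≤ m)
    (ha : a ≤ a') (hb : b' ≤ b) : C11On f m a' b' := by
  have hs : Ioo a' b' ⊆ Ioo a b := Ioo_subset_Ioo ha hb
  refine ⟨fun y hy => (hf.1 y (hs hy)).trans hnm, fun y hy z hz => ?_, fun y z k hy hz hyk hzk => ?_⟩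
  · exact (hf.2.1 y (hs hy) z (hs hz)).trans (by gcongr)
  · exact (hf.2.2 y z k (hs hy) (hs hz) (hs hyk) (hs hzk)).trans (by gcongr)

theorem C11On.abs_deriv_le {f : ℝ → ℝ} {n a b : ℝ} (hf : C11On f n a b) (hd : Differentiable ℝ f)
    {x : ℝ} (hx : x ∈ Ioo a b) : |deriv f x| ≤ n := by
  have hn : 0 ≤ n := (abs_nonneg _).trans (hf.1 x hx)
  have h := (hd x).hasDerivAt
  refine h.le_of_lip' hn ?_
  filter_upwards [Ioo_mem_nhds hx.1 hx.2] with y hy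
  exact hf.2.1 y hy x hx

theorem C11On.deriv_lipschitz {f : ℝ → ℝ} {n a b : ℝ} (hf : C11On f n a b)
    (hd : Differentiable ℝ f) {x y : ℝ} (hx : x ∈ Ioo a b) (hy : y ∈ Ioo a b) :
    |deriv f x - deriv f y| ≤ n * |x - y| := by
  have hn : 0 ≤ n := (abs_nonneg _).trans (hf.1 x hx)
  have h1 : HasDerivAt (fun k => f (x + k) - f (y + k)) (deriv f x - deriv f y) 0 := by
    have e1 : HasDerivAt (fun k => f (x + k)) (deriv f x) 0 := by
      have := (hd (x + 0)).hasDerivAt.comp_const_add x 0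
      simpa using this
    have e2 : HasDerivAt (fun k => f (y + k)) (deriv f y) 0 := by
      have := (hd (y + 0)).hasDerivAt.comp_const_add y 0
      simpa using this
    exact e1.sub e2
  refine h1.le_of_lip' (C := n * |x - y|) (by positivity) ?_
  have t1 : Tendsto (fun k : ℝ => x + k) (𝓝 0) (𝓝 x) := by
    have : Continuous (fun k : ℝ => x + k) := by fun_prop
    simpa using this.tendsto 0
  have t2 : Tendsto (fun k : ℝ => y + k) (𝓝 0) (𝓝 y) := by
    have : Continuous (fun k : ℝ => y + k) := by fun_prop
    simpa using this.tendsto 0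
  filter_upwards [t1 (Ioo_mem_nhds hx.1 hx.2), t2 (Ioo_mem_nhds hy.1 hy.2)] with k hk1 hk2
  have := hf.2.2 x y k hx hy hk1 hk2
  simp only [add_zero, sub_zero, Real.norm_eq_abs]
  calc |f (x + k) - f (y + k) - (f x - f y)| = |f (x + k) - f x - (f (y + k) - f y)| := by
        congr 1; ring
    _ ≤ _ := this
    _ = _ := by ring

theorem C11On.of_deriv {f : ℝ → ℝ} {n a b : ℝ} (hd : Differentiable ℝ f)
    (h0 : ∀ y ∈ Ioo a b, |f y| ≤ n) (h1 : ∀ y ∈ Ioo a b, |deriv f y| ≤ n)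
    (h2 : ∀ y ∈ Ioo a b, ∀ z ∈ Ioo a b, |deriv f y - deriv f z| ≤ n * |y - z|) :
    C11On f n a b := by
  refine ⟨h0, fun y hy z hz => ?_, fun y z k hy hz hyk hzk => ?_⟩
  · exact (convex_Ioo a b).norm_image_sub_le_of_norm_deriv_le (fun x _ => hd x) h1 hz hy
  · have hn : 0 ≤ n := (abs_nonneg _).trans (h0 y hy)
    have key := (convex_uIcc z y).norm_image_sub_le_of_norm_deriv_le
      (f := fun u => f (u + k) - f u) (C := n * |k|)
      (fun x _ => by
        have : Differentiable ℝ (fun u => f (u + k) - f u) := by fun_prop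
        exact this x)
      (fun x hx => by
        have hx1 : x ∈ Ioo a b := by
          rcases le_total z y with h | h
          · rw [uIcc_of_le h] at hx; exact ⟨hz.1.trans_le hx.1, hx.2.trans_lt hy.2⟩
          · rw [uIcc_of_ge h] at hx; exact ⟨hy.1.trans_le hx.1, hx.2.trans_lt hz.2⟩
        have hx2 : x + k ∈ Ioo a b := by
          rcases le_total z y with h | h
          · rw [uIcc_of_le h] at hx; exact ⟨by linarith [hx.1, hzk.1], by linarith [hx.2, hyk.2]⟩
          · rw [uIcc_of_ge h] at hx; exact ⟨by linarith [hx.1, hyk.1], by linarith [hx.2, hzk.2]⟩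
        have e : deriv (fun u => f (u + k) - f u) x = deriv f (x + k) - deriv f x := by
          rw [deriv_fun_sub (by fun_prop) (by fun_prop), deriv_comp_add_const]
        rw [e]
        have := h2 (x + k) hx2 x hx1
        simpa using this)
      left_mem_uIcc right_mem_uIcc
    simp only [Real.norm_eq_abs] at key
    linarith [mul_assoc n |k| |y - z|]

theorem C11On.exists_of_contDiff {f : ℝ → ℝ} (hf : ContDiff ℝ 2 f) (a b : ℝ) :
    ∃ n, C11On f n a b := by
  have hd : Differentiable ℝ f := hf.differentiable (by norm_num)
  have hf1 : ContDiff ℝ 1 (deriv f) := by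
    have : ContDiff ℝ (1 + 1) f := by simpa [one_add_one_eq_two] using hf
    exact (contDiff_succ_iff_deriv.1 this).2.2
  have hd1 : Differentiable ℝ (deriv f) := hf1.differentiable (by norm_num)
  obtain ⟨A, hA⟩ := isCompact_Icc.exists_bound_of_continuousOn (s := Icc a b)
    hd.continuous.continuousOn
  obtain ⟨B, hB⟩ := isCompact_Icc.exists_bound_of_continuousOn (s := Icc a b)
    hd1.continuous.continuousOn
  obtain ⟨C, hC⟩ := isCompact_Icc.exists_bound_of_continuousOn (s := Icc a b)
    (hf1.continuous_deriv (le_refl _)).continuousOn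
  refine ⟨max A (max B C), C11On.of_deriv hd (fun y hy => ?_) (fun y hy => ?_) fun y hy z hz => ?_⟩
  · exact (hA y (Ioo_subset_Icc_self hy)).trans (le_max_left _ _)
  · exact (hB y (Ioo_subset_Icc_self hy)).trans ((le_max_left _ _).trans (le_max_right _ _))
  · exact (convex_Ioo a b).norm_image_sub_le_of_norm_deriv_le (fun x _ => hd1 x)
      (fun x hx => (hC x (Ioo_subset_Icc_self hx)).trans
        ((le_max_right _ _).trans (le_max_right _ _))) hz hy

theorem C11On.neg_comp_neg {f : ℝ → ℝ} {n a b : ℝ} (hf : C11On f n a b) :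
    C11On (fun x => -f (-x)) n (-b) (-a) := by
  have hm : ∀ y ∈ Ioo (-b) (-a), -y ∈ Ioo a b := fun y hy => ⟨by linarith [hy.2], by linarith [hy.1]⟩
  refine ⟨fun y hy => ?_, fun y hy z hz => ?_, fun y z k hy hz hyk hzk => ?_⟩
  · simpa using hf.1 _ (hm y hy)
  · have := hf.2.1 _ (hm z hz) _ (hm y hy)
    simpa [neg_add_eq_sub, abs_sub_comm, sub_eq_add_neg, add_comm] using this
  · have := hf.2.2 (-y) (-z) (-k) (hm y hy) (hm z hz) (by simpa [add_comm] using hm _ hyk)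
      (by simpa [add_comm] using hm _ hzk)
    rw [abs_neg, show -y - -z = -(y - z) by ring, abs_neg] at this
    rw [← abs_neg]
    convert this using 2
    simp only [neg_add]
    ring

theorem C11On.comp_neg {f : ℝ → ℝ} {n a b : ℝ} (hf : C11On f n a b) :
    C11On (fun x => f (-x)) n (-b) (-a) := by
  have h := hf.neg_comp_neg
  refine ⟨fun y hy => by simpa using h.1 y hy, fun y hy z hz => ?_, fun y z k hy hz hyk hzk => ?_⟩
  · have := h.2.1 y hy z hz
    rw [← abs_neg] at this
    convert this using 2
    ring
  · have := h.2.2 y z k hy hz hyk hzk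
    rw [← abs_neg] at this
    convert this using 2
    ring

/-- `w` solves the inviscid Burgers equation pointwise on `ℝ × [a, b]`, without any joint regularity:
it is only `C²` in space at every time and differentiable in time at every point. -/
structure IsSepBurgers (w : ℝ → ℝ → ℝ) (a b : ℝ) : Prop where
  contDiff : ∀ t ∈ Icc a b, ContDiff ℝ 2 (fun x => w x t)
  hasDeriv : ∀ x, ∀ t ∈ Icc a b, HasDerivWithinAt (fun s => w x s)
    (w x t * deriv (fun x' => w x' t) x) (Icc a b) t

theorem IsSepBurgers.differentiable {w : ℝ → ℝ → ℝ} {a b : ℝ} (hw : IsSepBurgers w a b) {t : ℝ}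
    (ht : t ∈ Icc a b) : Differentiable ℝ (fun x => w x t) :=
  (hw.contDiff t ht).differentiable (by norm_num)

theorem IsSepBurgers.continuousOn {w : ℝ → ℝ → ℝ} {a b : ℝ} (hw : IsSepBurgers w a b) (x : ℝ) :
    ContinuousOn (fun s => w x s) (Icc a b) :=
  fun t ht => (hw.hasDeriv x t ht).continuousWithinAt

theorem IsSepBurgers.neg_comp_neg {w : ℝ → ℝ → ℝ} {a b : ℝ} (hw : IsSepBurgers w a b) :
    IsSepBurgers (fun x t => -w (-x) t) a b := by
  refine ⟨fun t ht => ?_, fun x t ht => ?_⟩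
  · exact ((hw.contDiff t ht).comp contDiff_neg).neg
  · have := (hw.hasDeriv (-x) t ht).neg
    refine this.congr_deriv ?_
    have e : deriv (fun x' => -w (-x') t) x = deriv (fun x' => w x' t) (-x) := by
      rw [deriv.fun_neg, deriv_comp_neg (fun x' => w x' t)]; simp
    rw [e]; ring

theorem IsSepBurgers.comp_neg_neg {w : ℝ → ℝ → ℝ} {a b : ℝ} (hw : IsSepBurgers w a b) :
    IsSepBurgers (fun x t => w (-x) (-t)) (-b) (-a) := by
  have hm : ∀ t ∈ Icc (-b) (-a), -t ∈ Icc a b := fun t ht => ⟨by linarith [ht.2], by linarith [ht.1]⟩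
  refine ⟨fun t ht => ?_, fun x t ht => ?_⟩
  · exact (hw.contDiff _ (hm t ht)).comp contDiff_neg
  · have h1 : HasDerivWithinAt (fun s : ℝ => -s) (-1) (Icc (-b) (-a)) t :=
      (hasDerivAt_neg t).hasDerivWithinAt
    have := (hw.hasDeriv (-x) (-t) (hm t ht)).scomp t h1 hm
    refine this.congr_deriv ?_
    have e : deriv (fun x' => w (-x') (-t)) x = - deriv (fun x' => w x' (-t)) (-x) := by
      rw [deriv_comp_neg (fun x' => w x' (-t))]
    rw [e]; simp

/-- Near `(x, t)` the spatial slices of `w` are uniformly controlled in `C^{1,1}`. -/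
def GoodAt (w : ℝ → ℝ → ℝ) (a b x t : ℝ) : Prop :=
  ∃ r > 0, ∃ n, ∀ s ∈ Icc a b, |s - t| < r → C11On (fun y => w y s) n (x - r) (x + r)

theorem GoodAt.neg_comp_neg {w : ℝ → ℝ → ℝ} {a b x t : ℝ} (h : GoodAt w a b x t) :
    GoodAt (fun x t => -w (-x) t) a b (-x) t := by
  obtain ⟨r, hr, n, hn⟩ := h
  refine ⟨r, hr, n, fun s hs hst => ?_⟩
  have := (hn s hs hst).neg_comp_neg
  exact this.mono le_rfl (by linarith) (by linarith)

theorem GoodAt.comp_neg_neg {w : ℝ → ℝ → ℝ} {a b x t : ℝ} (h : GoodAt w a b x t) :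
    GoodAt (fun x t => w (-x) (-t)) (-b) (-a) (-x) (-t) := by
  obtain ⟨r, hr, n, hn⟩ := h
  refine ⟨r, hr, n, fun s hs hst => ?_⟩
  have := (hn (-s) ⟨by linarith [hs.2], by linarith [hs.1]⟩
    (by rw [← abs_neg]; convert hst using 2; ring)).comp_neg
  exact this.mono le_rfl (by linarith) (by linarith)

theorem C11On.abs_sub_sub_le {f : ℝ → ℝ} {n a b : ℝ} (hf : C11On f n a b)
    (hd : Differentiable ℝ f) {x y : ℝ} (hx : x ∈ Ioo a b) (hy : y ∈ Ioo a b) :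
    |f y - f x - (y - x) * deriv f x| ≤ n * |y - x| ^ 2 := by
  have hn : 0 ≤ n := (abs_nonneg _).trans (hf.1 x hx)
  have key := (convex_uIcc x y).norm_image_sub_le_of_norm_deriv_le
      (f := fun u => f u - u * deriv f x) (C := n * |y - x|)
      (fun u _ => by
        have : Differentiable ℝ (fun u => f u - u * deriv f x) := by fun_prop
        exact this u)
      (fun u hu => by
        have hu1 : u ∈ Ioo a b := by
          rcases le_total x y with h | h
          · rw [uIcc_of_le h] at hu; exact ⟨hx.1.trans_le hu.1, hu.2.trans_lt hy.2⟩
          · rw [uIcc_of_ge h] at hu; exact ⟨hy.1.trans_le hu.1, hu.2.trans_lt hx.2⟩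
        have e : deriv (fun u => f u - u * deriv f x) u = deriv f u - deriv f x := by
          rw [deriv_fun_sub (by fun_prop) (by fun_prop)]
          simp
        rw [e]
        refine (hf.deriv_lipschitz hd hu1 hx).trans ?_
        exact mul_le_mul_of_nonneg_left (abs_sub_left_of_mem_uIcc hu) hn)
      left_mem_uIcc right_mem_uIcc
  simp only [Real.norm_eq_abs] at key
  calc |f y - f x - (y - x) * deriv f x| = |f y - y * deriv f x - (f x - x * deriv f x)| := by
        congr 1; ring
    _ ≤ _ := key
    _ = _ := by ring

theorem IsSepBurgers.continuousWithinAt_deriv {w : ℝ → ℝ → ℝ} {a b x t : ℝ}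
    (hw : IsSepBurgers w a b) (ht : t ∈ Icc a b) (hg : GoodAt w a b x t) :
    ContinuousWithinAt (fun s => deriv (fun y => w y s) x) (Icc a b) t := by
  obtain ⟨r, hr, n, hn⟩ := hg
  have hx : x ∈ Ioo (x - r) (x + r) := ⟨by linarith, by linarith⟩
  have hn0 : 0 ≤ n := (abs_nonneg _).trans ((hn t ht (by simpa using hr)).1 x hx)
  rw [Metric.continuousWithinAt_iff']
  intro e he
  obtain ⟨k, hk0, hkr, hke⟩ : ∃ k > 0, k < r ∧ 4 * (n * k) < e := by
    refine ⟨min (r / 2) (e / (8 * (n + 1))), by positivity, ?_, ?_⟩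
    · exact (min_le_left _ _).trans_lt (by linarith)
    · have h1 : min (r / 2) (e / (8 * (n + 1))) ≤ e / (8 * (n + 1)) := min_le_right _ _
      have h2 : n * min (r / 2) (e / (8 * (n + 1))) ≤ (n + 1) * (e / (8 * (n + 1))) := by gcongr; linarith
      have h3 : (n + 1) * (e / (8 * (n + 1))) = e / 8 := by field_simp
      linarith
  have hxk : x + k ∈ Ioo (x - r) (x + r) := ⟨by linarith, by linarith⟩
  have c1 := (hw.continuousOn x t ht).sub (hw.continuousOn (x + k) t ht)
  have e1 := (Metric.continuousWithinAt_iff'.1 c1) (k * e / 2) (by positivity)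
  filter_upwards [e1, self_mem_nhdsWithin, mem_nhdsWithin_of_mem_nhds (Metric.ball_mem_nhds t hr)]
    with s hs1 hs2 hs3
  rw [Real.dist_eq] at hs1 ⊢
  rw [Metric.mem_ball, Real.dist_eq] at hs3
  have q1 := (hn s hs2 hs3).abs_sub_sub_le (hw.differentiable hs2) hx hxk
  have q2 := (hn t ht (by simpa using hr)).abs_sub_sub_le (hw.differentiable ht) hx hxk
  simp only [add_sub_cancel_left, abs_of_pos hk0] at q1 q2
  set D1 := deriv (fun y => w y s) x
  set D2 := deriv (fun y => w y t) x
  have h5 : |k * (D1 - D2)| < k * e := by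
    simp only [Pi.sub_apply] at hs1
    have h4 : 4 * (n * k ^ 2) < k * e := by nlinarith
    rw [abs_lt] at hs1 ⊢
    rw [abs_le] at q1 q2
    constructor <;> linarith [hs1.1, hs1.2, q1.1, q1.2, q2.1, q2.2]
  rw [abs_mul, abs_of_pos hk0] at h5
  exact lt_of_mul_lt_mul_left h5 hk0.le

theorem IsSepBurgers.hasDerivWithinAt_line {w : ℝ → ℝ → ℝ} {a b x t : ℝ}
    (hw : IsSepBurgers w a b) (ht : t ∈ Icc a b) (hg : GoodAt w a b x t) (c : ℝ) :
    HasDerivWithinAt (fun s => w (x - c * (s - t)) s)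
      ((w x t - c) * deriv (fun y => w y t) x) (Icc a b) t := by
  have hc := hw.continuousWithinAt_deriv ht hg
  obtain ⟨r, hr, n, hn⟩ := hg
  have hx : x ∈ Ioo (x - r) (x + r) := ⟨by linarith, by linarith⟩
  have hn0 : 0 ≤ n := (abs_nonneg _).trans ((hn t ht (by simpa using hr)).1 x hx)
  have hR : HasDerivWithinAt (fun s => w (x - c * (s - t)) s - w x s)
      (-c * deriv (fun y => w y t) x) (Icc a b) t := by
    rw [hasDerivWithinAt_iff_isLittleO, Asymptotics.isLittleO_iff]
    intro e he
    have e1 := (Metric.continuousWithinAt_iff'.1 hc) (e / (2 * (|c| + 1))) (by positivity)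
    have hρ : 0 < min r (min (r / (|c| + 1)) (e / (2 * (n * c ^ 2 + 1)))) := by positivity
    filter_upwards [e1, self_mem_nhdsWithin,
      mem_nhdsWithin_of_mem_nhds (Metric.ball_mem_nhds t hρ)] with s hs1 hs2 hs3
    rw [Metric.mem_ball, Real.dist_eq, lt_min_iff, lt_min_iff] at hs3
    obtain ⟨h1, h2, h3⟩ := hs3
    have hcs : |c * (s - t)| < r := by
      rw [lt_div_iff₀ (by positivity)] at h2
      rw [abs_mul]; nlinarith [abs_nonneg (s - t), abs_nonneg c]
    have hy : x - c * (s - t) ∈ Ioo (x - r) (x + r) := by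
      rw [abs_lt] at hcs; exact ⟨by linarith [hcs.2], by linarith [hcs.1]⟩
    have q := (hn s hs2 h1).abs_sub_sub_le (hw.differentiable hs2) hx hy
    rw [Real.dist_eq] at hs1
    set D1 := deriv (fun y => w y s) x
    set D2 := deriv (fun y => w y t) x
    simp only [sub_self, mul_zero, sub_zero, smul_eq_mul, Real.norm_eq_abs]
    have b1 : n * |x - c * (s - t) - x| ^ 2 ≤ e / 2 * |s - t| := by
      rw [show x - c * (s - t) - x = -(c * (s - t)) by ring, abs_neg, abs_mul, mul_pow, sq_abs]
      rw [lt_div_iff₀ (by positivity)] at h3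
      have : |s - t| * (n * c ^ 2) ≤ e / 2 := by
        nlinarith [abs_nonneg (s - t), mul_nonneg hn0 (sq_nonneg c)]
      calc n * (c ^ 2 * |s - t| ^ 2) = (|s - t| * (n * c ^ 2)) * |s - t| := by ring
        _ ≤ _ := by gcongr
    have b2 : |c * (s - t) * (D1 - D2)| ≤ e / 2 * |s - t| := by
      rw [abs_mul, abs_mul]
      rw [lt_div_iff₀ (by positivity)] at hs1
      have : |c| * |D1 - D2| ≤ e / 2 := by nlinarith [abs_nonneg c, abs_nonneg (D1 - D2)]
      calc |c| * |s - t| * |D1 - D2| = (|c| * |D1 - D2|) * |s - t| := by ring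
        _ ≤ _ := by gcongr
    have e3 : w (x - c * (s - t)) s - w x s - (s - t) * (-c * D2) =
        (w (x - c * (s - t)) s - w x s - (x - c * (s - t) - x) * D1) - c * (s - t) * (D1 - D2) := by
      ring
    rw [e3]
    calc _ ≤ _ + _ := abs_sub _ _
      _ ≤ e / 2 * |s - t| + e / 2 * |s - t| := add_le_add (q.trans b1) b2
      _ = _ := by ring
  have := (hw.hasDeriv x t ht).add hR
  refine (this.congr_deriv (by ring)).congr_of_eventuallyEq ?_ (by simp)
  exact Eventually.of_forall fun s => by simp

theorem eq_zero_of_hasDerivWithinAt_le {g g' : ℝ → ℝ} {a b K s t : ℝ}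
    (hst : uIcc t s ⊆ Icc a b) (hg : ∀ u ∈ uIcc t s, HasDerivWithinAt g (g' u) (Icc a b) u)
    (hK : ∀ u ∈ uIcc t s, |g' u| ≤ K * |g u|) (h0 : g t = 0) : g s = 0 := by
  rcases eq_or_ne t s with h | h
  · rw [← h, h0]
  rcases lt_or_gt_of_ne h with h | h
  · rw [uIcc_of_le h.le] at *
    refine eq_zero_of_abs_deriv_le_mul_abs_self_of_eq_zero_right (f := g) (f' := g') (K := K)
      (a := t) (b := s) (fun u hu => ((hg u hu).mono hst).continuousWithinAt) (fun u hu => ?_) h0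
      (fun u hu => hK u ⟨hu.1, hu.2.le⟩) s ⟨h.le, le_rfl⟩
    have h1 := (hg u ⟨hu.1, hu.2.le⟩).mono (s := Icc u s)
      (fun z hz => hst ⟨hu.1.trans hz.1, hz.2⟩)
    exact h1.mono_of_mem_nhdsWithin (Icc_mem_nhdsGE hu.2)
  · rw [uIcc_of_ge h.le] at *
    have := eq_zero_of_abs_deriv_le_mul_abs_self_of_eq_zero_right (f := fun u => g (-u))
      (f' := fun u => -g' (-u)) (K := K)
      (a := -t) (b := -s) ?_ (fun u hu => ?_) (by simpa using h0)
      (fun u hu => by simpa using hK (-u) ⟨by linarith [hu.2], by linarith [hu.1]⟩) (-s)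
      ⟨by linarith, le_rfl⟩
    · simpa using this
    · have hc : ContinuousOn g (Icc s t) :=
        fun u hu => ((hg u hu).mono hst).continuousWithinAt
      exact hc.comp continuous_neg.continuousOn
        (fun u hu => ⟨by linarith [hu.2], by linarith [hu.1]⟩)
    · have hu' : -u ∈ Icc s t := ⟨by linarith [hu.2], by linarith [hu.1]⟩
      have h1 := (hg (-u) hu').mono (s := Icc s (-u)) (fun z hz => hst ⟨hz.1, hz.2.trans hu'.2⟩)
      have h2 : HasDerivWithinAt (fun v : ℝ => -v) (-1) (Icc u (-s)) u :=
        (hasDerivAt_neg u).hasDerivWithinAt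
      have h3 := h1.scomp u h2 (fun v hv => ⟨by linarith [hv.2], by linarith [hv.1]⟩)
      have h4 : HasDerivWithinAt (fun u => g (-u)) (-g' (-u)) (Icc u (-s)) u :=
        h3.congr_deriv (by simp)
      exact h4.mono_of_mem_nhdsWithin (Icc_mem_nhdsGE hu.2)

/-- A solution is constant along its characteristic lines, inside regions of good points. -/
theorem IsSepBurgers.eq_on_line {w : ℝ → ℝ → ℝ} {a b l r x s t : ℝ}
    (hw : IsSepBurgers w a b) (hst : uIcc t s ⊆ Icc a b)
    (hg : ∀ y ∈ Icc l r, ∀ u ∈ uIcc t s, GoodAt w a b y u)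
    (hx : x ∈ Icc l r) (hy : x - w x t * (s - t) ∈ Icc l r) :
    w (x - w x t * (s - t)) s = w x t := by
  set c := w x t with hc
  have hline : ∀ u ∈ uIcc t s, x - c * (u - t) ∈ Icc l r := by
    intro u hu
    have h1 : u ∈ segment ℝ t s := by rwa [segment_eq_uIcc]
    obtain ⟨p, q, hp, hq, hpq, rfl⟩ := h1
    have := (convex_Icc l r) hx hy hp hq hpq
    convert this using 1
    simp only [smul_eq_mul]
    have : p = 1 - q := by linarith
    subst this; ring
  have hderiv : ∀ u ∈ uIcc t s, HasDerivWithinAt (fun u => w (x - c * (u - t)) u - c)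
      ((w (x - c * (u - t)) u - c) * deriv (fun y => w y u) (x - c * (u - t))) (Icc a b) u := by
    intro u hu
    have := (hw.hasDerivWithinAt_line (hst hu) (hg _ (hline u hu) u hu) c).sub_const c
    refine this.congr_of_eventuallyEq (Eventually.of_forall fun v => ?_) ?_
    · change w (x - c * (v - t)) v - c = w (x - c * (u - t) - c * (v - u)) v - c
      congr 2; ring
    · simp
  obtain ⟨K, hK⟩ : ∃ K, ∀ u ∈ uIcc t s, |deriv (fun y => w y u) (x - c * (u - t))| ≤ K := by
    refine isCompact_uIcc.induction_on (p := fun S => ∃ K, ∀ u ∈ S, u ∈ uIcc t s →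
      |deriv (fun y => w y u) (x - c * (u - t))| ≤ K) ⟨0, by simp⟩ ?_ ?_ ?_ |>.imp
      fun K h u hu => h u hu hu
    · rintro S T hS ⟨K, h⟩; exact ⟨K, fun u hu => h u (hS hu)⟩
    · rintro S T ⟨K, h⟩ ⟨K', h'⟩
      refine ⟨max K K', fun u hu hu' => ?_⟩
      rcases hu with hu | hu
      · exact (h u hu hu').trans (le_max_left _ _)
      · exact (h' u hu hu').trans (le_max_right _ _)
    · intro u hu
      obtain ⟨r', hr', n, hn⟩ := hg _ (hline u hu) u hu
      have t1 : Tendsto (fun v => x - c * (v - t)) (𝓝[uIcc t s] u) (𝓝 (x - c * (u - t))) := by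
        have : Continuous (fun v => x - c * (v - t)) := by fun_prop
        exact this.continuousWithinAt.tendsto
      refine ⟨_, inter_mem (t1 (Ioo_mem_nhds (sub_lt_self _ hr') (lt_add_of_pos_right _ hr')))
        (mem_nhdsWithin_of_mem_nhds (Metric.ball_mem_nhds u hr')), n, ?_⟩
      rintro v ⟨hv1, hv2⟩ hv3
      rw [Metric.mem_ball, Real.dist_eq] at hv2
      exact (hn v (hst hv3) hv2).abs_deriv_le (hw.differentiable (hst hv3)) hv1
  have := eq_zero_of_hasDerivWithinAt_le (K := K) hst hderiv (fun u hu => by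
    rw [abs_mul, mul_comm]; gcongr; exact hK u hu) (by simp [hc])
  simpa [sub_eq_zero] using this

theorem IsSepBurgers.le_of_line_hits {w : ℝ → ℝ → ℝ} {a b l r s₁ t c x₀ : ℝ}
    (hw : IsSepBurgers w a b) (hs₁ : a ≤ s₁) (ht : t ≤ b) (hst : s₁ < t)
    (hg : ∀ y ∈ Icc l r, ∀ u ∈ Ioc s₁ t, GoodAt w a b y u) (hx₀ : l < x₀) (hx₀r : x₀ ≤ r)
    (hl : x₀ - c * (t - s₁) ∈ Icc l r) (hc : w (x₀ - c * (t - s₁)) t = c) : c ≤ w x₀ s₁ := by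
  by_contra! hlt
  have hs₁m : s₁ ∈ Icc a b := ⟨hs₁, hst.le.trans ht⟩
  have hsub : ∀ u ∈ Ioc s₁ t, ∀ v ∈ Ioc s₁ t, uIcc u v ⊆ Ioc s₁ t := fun u hu v hv =>
    (convex_Ioc s₁ t).ordConnected.uIcc_subset hu hv
  have hsub' : Ioc s₁ t ⊆ Icc a b := fun u hu => ⟨hs₁.trans hu.1.le, hu.2.trans ht⟩
  have htm : t ∈ Ioc s₁ t := ⟨hst, le_rfl⟩
  have hpos : ∀ u ∈ Ioc s₁ t, x₀ - c * (u - s₁) ∈ Icc l r := by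
    intro u hu
    have h1 : u ∈ segment ℝ s₁ t := by
      rw [segment_eq_Icc hst.le]; exact ⟨hu.1.le, hu.2⟩
    obtain ⟨p, q, hp, hq, hpq, rfl⟩ := h1
    have := (convex_Icc l r) ⟨hx₀.le, hx₀r⟩ hl hp hq hpq
    convert this using 1
    simp only [smul_eq_mul]
    have : p = 1 - q := by linarith
    subst this; ring
  have hval : ∀ u ∈ Ioc s₁ t, w (x₀ - c * (u - s₁)) u = c := by
    intro u hu
    have e : x₀ - c * (u - s₁) =
        x₀ - c * (t - s₁) - w (x₀ - c * (t - s₁)) t * (u - t) := by rw [hc]; ring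
    have := hw.eq_on_line (l := l) (r := r) (x := x₀ - c * (t - s₁)) (s := u) (t := t)
      ((hsub t htm u hu).trans hsub') (fun y hy v hv => hg y hy v (hsub t htm u hu hv)) hl
      (by rw [← e]; exact hpos u hu)
    rw [← e, hc] at this
    exact this
  have hcont : ContinuousAt (fun x => w x s₁) x₀ := (hw.differentiable hs₁m).continuous.continuousAt
  have ev1 : ∀ᶠ x in 𝓝[<] x₀, w x s₁ < (w x₀ s₁ + c) / 2 :=
    (hcont.tendsto.mono_left nhdsWithin_le_nhds).eventually_lt_const (by linarith)
  have ev2 : ∀ᶠ x in 𝓝[<] x₀, max l (x₀ - (t - s₁) * ((c - w x₀ s₁) / 2)) < x := by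
    refine (tendsto_id.mono_left nhdsWithin_le_nhds).eventually_const_lt ?_
    refine max_lt hx₀ ?_
    have : 0 < (t - s₁) * ((c - w x₀ s₁) / 2) := by
      apply mul_pos <;> linarith
    linarith
  obtain ⟨x₁, h1, h2, h3⟩ := (ev1.and (ev2.and self_mem_nhdsWithin)).exists
  rw [max_lt_iff] at h2
  have h3' : x₁ < x₀ := h3
  have hx₁ : x₁ ∈ Icc l r := ⟨h2.1.le, h3'.le.trans hx₀r⟩
  have ct : Tendsto (fun s => w x₁ s) (𝓝[>] s₁) (𝓝 (w x₁ s₁)) := by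
    refine (hw.continuousOn x₁ s₁ hs₁m).tendsto.mono_left ?_
    refine nhdsWithin_le_of_mem ?_
    exact mem_of_superset (Ioc_mem_nhdsGT hst) hsub'
  have ct2 : Tendsto (fun s => ((x₀ - x₁) - w x₁ s * (s - s₁)) / (c - w x₁ s)) (𝓝[>] s₁)
      (𝓝 (((x₀ - x₁) - w x₁ s₁ * (s₁ - s₁)) / (c - w x₁ s₁))) := by
    have i1 : Tendsto (fun s : ℝ => s) (𝓝[>] s₁) (𝓝 s₁) := tendsto_id.mono_left nhdsWithin_le_nhds
    exact ((tendsto_const_nhds.sub (ct.mul (i1.sub_const s₁)))).div (tendsto_const_nhds.sub ct)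
      (by linarith)
  have hcw : (c - w x₀ s₁) / 2 < c - w x₁ s₁ := by linarith
  have hcw0 : 0 < c - w x₁ s₁ := by linarith
  have l1 : 0 < ((x₀ - x₁) - w x₁ s₁ * (s₁ - s₁)) / (c - w x₁ s₁) := by
    rw [sub_self, mul_zero, sub_zero]; exact div_pos (by linarith) hcw0
  have l2 : ((x₀ - x₁) - w x₁ s₁ * (s₁ - s₁)) / (c - w x₁ s₁) < t - s₁ := by
    rw [sub_self, mul_zero, sub_zero, div_lt_iff₀ hcw0]
    nlinarith [h2.2]
  obtain ⟨s, ⟨hs0, hs1, hs2⟩, hs3⟩ := (((ct2.eventually_const_lt l1).and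
    ((ct2.eventually_lt_const l2).and (ct.eventually_lt_const
      (show w x₁ s₁ < c by linarith)))).and (Ioc_mem_nhdsGT hst)).exists
  set φ := ((x₀ - x₁) - w x₁ s * (s - s₁)) / (c - w x₁ s) with hφ
  have hσ : s₁ + φ ∈ Ioc s₁ t := ⟨by linarith, by linarith⟩
  have e : x₁ - w x₁ s * (s₁ + φ - s) = x₀ - c * (s₁ + φ - s₁) := by
    have hne : c - w x₁ s ≠ 0 := by linarith
    have : φ * (c - w x₁ s) = (x₀ - x₁) - w x₁ s * (s - s₁) := by rw [hφ]; field_simp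
    linarith
  have key := hw.eq_on_line (l := l) (r := r) (x := x₁) (s := s₁ + φ) (t := s)
      ((hsub s hs3 _ hσ).trans hsub') (fun y hy v hv => hg y hy v (hsub s hs3 _ hσ hv)) hx₁
      (by rw [e]; exact hpos _ hσ)
  rw [e, hval _ hσ] at key
  linarith

theorem IsSepBurgers.ge_of_line_hits {w : ℝ → ℝ → ℝ} {a b l r s₁ t c x₀ : ℝ}
    (hw : IsSepBurgers w a b) (hs₁ : a ≤ s₁) (ht : t ≤ b) (hst : s₁ < t)
    (hg : ∀ y ∈ Icc l r, ∀ u ∈ Ioc s₁ t, GoodAt w a b y u) (hx₀ : l ≤ x₀) (hx₀r : x₀ < r)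
    (hl : x₀ - c * (t - s₁) ∈ Icc l r) (hc : w (x₀ - c * (t - s₁)) t = c) : w x₀ s₁ ≤ c := by
  have e : -x₀ - -c * (t - s₁) = -(x₀ - c * (t - s₁)) := by ring
  have := hw.neg_comp_neg.le_of_line_hits (l := -r) (r := -l) (x₀ := -x₀) (c := -c) hs₁ ht hst
    (fun y hy u hu => by
      simpa using (hg (-y) ⟨by linarith [hy.2], by linarith [hy.1]⟩ u hu).neg_comp_neg)
    (by linarith) (by linarith)
    (by rw [e]; exact ⟨by linarith [hl.2], by linarith [hl.1]⟩) (by rw [e, neg_neg, hc])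
  simp only [neg_neg] at this
  linarith

theorem IsSepBurgers.le_of_boundary_le {w : ℝ → ℝ → ℝ} {a b l r s₁ t K : ℝ}
    (hw : IsSepBurgers w a b) (hs₁ : a ≤ s₁) (ht : t ≤ b)
    (hg : ∀ y ∈ Icc l r, ∀ u ∈ Ioc s₁ t, GoodAt w a b y u) (hK : 0 ≤ K)
    (hr : ∀ u ∈ Icc s₁ t, w r u ≤ K) (h0 : ∀ y ∈ Icc l r, w y s₁ ≤ K) :
    ∀ y ∈ Icc l r, ∀ u ∈ Ioc s₁ t, w y u ≤ K := by
  intro x hx u hu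
  by_contra! hlt
  set c := w x u with hc
  have hc0 : 0 < c := by linarith
  have hcu : 0 < c * (u - s₁) := mul_pos hc0 (by linarith [hu.1])
  rcases le_or_gt (x + c * (u - s₁)) r with h | h
  · have := hw.le_of_line_hits (l := l) (r := r) (x₀ := x + c * (u - s₁)) (c := c) hs₁
      (hu.2.trans ht) hu.1 (fun y hy v hv => hg y hy v ⟨hv.1, hv.2.trans hu.2⟩)
      (by linarith [hx.1]) h (by simpa using hx) (by simp [hc])
    linarith [h0 (x + c * (u - s₁)) ⟨by linarith [hx.1], h⟩]
  · have hv : u - (r - x) / c ∈ Ioc s₁ u := by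
      have h1 : 0 ≤ (r - x) / c := div_nonneg (by linarith [hx.2]) hc0.le
      have h2 : (r - x) / c < u - s₁ := by rw [div_lt_iff₀ hc0]; linarith
      exact ⟨by linarith, by linarith⟩
    have e : x - w x u * (u - (r - x) / c - u) = r := by
      rw [← hc]; field_simp; ring
    have hsub : uIcc u (u - (r - x) / c) ⊆ Ioc s₁ t := by
      rw [uIcc_of_ge hv.2]; exact fun z hz => ⟨hv.1.trans_le hz.1, hz.2.trans hu.2⟩
    have := hw.eq_on_line (l := l) (r := r) (x := x) (s := u - (r - x) / c) (t := u)
      (hsub.trans fun z hz => ⟨hs₁.trans hz.1.le, hz.2.trans ht⟩)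
      (fun y hy v hv => hg y hy v (hsub hv)) hx
      (by rw [e]; exact ⟨hx.1.trans hx.2, le_rfl⟩)
    rw [e] at this
    linarith [hr (u - (r - x) / c) ⟨hv.1.le, hv.2.trans hu.2⟩]

theorem C11On.of_implicit {f W : ℝ → ℝ} {n τ l r l' r' : ℝ} (hf : Differentiable ℝ f)
    (hW : Differentiable ℝ W) (hτ : 0 ≤ τ) (hnτ : n * τ ≤ 1 / 2) (hn : 0 ≤ n)
    (hWn : C11On W n l' r')
    (h : ∀ x ∈ Ioo l r, x + τ * f x ∈ Ioo l' r' ∧ f x = W (x + τ * f x)) :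
    C11On f (8 * n) l r := by
  have hD : ∀ x ∈ Ioo l r, deriv f x = deriv W (x + τ * f x) * (1 + τ * deriv f x) := by
    intro x hx
    have h1 : HasDerivAt (fun x => W (x + τ * f x))
        (deriv W (x + τ * f x) * (1 + τ * deriv f x)) x := by
      refine HasDerivAt.comp x (hW _).hasDerivAt ?_
      exact (hasDerivAt_id x).add ((hf x).hasDerivAt.const_mul τ)
    rw [← h1.deriv]
    refine Filter.EventuallyEq.deriv_eq ?_
    filter_upwards [Ioo_mem_nhds hx.1 hx.2] with y hy using (h y hy).2
  have hW' : ∀ x ∈ Ioo l r, |deriv W (x + τ * f x)| ≤ n := fun x hx =>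
    hWn.abs_deriv_le hW (h x hx).1
  have hbd : ∀ x ∈ Ioo l r, |deriv f x| ≤ 2 * n := by
    intro x hx
    have e := hD x hx
    have h1 := hW' x hx
    have h2 : |deriv f x| ≤ n * (1 + τ * |deriv f x|) := by
      calc |deriv f x| = |deriv W (x + τ * f x)| * |1 + τ * deriv f x| := by rw [← abs_mul, ← e]
        _ ≤ n * (1 + τ * |deriv f x|) := by
          gcongr
          calc _ ≤ |(1 : ℝ)| + |τ * deriv f x| := abs_add_le _ _
            _ = _ := by rw [abs_mul, abs_of_nonneg hτ, abs_one]
    nlinarith [abs_nonneg (deriv f x)]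
  refine C11On.of_deriv hf (fun x hx => ?_) (fun x hx => ?_) fun x hx y hy => ?_
  · rw [(h x hx).2]
    linarith [hWn.1 _ (h x hx).1]
  · linarith [hbd x hx]
  · have hlip : |f x - f y| ≤ 2 * n * |x - y| :=
      (convex_Ioo l r).norm_image_sub_le_of_norm_deriv_le (fun x _ => hf x) hbd hy hx
    have hP : |(x + τ * f x) - (y + τ * f y)| ≤ 2 * |x - y| := by
      calc |(x + τ * f x) - (y + τ * f y)| = |(x - y) + τ * (f x - f y)| := by congr 1; ring
        _ ≤ |x - y| + |τ * (f x - f y)| := abs_add_le _ _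
        _ = |x - y| + τ * |f x - f y| := by rw [abs_mul, abs_of_nonneg hτ]
        _ ≤ |x - y| + τ * (2 * n * |x - y|) := by gcongr
        _ ≤ 2 * |x - y| := by nlinarith [abs_nonneg (x - y)]
    have hΔ := hWn.deriv_lipschitz hW (h x hx).1 (h y hy).1
    set A := deriv W (x + τ * f x)
    set B := deriv W (y + τ * f y)
    set D := deriv f x
    set D' := deriv f y
    have e1 : D = A * (1 + τ * D) := hD x hx
    have e2 : D' = B * (1 + τ * D') := hD y hy
    have hA : |A| ≤ n := hW' x hx
    have hD' : |D'| ≤ 2 * n := hbd y hy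
    have e3 : (D - D') * (1 - τ * A) = (A - B) * (1 + τ * D') := by linear_combination e1 - e2
    have hAB : |A - B| ≤ n * (2 * |x - y|) := hΔ.trans (by gcongr)
    have i1 : 1 / 2 ≤ 1 - τ * A := by
      have : τ * A ≤ τ * n := by gcongr; exact (le_abs_self A).trans hA
      linarith
    have i2 : |1 + τ * D'| ≤ 2 := by
      calc _ ≤ |(1 : ℝ)| + |τ * D'| := abs_add_le _ _
        _ = 1 + τ * |D'| := by rw [abs_mul, abs_of_nonneg hτ, abs_one]
        _ ≤ 1 + τ * (2 * n) := by gcongr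
        _ ≤ 2 := by linarith
    have i3 : |D - D'| * (1 / 2) ≤ n * (2 * |x - y|) * 2 := by
      calc |D - D'| * (1 / 2) ≤ |D - D'| * |1 - τ * A| := by
            gcongr; exact i1.trans (le_abs_self _)
        _ = |A - B| * |1 + τ * D'| := by rw [← abs_mul, e3, abs_mul]
        _ ≤ _ := by gcongr
    linarith

theorem IsSepBurgers.c11On_of_gap {w : ℝ → ℝ → ℝ} {a b l r l₀ r₀ s₁ t n K η : ℝ}
    (hw : IsSepBurgers w a b) (hs₁ : a ≤ s₁) (ht : t ≤ b) (hst : s₁ < t)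
    (hg : ∀ y ∈ Icc l r, ∀ u ∈ Ioc s₁ t, GoodAt w a b y u) (hn : 0 ≤ n) (hnK : n ≤ K)
    (hK : ∀ u ∈ Icc a b, |w l u| ≤ K ∧ |w r u| ≤ K) (hl : l₀ < l) (hr : r < r₀)
    (hW : C11On (fun x => w x s₁) n l₀ r₀) (hη : K * (t - s₁) < η) (hnt : n * (t - s₁) ≤ 1 / 2) :
    C11On (fun x => w x t) (8 * n) (l + η) (r - η) := by
  have htm : t ∈ Icc a b := ⟨hs₁.trans hst.le, ht⟩
  have hs₁m : s₁ ∈ Icc a b := ⟨hs₁, hst.le.trans ht⟩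
  have hK0 : 0 ≤ K := hn.trans hnK
  have hsl : ∀ y ∈ Icc l r, |w y s₁| ≤ K := fun y hy =>
    (hW.1 y ⟨by linarith [hy.1], by linarith [hy.2]⟩).trans hnK
  have hIm : ∀ u ∈ Icc s₁ t, u ∈ Icc a b := fun u hu => ⟨hs₁.trans hu.1, hu.2.trans ht⟩
  have hup := hw.le_of_boundary_le hs₁ ht hg hK0
    (fun u hu => (le_abs_self _).trans (hK u (hIm u hu)).2)
    (fun y hy => (le_abs_self _).trans (hsl y hy))
  have hdn := hw.neg_comp_neg.le_of_boundary_le (l := -r) (r := -l) (K := K) hs₁ ht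
    (fun y hy u hu => by
      simpa using (hg (-y) ⟨by linarith [hy.2], by linarith [hy.1]⟩ u hu).neg_comp_neg) hK0
    (fun u hu => by simpa using (neg_le_abs _).trans (hK u (hIm u hu)).1)
    (fun y hy => (neg_le_abs _).trans (hsl (-y) ⟨by linarith [hy.2], by linarith [hy.1]⟩))
  refine C11On.of_implicit (τ := t - s₁) (hw.differentiable htm) (hw.differentiable hs₁m)
    (by linarith) hnt hn hW fun x hx => ?_
  have hηp : 0 < η := lt_of_le_of_lt (mul_nonneg hK0 (by linarith)) hη
  have hxm : x ∈ Icc l r := ⟨by linarith [hx.1], by linarith [hx.2]⟩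
  have hc1 := hup x hxm t ⟨hst, le_rfl⟩
  have hc2 := hdn (-x) ⟨by linarith [hxm.2], by linarith [hxm.1]⟩ t ⟨hst, le_rfl⟩
  rw [neg_neg] at hc2
  have i1 : w x t * (t - s₁) ≤ K * (t - s₁) := by
    apply mul_le_mul_of_nonneg_right hc1; linarith
  have i2 : -w x t * (t - s₁) ≤ K * (t - s₁) := by
    apply mul_le_mul_of_nonneg_right hc2; linarith
  have hP1 : l < x + (t - s₁) * w x t := by linarith [hx.1]
  have hP2 : x + (t - s₁) * w x t < r := by linarith [hx.2]
  have e : x + (t - s₁) * w x t - w x t * (t - s₁) = x := by ring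
  refine ⟨⟨by linarith, by linarith⟩, le_antisymm ?_ ?_⟩
  · exact hw.le_of_line_hits hs₁ ht hst hg hP1 hP2.le (by rw [e]; exact hxm) (by rw [e])
  · exact hw.ge_of_line_hits hs₁ ht hst hg hP1.le hP2 (by rw [e]; exact hxm) (by rw [e])

theorem isOpen_setOf_goodAt (w : ℝ → ℝ → ℝ) (a b : ℝ) :
    IsOpen {p : ℝ × ℝ | GoodAt w a b p.1 p.2} := by
  rw [Metric.isOpen_iff]
  rintro ⟨x, t⟩ ⟨r, hr, n, hn⟩
  refine ⟨r / 2, by positivity, ?_⟩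
  rintro ⟨y, s⟩ hys
  rw [Metric.mem_ball, Prod.dist_eq, max_lt_iff, Real.dist_eq, Real.dist_eq] at hys
  obtain ⟨h1, h2⟩ := hys
  simp only at h1 h2
  rw [abs_lt] at h1 h2
  refine ⟨r / 2, by positivity, n, fun u hu hus => ?_⟩
  rw [abs_lt] at hus
  refine (hn u hu (abs_lt.2 ⟨by simp only at hus; linarith, by simp only at hus; linarith⟩)).mono
    le_rfl ?_ ?_ <;> simp only <;> linarith

theorem IsSepBurgers.exists_c11On_forward {w : ℝ → ℝ → ℝ} {a b l r l₀ r₀ q d n η : ℝ}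
    (hw : IsSepBurgers w a b) (hq : q ∈ Icc a b) (hd : 0 < d) (hl : l₀ < l) (hr : r < r₀)
    (hη : 0 < η) (hqn : C11On (fun x => w x q) n l₀ r₀)
    (hbad : ∀ t ∈ Icc a b, t ∈ Icc q (q + d) → ∀ x ∈ Icc l r, ¬GoodAt w a b x t →
      C11On (fun x => w x t) n l₀ r₀) :
    ∃ δ > 0, ∃ n', ∀ t ∈ Icc a b, t ∈ Icc q (q + δ) →
      C11On (fun x => w x t) n' (l + η) (r - η) := by
  wlog hn : 0 ≤ n generalizing n
  · exact this (n := |n|) (hqn.mono (le_abs_self _) le_rfl le_rfl)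
      (fun t ht htq x hx hg => (hbad t ht htq x hx hg).mono (le_abs_self _) le_rfl le_rfl)
      (abs_nonneg _)
  obtain ⟨K₁, hK₁⟩ := isCompact_Icc.exists_bound_of_continuousOn (hw.continuousOn l)
  obtain ⟨K₂, hK₂⟩ := isCompact_Icc.exists_bound_of_continuousOn (hw.continuousOn r)
  set K := max n (max K₁ K₂) with hKdef
  have hnK : n ≤ K := le_max_left _ _
  have hK : ∀ u ∈ Icc a b, |w l u| ≤ K ∧ |w r u| ≤ K := fun u hu =>
    ⟨(hK₁ u hu).trans ((le_max_left _ _).trans (le_max_right _ _)),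
      (hK₂ u hu).trans ((le_max_right _ _).trans (le_max_right _ _))⟩
  have hK0 : 0 ≤ K := hn.trans hnK
  set δ := min d (min (η / (2 * (K + 1))) (1 / (2 * (n + 1)))) with hδ
  have hδ0 : 0 < δ := by positivity
  refine ⟨δ, hδ0, 8 * n, fun t ht htq => ?_⟩
  have hδ1 : δ ≤ d := min_le_left _ _
  have hδ2 : δ ≤ η / (2 * (K + 1)) := (min_le_right _ _).trans (min_le_left _ _)
  have hδ3 : δ ≤ 1 / (2 * (n + 1)) := (min_le_right _ _).trans (min_le_right _ _)
  set T : Set ℝ := insert q (Prod.snd ''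
    ((Icc l r ×ˢ Icc q t) ∩ {p : ℝ × ℝ | GoodAt w a b p.1 p.2}ᶜ)) with hT
  have hTc : IsCompact T := by
    refine IsCompact.insert ?_ q
    refine IsCompact.image ?_ continuous_snd
    exact (isCompact_Icc.prod isCompact_Icc).inter_right (isOpen_setOf_goodAt w a b).isClosed_compl
  obtain ⟨s₁, hs₁T, hs₁⟩ := hTc.exists_isGreatest ⟨q, mem_insert _ _⟩
  have hqs : q ≤ s₁ := hs₁ (mem_insert _ _)
  have hs₁t : s₁ ≤ t ∧ C11On (fun x => w x s₁) n l₀ r₀ := by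
    rcases hs₁T with h | ⟨⟨x, u⟩, ⟨⟨hx, hu⟩, hg⟩, rfl⟩
    · rw [h]; exact ⟨htq.1, hqn⟩
    · simp only at hx hu hg ⊢
      refine ⟨hu.2, hbad u ⟨hq.1.trans hu.1, hu.2.trans ht.2⟩ ⟨hu.1, ?_⟩ x hx hg⟩
      linarith [hu.2, htq.2]
  obtain ⟨hs₁t, hW⟩ := hs₁t
  rcases hs₁t.eq_or_lt with h | h
  · rw [← h]
    exact hW.mono (by linarith) (by linarith) (by linarith)
  have hts : t - s₁ ≤ δ := by linarith [htq.2]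
  refine hw.c11On_of_gap (K := K) (hq.1.trans hqs) ht.2 h ?_ hn hnK hK hl hr hW ?_ ?_
  · intro y hy u hu
    by_contra hg
    have : u ∈ T := Or.inr ⟨(y, u), ⟨⟨hy, hqs.trans hu.1.le, hu.2⟩, hg⟩, rfl⟩
    exact absurd (hs₁ this) (not_le.2 hu.1)
  · have h1 : K * (t - s₁) ≤ K * (η / (2 * (K + 1))) :=
      mul_le_mul_of_nonneg_left (hts.trans hδ2) hK0
    have h2 : K * (η / (2 * (K + 1))) < η := by
      rw [mul_div_assoc', div_lt_iff₀ (by positivity)]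
      nlinarith
    linarith
  · have h1 : n * (t - s₁) ≤ n * (1 / (2 * (n + 1))) :=
      mul_le_mul_of_nonneg_left (hts.trans hδ3) hn
    have h2 : n * (1 / (2 * (n + 1))) ≤ 1 / 2 := by
      rw [mul_div_assoc', div_le_iff₀ (by positivity)]
      linarith
    linarith

theorem IsSepBurgers.exists_c11On_backward {w : ℝ → ℝ → ℝ} {a b l r l₀ r₀ q d n η : ℝ}
    (hw : IsSepBurgers w a b) (hq : q ∈ Icc a b) (hd : 0 < d) (hl : l₀ < l) (hr : r < r₀)
    (hη : 0 < η) (hqn : C11On (fun x => w x q) n l₀ r₀)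
    (hbad : ∀ t ∈ Icc a b, t ∈ Icc (q - d) q → ∀ x ∈ Icc l r, ¬GoodAt w a b x t →
      C11On (fun x => w x t) n l₀ r₀) :
    ∃ δ > 0, ∃ n', ∀ t ∈ Icc a b, t ∈ Icc (q - δ) q →
      C11On (fun x => w x t) n' (l + η) (r - η) := by
  obtain ⟨δ, hδ, n', hn'⟩ := hw.comp_neg_neg.exists_c11On_forward (q := -q) (d := d) (l := -r)
    (r := -l) (l₀ := -r₀) (r₀ := -l₀) (n := n) ⟨by linarith [hq.2], by linarith [hq.1]⟩ hd
    (by linarith) (by linarith) hη (by simpa using hqn.comp_neg)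
    (fun t ht htq x hx hg => by
      refine (hbad (-t) ⟨by linarith [ht.2], by linarith [ht.1]⟩
        ⟨by linarith [htq.2], by linarith [htq.1]⟩ (-x) ⟨by linarith [hx.2], by linarith [hx.1]⟩
        fun h => hg ?_).comp_neg
      simpa using h.comp_neg_neg)
  refine ⟨δ, hδ, n', fun t ht htq => ?_⟩
  have := (hn' (-t) ⟨by linarith [ht.2], by linarith [ht.1]⟩
    ⟨by linarith [htq.2], by linarith [htq.1]⟩).comp_neg
  simp only [neg_neg] at this
  exact this.mono le_rfl (by linarith) (by linarith)

theorem IsSepBurgers.isClosed_setOf_c11On {w : ℝ → ℝ → ℝ} {a b : ℝ}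
    (hw : IsSepBurgers w a b) {B : Set (ℝ × ℝ)} (hB : ∀ p ∈ B, p.2 ∈ Icc a b) (n r : ℝ) :
    IsClosed {p : B | C11On (fun x => w x p.1.2) n (p.1.1 - r) (p.1.1 + r)} := by
  have hc : ∀ y, Continuous fun p : B => w y p.1.2 := fun y =>
    (hw.continuousOn y).comp_continuous (by fun_prop) fun p => hB p.1 p.2
  have hI : ∀ y, IsOpen {p : B | y ∈ Ioo (p.1.1 - r) (p.1.1 + r)} := fun y => by
    simp only [mem_Ioo, ofPred_and]
    exact (isOpen_lt (by fun_prop) (by fun_prop)).inter (isOpen_lt (by fun_prop) (by fun_prop))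
  simp only [C11On, ofPred_and, ofPred_forall]
  refine IsClosed.inter ?_ (IsClosed.inter ?_ ?_)
  · refine isClosed_iInter fun y => isClosed_imp (hI y) (isClosed_le ?_ continuous_const)
    exact (hc y).abs
  · refine isClosed_iInter fun y => isClosed_imp (hI y) (by
      rw [ofPred_forall]
      refine isClosed_iInter fun z => isClosed_imp (hI z) (isClosed_le ?_ continuous_const)
      exact ((hc y).sub (hc z)).abs)
  · refine isClosed_iInter fun y => isClosed_iInter fun z => isClosed_iInter fun k =>
      isClosed_imp (hI y) (isClosed_imp (hI z) (isClosed_imp (hI _) (isClosed_imp (hI _)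
        (isClosed_le ?_ continuous_const))))
    exact (((hc _).sub (hc _)).sub ((hc _).sub (hc _))).abs

/-- Slicewise `C²` solutions of the inviscid Burgers equation are locally uniformly `C^{1,1}`. -/
theorem IsSepBurgers.goodAt {w : ℝ → ℝ → ℝ} {a b : ℝ} (hw : IsSepBurgers w a b) (x : ℝ) {t : ℝ}
    (ht : t ∈ Icc a b) : GoodAt w a b x t := by
  by_contra hxt
  set B : Set (ℝ × ℝ) := {p | p.2 ∈ Icc a b} ∩ {p : ℝ × ℝ | GoodAt w a b p.1 p.2}ᶜ with hBdef
  have hBc : IsClosed B := (isClosed_Icc.preimage continuous_snd).inter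
    (isOpen_setOf_goodAt w a b).isClosed_compl
  have : CompleteSpace B := hBc.completeSpace_coe
  have : Nonempty B := ⟨⟨(x, t), ht, hxt⟩⟩
  have hB : ∀ p ∈ B, p.2 ∈ Icc a b := fun p hp => hp.1
  obtain ⟨m, p, hp⟩ := nonempty_interior_of_iUnion_of_closed
    (f := fun m : ℕ => {p : B | C11On (fun x => w x p.1.2) m (p.1.1 - 1 / (m + 1 : ℝ))
      (p.1.1 + 1 / (m + 1 : ℝ))})
    (fun m => hw.isClosed_setOf_c11On hB m (1 / (m + 1 : ℝ))) (by
      refine eq_univ_of_forall fun p => mem_iUnion.2 ?_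
      obtain ⟨n, hn⟩ := C11On.exists_of_contDiff (hw.contDiff _ (hB p.1 p.2)) (p.1.1 - 1) (p.1.1 + 1)
      obtain ⟨m, hm⟩ := exists_nat_ge n
      have : 1 / ((m : ℝ) + 1) ≤ 1 := by
        rw [div_le_one (by positivity)]
        linarith [(Nat.cast_nonneg m : (0 : ℝ) ≤ m)]
      exact ⟨m, hn.mono hm (by linarith) (by linarith)⟩)
  rw [mem_interior_iff_mem_nhds, Metric.mem_nhds_iff] at hp
  obtain ⟨ρ, hρ, hball⟩ := hp
  obtain ⟨⟨x₀, q⟩, hq, hbad⟩ := p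
  set R : ℝ := 1 / (m + 1 : ℝ) with hR
  have hRpos : 0 < R := by positivity
  set σ := min (ρ / 2) (R / 4) with hσ
  have hσpos : 0 < σ := by positivity
  have hσ1 : σ ≤ ρ / 2 := min_le_left _ _
  have hσ2 : σ ≤ R / 4 := min_le_right _ _
  have key : ∀ t ∈ Icc a b, |t - q| ≤ σ → ∀ x ∈ Icc (x₀ - σ) (x₀ + σ), ¬GoodAt w a b x t →
      C11On (fun x => w x t) m (x₀ - 2 * σ) (x₀ + 2 * σ) := by
    intro t ht htq x hx hg
    have hmem : (⟨(x, t), ht, hg⟩ : B) ∈ Metric.ball (⟨(x₀, q), hq, hbad⟩ : B) ρ := by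
      rw [Metric.mem_ball, Subtype.dist_eq, Prod.dist_eq, max_lt_iff, Real.dist_eq, Real.dist_eq]
      refine ⟨?_, by simp only; linarith⟩
      simp only
      rw [abs_lt]
      constructor <;> linarith [hx.1, hx.2]
    have h := hball hmem
    simp only [mem_ofPred_eq] at h
    exact h.mono le_rfl (by linarith [hx.1, hx.2]) (by linarith [hx.1, hx.2])
  have hx₀ : x₀ ∈ Icc (x₀ - σ) (x₀ + σ) := ⟨by linarith, by linarith⟩
  have hqC := key q hq (by simpa using hσpos.le) x₀ hx₀ hbad
  obtain ⟨δ₁, hδ₁, n₁, h₁⟩ := hw.exists_c11On_forward (l := x₀ - σ) (r := x₀ + σ) (η := σ / 2) hq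
    hσpos (by linarith) (by linarith) (by positivity) hqC (fun t ht htq x hx hg =>
      key t ht (abs_le.2 ⟨by linarith [htq.1], by linarith [htq.2]⟩) x hx hg)
  obtain ⟨δ₂, hδ₂, n₂, h₂⟩ := hw.exists_c11On_backward (l := x₀ - σ) (r := x₀ + σ) (η := σ / 2) hq
    hσpos (by linarith) (by linarith) (by positivity) hqC (fun t ht htq x hx hg =>
      key t ht (abs_le.2 ⟨by linarith [htq.1], by linarith [htq.2]⟩) x hx hg)
  refine hbad ⟨min (min δ₁ δ₂) (σ / 2), by positivity, max n₁ n₂, fun s hs hsq => ?_⟩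
  have e1 : min (min δ₁ δ₂) (σ / 2) ≤ δ₁ := (min_le_left _ _).trans (min_le_left _ _)
  have e2 : min (min δ₁ δ₂) (σ / 2) ≤ δ₂ := (min_le_left _ _).trans (min_le_right _ _)
  have e3 : min (min δ₁ δ₂) (σ / 2) ≤ σ / 2 := min_le_right _ _
  simp only at hsq ⊢
  rw [abs_lt] at hsq
  rcases le_total q s with h | h
  · exact (h₁ s hs ⟨h, by linarith⟩).mono (le_max_left _ _) (by linarith) (by linarith)
  · exact (h₂ s hs ⟨by linarith, h⟩).mono (le_max_right _ _) (by linarith) (by linarith)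

/-- Solutions are transported along characteristics. -/
theorem IsSepBurgers.eq_initial {w : ℝ → ℝ → ℝ} {h : ℝ} (hw : IsSepBurgers w 0 h) (x : ℝ) {t : ℝ}
    (ht : t ∈ Icc 0 h) : w x t = w (x + t * w x t) 0 := by
  have h1 : uIcc t 0 ⊆ Icc 0 h := by
    rw [uIcc_of_ge ht.1]; exact Icc_subset_Icc_right ht.2
  have := hw.eq_on_line (l := min x (x - w x t * (0 - t))) (r := max x (x - w x t * (0 - t))) h1
    (fun y _ u hu => hw.goodAt y (h1 hu)) ⟨min_le_left _ _, le_max_left _ _⟩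
    ⟨min_le_right _ _, le_max_right _ _⟩
  rw [← this]
  congr 1
  rw [this]; ring

theorem contDiff_three_hasDerivAt {f : ℝ → ℝ} (hf : ContDiff ℝ 3 f) :
    (∀ x, HasDerivAt f (deriv f x) x) ∧ (∀ x, HasDerivAt (deriv f) (deriv (deriv f) x) x) ∧
      ∀ x, HasDerivAt (deriv (deriv f)) (deriv (deriv (deriv f)) x) x := by
  have h2 : ContDiff ℝ 2 (deriv f) := by
    have : ContDiff ℝ (2 + 1) f := by simpa [two_add_one_eq_three] using hf
    exact (contDiff_succ_iff_deriv.1 this).2.2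
  have h1 : ContDiff ℝ 1 (deriv (deriv f)) := by
    have : ContDiff ℝ (1 + 1) (deriv f) := by simpa [one_add_one_eq_two] using h2
    exact (contDiff_succ_iff_deriv.1 this).2.2
  exact ⟨fun x => (hf.differentiable (by norm_num) x).hasDerivAt,
    fun x => (h2.differentiable (by norm_num) x).hasDerivAt,
    fun x => (h1.differentiable (by norm_num) x).hasDerivAt⟩

/-- `f` is `C³` with derivatives up to order three bounded by `M`. -/
structure C3Bound (f : ℝ → ℝ) (M : ℝ) : Prop where
  contDiff : ContDiff ℝ 3 f
  b0 : ∀ x, |f x| ≤ M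
  b1 : ∀ x, |deriv f x| ≤ M
  b2 : ∀ x, |deriv (deriv f) x| ≤ M
  b3 : ∀ x, |deriv (deriv (deriv f)) x| ≤ M

theorem C3Bound.of_iteratedDeriv {f : ℝ → ℝ} {M : ℝ} (hf : ContDiff ℝ 3 f)
    (h : ∀ j ≤ 3, ∀ x, |iteratedDeriv j f x| ≤ M) : C3Bound f M where
  contDiff := hf
  b0 x := by simpa using h 0 (by norm_num) x
  b1 x := by simpa [iteratedDeriv_one] using h 1 (by norm_num) x
  b2 x := by simpa [iteratedDeriv_succ, iteratedDeriv_one] using h 2 (by norm_num) x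
  b3 x := by simpa [iteratedDeriv_succ, iteratedDeriv_one] using h 3 (by norm_num) x

theorem C3Bound.nonneg {f : ℝ → ℝ} {M : ℝ} (hf : C3Bound f M) : 0 ≤ M :=
  (abs_nonneg _).trans (hf.b0 0)

theorem abs_sub_le_of_hasDerivAt {f f' : ℝ → ℝ} {M : ℝ} (hf : ∀ x, HasDerivAt f (f' x) x)
    (hM : ∀ x, |f' x| ≤ M) (x y : ℝ) : |f x - f y| ≤ M * |x - y| :=
  convex_univ.norm_image_sub_le_of_norm_hasDerivWithin_le
    (fun x _ => (hf x).hasDerivWithinAt) (fun x _ => hM x) (mem_univ y) (mem_univ x)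

theorem C3Bound.of_implicit {f W : ℝ → ℝ} {N τ : ℝ} (hf : ContDiff ℝ 3 f) (hW : C3Bound W N)
    (hτ : 0 ≤ τ) (hNτ : N * τ ≤ 1 / 2) (h : ∀ x, f x = W (x + τ * f x)) :
    C3Bound f (64 * N) := by
  obtain ⟨f1, f2, f3⟩ := contDiff_three_hasDerivAt hf
  obtain ⟨W1, W2, W3⟩ := contDiff_three_hasDerivAt hW.contDiff
  have hN := hW.nonneg
  set p : ℝ → ℝ := fun x => x + τ * f x with hp
  have p1 : ∀ x, HasDerivAt p (1 + τ * deriv f x) x := fun x =>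
    (hasDerivAt_id x).add ((f1 x).const_mul τ)
  have p2 : ∀ x, HasDerivAt (fun x => 1 + τ * deriv f x) (τ * deriv (deriv f) x) x := fun x =>
    ((f2 x).const_mul τ).const_add 1
  have p3 : ∀ x, HasDerivAt (fun x => τ * deriv (deriv f) x)
      (τ * deriv (deriv (deriv f)) x) x := fun x => (f3 x).const_mul τ
  have e1 : ∀ x, deriv f x = deriv W (p x) * (1 + τ * deriv f x) := fun x => by
    have h1 := (W1 (p x)).comp x (p1 x)
    have h2 : f = W ∘ p := funext h
    rw [← h2] at h1
    exact h1.deriv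
  have e2 : ∀ x, deriv (deriv f) x = deriv (deriv W) (p x) * (1 + τ * deriv f x) ^ 2 +
      deriv W (p x) * (τ * deriv (deriv f) x) := fun x => by
    have h1 := ((W2 (p x)).comp x (p1 x)).mul (p2 x)
    have h2 : deriv f = fun x => (deriv W ∘ p) x * (1 + τ * deriv f x) := funext e1
    have h3 := (h1.congr_of_eventuallyEq (Eventually.of_forall fun y => congrFun h2 y)).deriv
    refine h3.trans ?_
    simp only [Function.comp_apply]; ring
  have e3 : ∀ x, deriv (deriv (deriv f)) x =
      deriv (deriv (deriv W)) (p x) * (1 + τ * deriv f x) ^ 3 +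
      3 * (deriv (deriv W) (p x) * (1 + τ * deriv f x) * (τ * deriv (deriv f) x)) +
      deriv W (p x) * (τ * deriv (deriv (deriv f)) x) := fun x => by
    have h1 := (((W3 (p x)).comp x (p1 x)).mul ((p2 x).pow 2)).add
      (((W2 (p x)).comp x (p1 x)).mul (p3 x))
    have h3 := (h1.congr_of_eventuallyEq (Eventually.of_forall fun y => e2 y)).deriv
    refine h3.trans ?_
    simp only [Function.comp_apply, Pi.pow_apply]; ring
  have aux : ∀ x z, |deriv W (p x) * (τ * z)| ≤ |z| / 2 := fun x z => by
    rw [abs_mul, abs_mul, abs_of_nonneg hτ]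
    nlinarith [mul_le_mul_of_nonneg_right (hW.b1 (p x)) (mul_nonneg hτ (abs_nonneg z)),
      mul_le_mul_of_nonneg_right hNτ (abs_nonneg z)]
  have b1 : ∀ x, |deriv f x| ≤ 2 * N := fun x => by
    have h1 := abs_add_le (deriv W (p x)) (deriv W (p x) * (τ * deriv f x))
    rw [show deriv W (p x) + deriv W (p x) * (τ * deriv f x) = deriv f x by
      conv_rhs => rw [e1 x]
      ring] at h1
    linarith [hW.b1 (p x), aux x (deriv f x)]
  have bp : ∀ x, |1 + τ * deriv f x| ≤ 2 := fun x => by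
    have h1 := abs_add_le 1 (τ * deriv f x)
    rw [abs_one, abs_mul, abs_of_nonneg hτ] at h1
    nlinarith [mul_le_mul_of_nonneg_left (b1 x) hτ]
  have b2 : ∀ x, |deriv (deriv f) x| ≤ 8 * N := fun x => by
    have h1 := abs_add_le (deriv (deriv W) (p x) * (1 + τ * deriv f x) ^ 2)
      (deriv W (p x) * (τ * deriv (deriv f) x))
    rw [← e2 x] at h1
    have h2 : |deriv (deriv W) (p x) * (1 + τ * deriv f x) ^ 2| ≤ N * 2 ^ 2 := by
      rw [abs_mul, abs_pow]
      exact mul_le_mul (hW.b2 _) (pow_le_pow_left₀ (abs_nonneg _) (bp x) 2) (by positivity) hN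
    linarith [aux x (deriv (deriv f) x)]
  have b3 : ∀ x, |deriv (deriv (deriv f)) x| ≤ 64 * N := fun x => by
    have h1 := abs_add_three (deriv (deriv (deriv W)) (p x) * (1 + τ * deriv f x) ^ 3)
      (3 * (deriv (deriv W) (p x) * (1 + τ * deriv f x) * (τ * deriv (deriv f) x)))
      (deriv W (p x) * (τ * deriv (deriv (deriv f)) x))
    rw [← e3 x] at h1
    have h2 : |deriv (deriv (deriv W)) (p x) * (1 + τ * deriv f x) ^ 3| ≤ N * 2 ^ 3 := by
      rw [abs_mul, abs_pow]
      exact mul_le_mul (hW.b3 _) (pow_le_pow_left₀ (abs_nonneg _) (bp x) 3) (by positivity) hN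
    have h3 : |3 * (deriv (deriv W) (p x) * (1 + τ * deriv f x) * (τ * deriv (deriv f) x))|
        ≤ 3 * (N * 2 * (τ * (8 * N))) := by
      rw [abs_mul, abs_mul, abs_mul, abs_mul, abs_of_nonneg hτ, abs_of_pos (by norm_num : (0:ℝ) < 3)]
      refine mul_le_mul_of_nonneg_left ?_ (by norm_num)
      exact mul_le_mul (mul_le_mul (hW.b2 _) (bp x) (abs_nonneg _) hN)
        (mul_le_mul_of_nonneg_left (b2 x) hτ) (by positivity) (by positivity)
    nlinarith [aux x (deriv (deriv (deriv f)) x), mul_le_mul_of_nonneg_left hNτ hN]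
  refine ⟨hf, fun x => ?_, fun x => (b1 x).trans (by linarith), fun x => (b2 x).trans (by linarith),
    b3⟩
  rw [h x]
  exact (hW.b0 _).trans (by linarith)

/-- A solution of the implicit equation `f = W (x + τ f)` inherits the period of `W`. -/
theorem periodic_of_implicit {f W : ℝ → ℝ} {N τ c : ℝ} (hW : C3Bound W N) (hτ : 0 ≤ τ)
    (hNτ : N * τ ≤ 1 / 2) (h : ∀ x, f x = W (x + τ * f x)) (hc : ∀ x, W (x + c) = W x) (x : ℝ) :
    f (x + c) = f x := by
  obtain ⟨W1, -, -⟩ := contDiff_three_hasDerivAt hW.contDiff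
  have h1 := abs_sub_le_of_hasDerivAt W1 hW.b1 (x + τ * f (x + c)) (x + τ * f x)
  have h2 : f (x + c) = W (x + τ * f (x + c)) := by
    rw [← hc]; conv_lhs => rw [h]
    congr 1; ring
  rw [← h2, ← h x, show x + τ * f (x + c) - (x + τ * f x) = τ * (f (x + c) - f x) by ring,
    abs_mul, abs_of_nonneg hτ] at h1
  have h3 : |f (x + c) - f x| ≤ 0 := by
    nlinarith [mul_le_mul_of_nonneg_right hNτ (abs_nonneg (f (x + c) - f x))]
  linarith [abs_eq_zero.1 (le_antisymm h3 (abs_nonneg _))]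

theorem IsSepBurgers.lipschitz_time {w : ℝ → ℝ → ℝ} {h N : ℝ} (hw : IsSepBurgers w 0 h)
    (hb : ∀ t ∈ Icc 0 h, C3Bound (fun x => w x t) N) {s t : ℝ} (hs : s ∈ Icc 0 h)
    (ht : t ∈ Icc 0 h) (x : ℝ) : |w x t - w x s| ≤ N ^ 2 * |t - s| := by
  refine (convex_Icc 0 h).norm_image_sub_le_of_norm_hasDerivWithin_le
    (fun u hu => hw.hasDeriv x u hu) (fun u hu => ?_) hs ht
  rw [Real.norm_eq_abs, abs_mul, sq]
  exact mul_le_mul ((hb u hu).b0 x) ((hb u hu).b1 x) (abs_nonneg _) (hb u hu).nonneg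

theorem abs_taylor_le {f f' : ℝ → ℝ} {M : ℝ} (hf : ∀ x, HasDerivAt f (f' x) x)
    (hM : ∀ x y, |f' x - f' y| ≤ M * |x - y|) (x s : ℝ) :
    |f (x + s) - f x - s * f' x| ≤ M * s ^ 2 := by
  have hM0 : 0 ≤ M := by simpa using (abs_nonneg _).trans (hM 1 0)
  have h1 : ∀ y ∈ uIcc x (x + s), HasDerivWithinAt (fun y => f y - y * f' x) (f' y - f' x)
      (uIcc x (x + s)) y := fun y _ => by
    have := (hf y).sub ((hasDerivAt_id y).mul_const (f' x))
    exact this.hasDerivWithinAt.congr_deriv (by simp)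
  have h2 := (convex_uIcc x (x + s)).norm_image_sub_le_of_norm_hasDerivWithin_le h1
    (C := M * |s|) (fun y hy => ?_) left_mem_uIcc right_mem_uIcc
  · simp only [Real.norm_eq_abs, add_sub_cancel_left] at h2
    rw [show f (x + s) - f x - s * f' x = f (x + s) - (x + s) * f' x - (f x - x * f' x) by ring,
      ← sq_abs s, sq, ← mul_assoc]
    exact h2
  · refine (hM y x).trans (mul_le_mul_of_nonneg_left ?_ hM0)
    have := abs_sub_left_of_mem_uIcc hy
    simpa using this

/-- Time continuity of the spatial derivative of a solution, by interpolation. -/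
theorem IsSepBurgers.abs_deriv_sub_le {w : ℝ → ℝ → ℝ} {h N : ℝ} (hw : IsSepBurgers w 0 h)
    (hb : ∀ t ∈ Icc 0 h, C3Bound (fun x => w x t) N) {s t : ℝ} (hs : s ∈ Icc 0 h)
    (ht : t ∈ Icc 0 h) (x : ℝ) :
    |deriv (fun y => w y t) x - deriv (fun y => w y s) x| ≤
      (2 * N ^ 2 + 2 * N) * Real.sqrt |t - s| := by
  rcases eq_or_ne t s with rfl | hne
  · simp
  have hpos : 0 < |t - s| := abs_pos.2 (sub_ne_zero.2 hne)
  set σ := Real.sqrt |t - s| with hσ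
  have hσpos : 0 < σ := Real.sqrt_pos.2 hpos
  have hσ2 : σ ^ 2 = |t - s| := Real.sq_sqrt hpos.le
  have key : ∀ u ∈ Icc 0 h, |w (x + σ) u - w x u - σ * deriv (fun y => w y u) x| ≤ N * σ ^ 2 := by
    intro u hu
    obtain ⟨h1, h2, -⟩ := contDiff_three_hasDerivAt (hb u hu).contDiff
    exact abs_taylor_le h1 (abs_sub_le_of_hasDerivAt h2 (hb u hu).b2) x σ
  have k1 := abs_le.1 (key t ht)
  have k2 := abs_le.1 (key s hs)
  have k3 := abs_le.1 (hw.lipschitz_time hb hs ht (x + σ))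
  have k4 := abs_le.1 (hw.lipschitz_time hb hs ht x)
  rw [← hσ2] at k3 k4
  set A := deriv (fun y => w y t) x
  set B := deriv (fun y => w y s) x
  have h5 : |σ * (A - B)| ≤ σ * ((2 * N ^ 2 + 2 * N) * σ) := by
    rw [abs_le]; constructor <;> nlinarith
  rw [abs_mul, abs_of_pos hσpos] at h5
  exact le_of_mul_le_mul_left h5 hσpos

section

theorem HasDerivWithinAt.nonneg_of_isMax {f : ℝ → ℝ} {f' t h : ℝ}
    (hf : HasDerivWithinAt f f' (Icc 0 h) t) (h0 : 0 < t) (ht : t ≤ h)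
    (hmax : ∀ s ∈ Icc 0 h, f s ≤ f t) : 0 ≤ f' := by
  have h1 : IsLocalMaxOn f (Icc 0 h) t := eventually_of_mem self_mem_nhdsWithin hmax
  have h2 : (0 : ℝ) - t ∈ posTangentConeAt (Icc 0 h) t :=
    sub_mem_posTangentConeAt_of_segment_subset ((convex_Icc 0 h).segment_subset ⟨h0.le, ht⟩
      ⟨le_rfl, h0.le.trans ht⟩)
  have h3 := h1.hasFDerivWithinAt_nonpos hf.hasFDerivWithinAt h2
  simp only [ContinuousLinearMap.toSpanSingleton_apply, smul_eq_mul] at h3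
  nlinarith

/-- `d` is a periodic solution of `∂ₜ d = a ∂ₓ d + b d + ∫ (d(x+y) - d(x)) dν(y) + g` on `[0, h]`
with vanishing initial data. -/
structure NonlocalSol (ν : Measure ℝ) (d dx a b g : ℝ → ℝ → ℝ) (per h : ℝ) : Prop where
  cont : ContinuousOn (fun p : ℝ × ℝ => d p.1 p.2) (univ ×ˢ Icc 0 h)
  periodic : ∀ t ∈ Icc 0 h, ∀ x, d (x + per) t = d x t
  init : ∀ x, d x 0 = 0
  hasDeriv_space : ∀ t ∈ Icc 0 h, ∀ x, HasDerivAt (fun y => d y t) (dx x t) x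
  hasDeriv_time : ∀ t ∈ Icc 0 h, ∀ x, HasDerivWithinAt (fun s => d x s)
    (a x t * dx x t + b x t * d x t + (∫ y, (d (x + y) t - d x t) ∂ν) + g x t) (Icc 0 h) t

variable {ν : Measure ℝ} {d dx a b g : ℝ → ℝ → ℝ} {per h K N G C : ℝ}

theorem NonlocalSol.neg (hd : NonlocalSol ν d dx a b g per h) :
    NonlocalSol ν (fun x t => -d x t) (fun x t => -dx x t) a b (fun x t => -g x t) per h where
  cont := hd.cont.neg
  periodic t ht x := by rw [hd.periodic t ht x]
  init x := by rw [hd.init x, neg_zero]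
  hasDeriv_space t ht x := (hd.hasDeriv_space t ht x).neg
  hasDeriv_time t ht x := by
    refine (hd.hasDeriv_time t ht x).neg.congr_deriv ?_
    have : ∫ y, (-d (x + y) t - -d x t) ∂ν = -∫ y, (d (x + y) t - d x t) ∂ν := by
      rw [← integral_neg]; congr 1; ext y; ring
    rw [this]; ring

theorem NonlocalSol.le (hd : NonlocalSol ν d dx a b g per h) (hper : 0 < per)
    (hb : ∀ t ∈ Icc 0 h, ∀ x, |b x t| ≤ K) (hg : ∀ t ∈ Icc 0 h, ∀ x, g x t ≤ G)
    {t : ℝ} (ht : t ∈ Icc 0 h) (x : ℝ) (hG : 0 ≤ G) : d x t ≤ Real.exp (K * t) * (G * t) := by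
  have hK : 0 ≤ K := (abs_nonneg _).trans (hb t ht x)
  have key : ∀ δ > 0, Real.exp (-K * t) * d x t - (G + δ) * t ≤ 0 := by
    intro δ hδ
    set Z : ℝ × ℝ → ℝ := fun p => Real.exp (-K * p.2) * d p.1 p.2 - (G + δ) * p.2 with hZ
    have hZc : ContinuousOn Z (Icc 0 per ×ˢ Icc 0 h) := by
      have := hd.cont.mono (prod_mono_left (subset_univ (Icc 0 per)))
      fun_prop
    obtain ⟨⟨x₀, t₀⟩, ⟨hx₀, ht₀⟩, hmax⟩ := (isCompact_Icc.prod isCompact_Icc).exists_isMaxOn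
      (⟨(0, 0), ⟨le_rfl, hper.le⟩, le_rfl, ht.1.trans ht.2⟩) hZc
    simp only at hx₀ ht₀
    have hmax' : ∀ y, ∀ s ∈ Icc 0 h, Z (y, s) ≤ Z (x₀, t₀) := by
      intro y s hs
      obtain ⟨z, hz, hzy⟩ := Function.Periodic.exists_mem_Ico₀ (f := fun y => d y s)
        (fun y => hd.periodic s hs y) hper y
      have h1 : Z (z, s) ≤ Z (x₀, t₀) := hmax ⟨⟨hz.1, hz.2.le⟩, hs⟩
      simp only [hZ] at h1 ⊢
      rwa [hzy]
    have hZt := hmax' x t ht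
    by_contra! hcon
    have hpos : 0 < Z (x₀, t₀) := hcon.trans_le hZt
    have ht₀pos : 0 < t₀ := by
      rcases ht₀.1.eq_or_lt with h | h
      · rw [← h] at hpos; simp [hZ, hd.init] at hpos
      · exact h
    have hdpos : 0 < d x₀ t₀ := by
      simp only [hZ] at hpos
      have : 0 < Real.exp (-K * t₀) * d x₀ t₀ := by nlinarith
      exact pos_of_mul_pos_right this (Real.exp_pos _).le
    have hdmax : ∀ y, d y t₀ ≤ d x₀ t₀ := by
      intro y
      have h1 := hmax' y t₀ ht₀
      simp only [hZ] at h1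
      exact le_of_mul_le_mul_left (by linarith) (Real.exp_pos (-K * t₀))
    have hdx0 : dx x₀ t₀ = 0 := IsLocalMax.hasDerivAt_eq_zero
      (Eventually.of_forall hdmax) (hd.hasDeriv_space t₀ ht₀ x₀)
    have hjump : ∫ y, (d (x₀ + y) t₀ - d x₀ t₀) ∂ν ≤ 0 :=
      integral_nonpos fun y => sub_nonpos.2 (hdmax _)
    have hderiv : HasDerivWithinAt (fun s => Z (x₀, s)) _ (Icc 0 h) t₀ :=
      ((((hasDerivAt_id t₀).const_mul (-K)).exp.hasDerivWithinAt).mul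
        (hd.hasDeriv_time t₀ ht₀ x₀)).sub ((hasDerivAt_id t₀).const_mul (G + δ)).hasDerivWithinAt
    have h0 := hderiv.nonneg_of_isMax ht₀pos ht₀.2 (fun s hs => hmax' x₀ s hs)
    simp only [hdx0, id, mul_one, mul_zero, zero_add] at h0
    set I := ∫ y, (d (x₀ + y) t₀ - d x₀ t₀) ∂ν
    have e1 : Real.exp (-K * t₀) ≤ 1 := Real.exp_le_one_iff.2 (by nlinarith)
    have e0 := Real.exp_pos (-K * t₀)
    have h2 : b x₀ t₀ * d x₀ t₀ ≤ K * d x₀ t₀ :=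
      mul_le_mul_of_nonneg_right ((le_abs_self _).trans (hb t₀ ht₀ x₀)) hdpos.le
    have h3 := hg t₀ ht₀ x₀
    have h4 : Real.exp (-K * t₀) * (b x₀ t₀ * d x₀ t₀ + I + g x₀ t₀) ≤
        Real.exp (-K * t₀) * (K * d x₀ t₀ + G) := mul_le_mul_of_nonneg_left (by linarith) e0.le
    have h5 : Real.exp (-K * t₀) * G ≤ G := mul_le_of_le_one_left hG e1
    nlinarith
  have h1 : Real.exp (-K * t) * d x t ≤ G * t := by
    refine le_of_forall_pos_le_add fun ε hε => ?_
    have h2 := key (ε / (t + 1)) (by have := ht.1; positivity)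
    have h3 : ε / (t + 1) * t ≤ ε := by
      rw [div_mul_eq_mul_div, div_le_iff₀ (by linarith [ht.1])]
      nlinarith
    nlinarith
  have h2 : d x t = Real.exp (K * t) * (Real.exp (-K * t) * d x t) := by
    rw [← mul_assoc, ← Real.exp_add]; simp
  rw [h2]
  exact mul_le_mul_of_nonneg_left h1 (Real.exp_pos _).le

theorem NonlocalSol.integrable [IsFiniteMeasure ν] (hd : NonlocalSol ν d dx a b g per h)
    (hper : 0 < per) {t : ℝ} (ht : t ∈ Icc 0 h) (x : ℝ) :
    Integrable (fun y => d (x + y) t - d x t) ν := by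
  have hc : Continuous fun y => d y t :=
    continuous_iff_continuousAt.2 fun y => (hd.hasDeriv_space t ht y).continuousAt
  have hp : Function.Periodic (fun y => d y t) per := hd.periodic t ht
  obtain ⟨M, hM⟩ := isCompact_Icc.exists_bound_of_continuousOn (s := Icc 0 per) hc.continuousOn
  refine Integrable.sub ?_ (integrable_const _)
  refine Integrable.of_bound (hc.comp (continuous_const.add continuous_id)).aestronglyMeasurable M
    (Eventually.of_forall fun y => ?_)
  obtain ⟨z, hz, hzy⟩ := hp.exists_mem_Ico₀ hper (x + y)
  rw [hzy]
  exact hM z ⟨hz.1, hz.2.le⟩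

set_option maxHeartbeats 800000 in
theorem NonlocalSol.sub_le [IsFiniteMeasure ν] (hd : NonlocalSol ν d dx a b g per h)
    (hper : 0 < per) (hb : ∀ t ∈ Icc 0 h, ∀ x, |b x t| ≤ K)
    (ha : ∀ t ∈ Icc 0 h, ∀ x k, |a (x + k) t - a x t| ≤ N * |k|)
    (hbl : ∀ t ∈ Icc 0 h, ∀ x k, |b (x + k) t - b x t| ≤ C * |k|)
    (hgl : ∀ t ∈ Icc 0 h, ∀ x k, |g (x + k) t - g x t| ≤ G * |k|) {A : ℝ}
    (hA : ∀ t ∈ Icc 0 h, ∀ x, |d x t| ≤ A) {t : ℝ} (ht : t ∈ Icc 0 h) (x : ℝ) {k : ℝ}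
    (hk : k ∈ Icc 0 per) :
    d (x + k) t - d x t ≤ Real.exp (K * t) * ((C * A + G) * Real.exp (N * t) * t * k) := by
  have hK : 0 ≤ K := (abs_nonneg _).trans (hb t ht x)
  have hN : 0 ≤ N := by simpa using (abs_nonneg _).trans (ha t ht x 1)
  have hC : 0 ≤ C := by simpa using (abs_nonneg _).trans (hbl t ht x 1)
  have hA0 : 0 ≤ A := (abs_nonneg _).trans (hA t ht x)
  have hG : 0 ≤ G := by simpa using (abs_nonneg _).trans (hgl t ht x 1)
  have key : ∀ δ > 0, Real.exp (-K * t) * (d (x + k) t - d x t) -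
      (C * A + G + δ) * Real.exp (N * t) * t * k ≤ 0 := by
    intro δ hδ
    set B := C * A + G + δ with hB
    set Z : ℝ × ℝ × ℝ → ℝ := fun p => Real.exp (-K * p.2.2) * (d (p.1 + p.2.1) p.2.2 - d p.1 p.2.2)
      - B * Real.exp (N * p.2.2) * p.2.2 * p.2.1 with hZ
    have hZc : ContinuousOn Z (Icc 0 per ×ˢ Icc 0 per ×ˢ Icc 0 h) := by
      have h1 : ContinuousOn (fun p : ℝ × ℝ × ℝ => d (p.1 + p.2.1) p.2.2)
          (Icc 0 per ×ˢ Icc 0 per ×ˢ Icc 0 h) :=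
        hd.cont.comp (f := fun p : ℝ × ℝ × ℝ => (p.1 + p.2.1, p.2.2)) (by fun_prop)
          fun p hp => ⟨mem_univ _, hp.2.2⟩
      have h2 : ContinuousOn (fun p : ℝ × ℝ × ℝ => d p.1 p.2.2)
          (Icc 0 per ×ˢ Icc 0 per ×ˢ Icc 0 h) :=
        hd.cont.comp (f := fun p : ℝ × ℝ × ℝ => (p.1, p.2.2)) (by fun_prop)
          fun p hp => ⟨mem_univ _, hp.2.2⟩
      refine ContinuousOn.sub (ContinuousOn.mul ?_ (h1.sub h2)) ?_ <;>
        exact Continuous.continuousOn (by fun_prop)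
    obtain ⟨⟨x₀, k₀, t₀⟩, ⟨hx₀, hk₀, ht₀⟩, hmax⟩ :=
      (isCompact_Icc.prod (isCompact_Icc.prod isCompact_Icc)).exists_isMaxOn
      (⟨(0, 0, 0), ⟨le_rfl, hper.le⟩, ⟨le_rfl, hper.le⟩, le_rfl, ht.1.trans ht.2⟩) hZc
    simp only at hx₀ hk₀ ht₀
    have hmax' : ∀ y, ∀ l ∈ Icc 0 per, ∀ s ∈ Icc 0 h, Z (y, l, s) ≤ Z (x₀, k₀, t₀) := by
      intro y l hl s hs
      obtain ⟨z, hz, hzy⟩ := Function.Periodic.exists_mem_Ico₀ (f := fun y => d (y + l) s - d y s)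
        (fun y => by
          simp only
          rw [show y + per + l = y + l + per by ring, hd.periodic s hs, hd.periodic s hs]) hper y
      have h1 : Z (z, l, s) ≤ Z (x₀, k₀, t₀) := hmax ⟨⟨hz.1, hz.2.le⟩, hl, hs⟩
      simp only [hZ] at h1 ⊢
      rwa [hzy]
    have hZt := hmax' x k hk t ht
    by_contra! hcon
    have hpos : 0 < Z (x₀, k₀, t₀) := hcon.trans_le hZt
    have ht₀pos : 0 < t₀ := by
      rcases ht₀.1.eq_or_lt with h | h
      · rw [← h] at hpos; simp [hZ, hd.init] at hpos
      · exact h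
    have hBpos : 0 < B := by positivity
    set e := Real.exp (-K * t₀) with he
    set m := B * Real.exp (N * t₀) * t₀ with hm
    have hmpos : 0 < m := by positivity
    have e0 : 0 < e := Real.exp_pos _
    have hpos' : 0 < e * (d (x₀ + k₀) t₀ - d x₀ t₀) - m * k₀ := hpos
    have hk₀pos : 0 < k₀ := by
      rcases hk₀.1.eq_or_lt with h | h
      · rw [← h] at hpos'; simp at hpos'
      · exact h
    have hk₀per : k₀ < per := by
      rcases hk₀.2.eq_or_lt with h | h
      · rw [h, hd.periodic t₀ ht₀] at hpos'
        nlinarith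
      · exact h
    have hDpos : 0 < d (x₀ + k₀) t₀ - d x₀ t₀ := by
      have : 0 < e * (d (x₀ + k₀) t₀ - d x₀ t₀) := by nlinarith
      exact pos_of_mul_pos_right this e0.le
    have hDmax : ∀ y, d (y + k₀) t₀ - d y t₀ ≤ d (x₀ + k₀) t₀ - d x₀ t₀ := by
      intro y
      have h1 := hmax' y k₀ hk₀ t₀ ht₀
      simp only [hZ] at h1
      exact le_of_mul_le_mul_left (by linarith) e0
    have hx_eq : dx (x₀ + k₀) t₀ - dx x₀ t₀ = 0 := IsLocalMax.hasDerivAt_eq_zero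
      (f := fun y => d (y + k₀) t₀ - d y t₀) (Eventually.of_forall hDmax)
      (((hd.hasDeriv_space t₀ ht₀ (x₀ + k₀)).comp_add_const x₀ k₀).sub
        (hd.hasDeriv_space t₀ ht₀ x₀))
    have hk_eq : e * dx (x₀ + k₀) t₀ - m = 0 := by
      refine IsLocalMax.hasDerivAt_eq_zero (a := k₀)
        (f := fun l => e * (d (x₀ + l) t₀ - d x₀ t₀) - m * l) ?_ ?_
      · filter_upwards [Ioo_mem_nhds hk₀pos hk₀per] with l hl
        exact hmax' x₀ l ⟨hl.1.le, hl.2.le⟩ t₀ ht₀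
      · have h1 := ((hd.hasDeriv_space t₀ ht₀ (x₀ + k₀)).comp_const_add x₀ k₀)
        have h2 := ((h1.sub_const (d x₀ t₀)).const_mul e).sub ((hasDerivAt_id k₀).const_mul m)
        exact h2.congr_deriv (by rw [mul_one])
    have hjump : (∫ y, (d (x₀ + k₀ + y) t₀ - d (x₀ + k₀) t₀) ∂ν) -
        ∫ y, (d (x₀ + y) t₀ - d x₀ t₀) ∂ν ≤ 0 := by
      rw [← integral_sub (hd.integrable hper ht₀ _) (hd.integrable hper ht₀ _)]
      refine integral_nonpos fun y => ?_
      have := hDmax (x₀ + y)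
      rw [show x₀ + y + k₀ = x₀ + k₀ + y by ring] at this
      simp only [Pi.zero_apply]
      linarith
    have hderiv : HasDerivWithinAt (fun s => Z (x₀, k₀, s)) _ (Icc 0 h) t₀ :=
      ((((hasDerivAt_id t₀).const_mul (-K)).exp.hasDerivWithinAt).mul
        ((hd.hasDeriv_time t₀ ht₀ (x₀ + k₀)).sub (hd.hasDeriv_time t₀ ht₀ x₀))).sub
        (((((hasDerivAt_id t₀).const_mul N).exp.const_mul B).mul
          (hasDerivAt_id t₀)).mul_const k₀).hasDerivWithinAt
    have h0 := hderiv.nonneg_of_isMax ht₀pos ht₀.2 (fun s hs => hmax' x₀ k₀ hk₀ s hs)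
    simp only [id, mul_one, Pi.sub_apply] at h0
    rw [← he] at h0
    set I₁ := ∫ y, (d (x₀ + k₀ + y) t₀ - d (x₀ + k₀) t₀) ∂ν
    set I₂ := ∫ y, (d (x₀ + y) t₀ - d x₀ t₀) ∂ν
    set D := d (x₀ + k₀) t₀ - d x₀ t₀ with hD
    have hx_eq' : dx x₀ t₀ = dx (x₀ + k₀) t₀ := by linarith
    rw [hx_eq'] at h0
    set P := dx (x₀ + k₀) t₀
    have hP : e * P = m := by linarith
    have hPpos : 0 < P := pos_of_mul_pos_right (by rw [hP]; exact hmpos) e0.le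
    have e1 : e ≤ 1 := Real.exp_le_one_iff.2 (by nlinarith)
    have eN : 1 ≤ Real.exp (N * t₀) := Real.one_le_exp (by positivity)
    have hk₀abs : |k₀| = k₀ := abs_of_pos hk₀pos
    have i1 : (a (x₀ + k₀) t₀ - a x₀ t₀) * P ≤ N * k₀ * P := by
      have := (le_abs_self _).trans (ha t₀ ht₀ x₀ k₀)
      rw [hk₀abs] at this
      exact mul_le_mul_of_nonneg_right this hPpos.le
    have i2 : b (x₀ + k₀) t₀ * D ≤ K * D :=
      mul_le_mul_of_nonneg_right ((le_abs_self _).trans (hb t₀ ht₀ _)) hDpos.le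
    have i3 : (b (x₀ + k₀) t₀ - b x₀ t₀) * d x₀ t₀ ≤ C * k₀ * A := by
      refine (le_abs_self _).trans ?_
      rw [abs_mul]
      have := hbl t₀ ht₀ x₀ k₀
      rw [hk₀abs] at this
      exact mul_le_mul this (hA t₀ ht₀ x₀) (abs_nonneg _) (by positivity)
    have i4 : g (x₀ + k₀) t₀ - g x₀ t₀ ≤ G * k₀ := by
      have := (le_abs_self _).trans (hgl t₀ ht₀ x₀ k₀)
      rwa [hk₀abs] at this
    have i5 : a (x₀ + k₀) t₀ * P + b (x₀ + k₀) t₀ * d (x₀ + k₀) t₀ + I₁ + g (x₀ + k₀) t₀ -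
        (a x₀ t₀ * P + b x₀ t₀ * d x₀ t₀ + I₂ + g x₀ t₀) ≤
        N * k₀ * P + K * D + (C * A + G) * k₀ := by
      rw [hD] at i2 ⊢
      nlinarith
    have i6 := mul_le_mul_of_nonneg_left i5 e0.le
    have i7 : e * ((C * A + G) * k₀) ≤ (C * A + G) * k₀ :=
      mul_le_of_le_one_left (by positivity) e1
    have i8 : e * (N * k₀ * P) = N * k₀ * m := by rw [← hP]; ring
    have i9 : B * k₀ ≤ B * Real.exp (N * t₀) * k₀ :=
      mul_le_mul_of_nonneg_right (le_mul_of_one_le_right hBpos.le eN) hk₀pos.le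
    have i10 : 0 < δ * k₀ := by positivity
    have i11 : (B * (Real.exp (N * t₀) * N) * t₀ + B * Real.exp (N * t₀)) * k₀ =
        N * k₀ * m + B * Real.exp (N * t₀) * k₀ := by rw [hm]; ring
    rw [i11] at h0
    have i12 : e * (N * k₀ * P + K * D + (C * A + G) * k₀) =
        N * k₀ * m + e * K * D + e * ((C * A + G) * k₀) := by rw [← i8]; ring
    have i13 : B * k₀ = (C * A + G) * k₀ + δ * k₀ := by rw [hB]; ring
    linarith
  have h1 : Real.exp (-K * t) * (d (x + k) t - d x t) ≤
      (C * A + G) * Real.exp (N * t) * t * k := by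
    refine le_of_forall_pos_le_add fun ε hε => ?_
    have hq : 0 ≤ Real.exp (N * t) * t * k :=
      mul_nonneg (mul_nonneg (Real.exp_pos _).le ht.1) hk.1
    set q := Real.exp (N * t) * t * k with hqd
    have h2 := key (ε / (q + 1)) (by positivity)
    have h3 : ε / (q + 1) * q ≤ ε := by
      rw [div_mul_eq_mul_div, div_le_iff₀ (by linarith)]
      nlinarith
    have h4 : (C * A + G + ε / (q + 1)) * Real.exp (N * t) * t * k =
      (C * A + G) * Real.exp (N * t) * t * k + ε / (q + 1) * q := by rw [hqd]; ring
    linarith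
  have h2 : d (x + k) t - d x t =
      Real.exp (K * t) * (Real.exp (-K * t) * (d (x + k) t - d x t)) := by
    rw [← mul_assoc, ← Real.exp_add]; simp
  rw [h2]
  exact mul_le_mul_of_nonneg_left h1 (Real.exp_pos _).le

end

section

/-- Bounded endomorphisms of a real normed space. -/
abbrev BEnd (E : Type) [NormedAddCommGroup E] [NormedSpace ℝ E] := E →L[ℝ] E

theorem integrable_comp_add (ν : Measure ℝ) [IsFiniteMeasure ν] (f : ℝ →ᵇ ℝ) (x : ℝ) :
    Integrable (fun y => f (x + y)) ν :=
  Integrable.of_bound (f.continuous.comp (continuous_const.add continuous_id)).aestronglyMeasurable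
    ‖f‖ (Eventually.of_forall fun _ => f.norm_coe_le_norm _)

theorem abs_integral_comp_add_le (ν : Measure ℝ) [IsFiniteMeasure ν] (f : ℝ →ᵇ ℝ) (x : ℝ) :
    ‖∫ y, f (x + y) ∂ν‖ ≤ ν.real univ * ‖f‖ := by
  rw [mul_comm]
  exact norm_integral_le_of_norm_le_const (Eventually.of_forall fun y => f.norm_coe_le_norm _)

/-- The operator `f ↦ ∫ f(· + y) dν(y)` on bounded continuous functions. -/
def jumpOp (ν : Measure ℝ) [IsFiniteMeasure ν] : BEnd (ℝ →ᵇ ℝ) :=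
  LinearMap.mkContinuous
    { toFun := fun f => BoundedContinuousFunction.ofNormedAddCommGroup (fun x => ∫ y, f (x + y) ∂ν)
        (continuous_of_dominated (fun x => (integrable_comp_add ν f x).aestronglyMeasurable)
          (fun x => Eventually.of_forall fun y => f.norm_coe_le_norm (x + y))
          (integrable_const ‖f‖)
          (Eventually.of_forall fun y => f.continuous.comp (continuous_id.add continuous_const)))
        (ν.real univ * ‖f‖) (abs_integral_comp_add_le ν f)
      map_add' := fun f g => by
        ext x
        exact integral_add (integrable_comp_add ν f x) (integrable_comp_add ν g x)
      map_smul' := fun c f => by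
        ext x
        exact integral_const_mul c _ }
    (ν.real univ) fun f =>
      (BoundedContinuousFunction.norm_le (by positivity)).2 (abs_integral_comp_add_le ν f)

theorem jumpOp_apply (ν : Measure ℝ) [IsFiniteMeasure ν] (f : ℝ →ᵇ ℝ) (x : ℝ) :
    jumpOp ν f x = ∫ y, f (x + y) ∂ν := rfl

/-- The generator `f ↦ ∫ (f(· + y) - f) dν(y)`. -/
def genOp (ν : Measure ℝ) [IsFiniteMeasure ν] : BEnd (ℝ →ᵇ ℝ) :=
  jumpOp ν - (ν.real univ) • 1

theorem genOp_apply (ν : Measure ℝ) [IsFiniteMeasure ν] (f : ℝ →ᵇ ℝ) (x : ℝ) :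
    genOp ν f x = ∫ y, (f (x + y) - f x) ∂ν := by
  rw [integral_sub (integrable_comp_add ν f x) (integrable_const _), integral_const]
  rfl

/-- The semigroup generated by `genOp ν`. -/
def jumpSemigroup (ν : Measure ℝ) [IsFiniteMeasure ν] (t : ℝ) : BEnd (ℝ →ᵇ ℝ) :=
  Real.exp (-(ν.real univ) * t) • NormedSpace.exp (t • jumpOp ν)

variable (ν : Measure ℝ) [IsFiniteMeasure ν]

theorem jumpSemigroup_zero : jumpSemigroup ν 0 = 1 := by
  simp [jumpSemigroup]

theorem commute_genOp_jumpSemigroup (t : ℝ) : Commute (genOp ν) (jumpSemigroup ν t) := by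
  unfold genOp jumpSemigroup
  have h : Commute (jumpOp ν) (NormedSpace.exp (t • jumpOp ν)) :=
    ((Commute.refl (jumpOp ν)).smul_right t).exp_right
  exact Commute.sub_left (h.smul_right _) (((Commute.one_left _).smul_left _).smul_right _)

theorem hasDerivAt_jumpSemigroup (t : ℝ) :
    HasDerivAt (jumpSemigroup ν) (genOp ν * jumpSemigroup ν t) t := by
  have h1 : HasDerivAt (fun t => Real.exp (-(ν.real univ) * t))
      (Real.exp (-(ν.real univ) * t) * (-(ν.real univ) * 1)) t :=
    ((hasDerivAt_id t).const_mul _).exp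
  have h2 := h1.smul (hasDerivAt_exp_smul_const' (jumpOp ν) t)
  refine h2.congr_deriv ?_
  unfold genOp jumpSemigroup
  rw [sub_mul, mul_smul_comm, smul_mul_assoc, one_mul, smul_smul, mul_one, mul_neg, neg_smul,
    sub_eq_add_neg, mul_comm (ν.real univ)]

theorem hasSum_exp_jumpOp (t : ℝ) (f : ℝ →ᵇ ℝ) :
    HasSum (fun n : ℕ => (n.factorial : ℝ)⁻¹ • t ^ n • ((jumpOp ν) ^ n) f)
      (NormedSpace.exp (t • jumpOp ν) f) := by
  have h1 := NormedSpace.exp_series_hasSum_exp' (𝕂 := ℝ) (t • jumpOp ν)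
  have h2 := h1.mapL (ContinuousLinearMap.apply ℝ (ℝ →ᵇ ℝ) f)
  refine h2.congr_fun ?_ 
  intro n
  simp [smul_pow]

theorem jumpOp_pow_nonneg {f : ℝ →ᵇ ℝ} (hf : 0 ≤ f) (n : ℕ) : 0 ≤ ((jumpOp ν) ^ n) f := by
  induction n with
  | zero => simpa using hf
  | succ n ih =>
    rw [pow_succ']
    intro x
    exact integral_nonneg fun y => ih (x + y)

theorem jumpSemigroup_nonneg {t : ℝ} (ht : 0 ≤ t) {f : ℝ →ᵇ ℝ} (hf : 0 ≤ f) :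
    0 ≤ jumpSemigroup ν t f := by
  intro x
  have h := (hasSum_exp_jumpOp ν t f).mapL (BoundedContinuousFunction.evalCLM ℝ x)
  have h2 : 0 ≤ (NormedSpace.exp (t • jumpOp ν) f) x := h.nonneg fun n => by
    have := jumpOp_pow_nonneg ν hf n x
    simp only [map_smul, BoundedContinuousFunction.evalCLM_apply, smul_eq_mul]
    have h3 : 0 ≤ ((jumpOp ν ^ n) f) x := this
    positivity
  exact mul_nonneg (Real.exp_pos _).le h2

theorem jumpSemigroup_of_eigen (t : ℝ) {f : ℝ →ᵇ ℝ} {m : ℝ} (hf : genOp ν f = m • f) :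
    jumpSemigroup ν t f = Real.exp (m * t) • f := by
  have h1 : jumpOp ν f = (m + ν.real univ) • f := by
    have : jumpOp ν f = genOp ν f + (ν.real univ) • f := by simp [genOp]
    rw [this, hf, add_smul]
  have h2 : ∀ n : ℕ, ((jumpOp ν) ^ n) f = (m + ν.real univ) ^ n • f := by
    intro n
    induction n with
    | zero => simp
    | succ n ih =>
      rw [pow_succ', mul_apply_eq_comp, ih, map_smul, h1, smul_smul, pow_succ]
  have h3 := hasSum_exp_jumpOp ν t f
  simp only [h2, smul_smul] at h3
  have h4 : HasSum (fun n : ℕ => ((n.factorial : ℝ)⁻¹ * (t ^ n * (m + ν.real univ) ^ n)) • f)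
      (Real.exp (t * (m + ν.real univ)) • f) := by
    refine HasSum.smul_const ?_ f
    have := NormedSpace.exp_series_hasSum_exp' (𝕂 := ℝ) (t * (m + ν.real univ))
    rw [← Real.exp_eq_exp_ℝ] at this
    simpa [mul_pow] using this
  have h5 := h3.unique h4
  unfold jumpSemigroup
  rw [smul_apply, h5, smul_smul, ← Real.exp_add]
  congr 2; ring

theorem jumpSemigroup_const (t c : ℝ) :
    jumpSemigroup ν t (BoundedContinuousFunction.const ℝ c) = BoundedContinuousFunction.const ℝ c := by
  have : genOp ν (BoundedContinuousFunction.const ℝ c) =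
      (0 : ℝ) • (BoundedContinuousFunction.const ℝ c) := by
    ext x; rw [genOp_apply]; simp
  rw [jumpSemigroup_of_eigen ν t this]; simp

theorem jumpSemigroup_mono {t : ℝ} (ht : 0 ≤ t) {f g : ℝ →ᵇ ℝ} (h : ∀ x, f x ≤ g x) (x : ℝ) :
    jumpSemigroup ν t f x ≤ jumpSemigroup ν t g x := by
  have h1 : 0 ≤ g - f := fun x => sub_nonneg.2 (h x)
  have h2 := jumpSemigroup_nonneg ν ht h1 x
  rw [map_sub] at h2
  exact sub_nonneg.1 h2

theorem abs_jumpSemigroup_le {t : ℝ} (ht : 0 ≤ t) {f : ℝ →ᵇ ℝ} {M : ℝ} (h : ∀ x, |f x| ≤ M)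
    (x : ℝ) : |jumpSemigroup ν t f x| ≤ M := by
  have h1 := jumpSemigroup_mono ν ht (f := f) (g := BoundedContinuousFunction.const ℝ M)
    (fun x => (le_abs_self _).trans (h x)) x
  have h2 := jumpSemigroup_mono ν ht (f := BoundedContinuousFunction.const ℝ (-M)) (g := f)
    (fun x => (abs_le.1 (h x)).1) x
  rw [jumpSemigroup_const] at h1 h2
  exact abs_le.2 ⟨h2, h1⟩

/-- Translation of bounded continuous functions. -/
def shiftOp (s : ℝ) : BEnd (ℝ →ᵇ ℝ) :=
  LinearMap.mkContinuous
    { toFun := fun f => f.compContinuous ⟨fun x => x + s, by fun_prop⟩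
      map_add' := fun f g => rfl
      map_smul' := fun c f => rfl }
    1 fun f => by
      rw [one_mul]
      exact (BoundedContinuousFunction.norm_le (norm_nonneg f)).2 fun x => f.norm_coe_le_norm _

@[simp] theorem shiftOp_apply (s : ℝ) (f : ℝ →ᵇ ℝ) (x : ℝ) : shiftOp s f x = f (x + s) := rfl

theorem jumpSemigroup_shiftOp (t s : ℝ) (f : ℝ →ᵇ ℝ) (x : ℝ) :
    jumpSemigroup ν t (shiftOp s f) x = jumpSemigroup ν t f (x + s) := by
  have h1 : Commute (shiftOp s) (jumpOp ν) := by
    ext f x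
    simp only [mul_apply_eq_comp, shiftOp_apply, jumpOp_apply]
    congr 1; ext y; congr 1; ring
  have h2 : Commute (shiftOp s) (jumpSemigroup ν t) := by
    unfold jumpSemigroup
    exact ((h1.smul_right t).exp_right).smul_right _
  have h3 := congrArg (fun T => T f x) h2.eq
  exact h3.symm

theorem hasDerivAt_jumpSemigroup_space {t : ℝ} (ht : 0 ≤ t) {f f' : ℝ →ᵇ ℝ} {M : ℝ}
    (hf : ∀ x, HasDerivAt f (f' x) x) (hM : ∀ x y, |f' x - f' y| ≤ M * |x - y|) (x : ℝ) :
    HasDerivAt (fun y => jumpSemigroup ν t f y) (jumpSemigroup ν t f' x) x := by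
  have key : ∀ s, |jumpSemigroup ν t f (x + s) - jumpSemigroup ν t f x -
      s * jumpSemigroup ν t f' x| ≤ M * s ^ 2 := by
    intro s
    have h1 := abs_jumpSemigroup_le ν ht (f := shiftOp s f - f - s • f') (M := M * s ^ 2)
      (fun y => abs_taylor_le hf hM y s) x
    rw [map_sub, map_sub, map_smul] at h1
    rw [← jumpSemigroup_shiftOp]
    exact h1
  rw [hasDerivAt_iff_isLittleO_nhds_zero]
  refine Asymptotics.IsBigO.trans_isLittleO (g := fun s : ℝ => s ^ 2) ?_ ?_
  · refine Asymptotics.IsBigO.of_bound M (Eventually.of_forall fun s => ?_)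
    have := key s
    simpa [smul_eq_mul] using this
  · exact Asymptotics.isLittleO_pow_id (by norm_num)

end

section

/-- The bounded function `y ↦ (y - x)² / (1 + (y - x)²)`. -/
def bumpSq (x : ℝ) : ℝ →ᵇ ℝ :=
  BoundedContinuousFunction.ofNormedAddCommGroup (fun y => (y - x) ^ 2 / (1 + (y - x) ^ 2))
    (by
      refine Continuous.div (by fun_prop) (by fun_prop) fun y => ?_
      positivity) 1 fun y => by
      rw [Real.norm_eq_abs, abs_of_nonneg (by positivity), div_le_one (by positivity)]
      linarith

theorem bumpSq_apply (x y : ℝ) : bumpSq x y = (y - x) ^ 2 / (1 + (y - x) ^ 2) := rfl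

theorem bumpSq_second_diff_le (x z y : ℝ) :
    bumpSq x (z + y) + bumpSq x (z - y) - 2 * bumpSq x z ≤ 2 * min 1 (y ^ 2) := by
  have hform : ∀ u, bumpSq x u = 1 - 1 / (1 + (u - x) ^ 2) := fun u => by
    rw [bumpSq_apply]; field_simp; ring
  have hle : ∀ u, bumpSq x u ≤ 1 := fun u => by
    rw [hform]
    have : 0 < 1 / (1 + (u - x) ^ 2) := by positivity
    linarith
  have hnn : ∀ u, 0 ≤ bumpSq x u := fun u => by rw [bumpSq_apply]; positivity
  rcases le_total 1 (y ^ 2) with h | h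
  · rw [min_eq_left h]
    linarith [hle (z + y), hle (z - y), hnn z]
  · rw [min_eq_right h, hform, hform, hform]
    set u := z - x with hu
    rw [show z + y - x = u + y by rw [hu]; ring, show z - y - x = u - y by rw [hu]; ring]
    have h1 : 0 < 1 + u ^ 2 := by positivity
    have h2 : 0 < 1 + (u + y) ^ 2 := by positivity
    have h3 : 0 < 1 + (u - y) ^ 2 := by positivity
    have key : 2 * (1 / (1 + u ^ 2)) - 1 / (1 + (u + y) ^ 2) - 1 / (1 + (u - y) ^ 2) =
        2 * y ^ 2 * ((1 + y ^ 2 - 3 * u ^ 2) /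
          ((1 + u ^ 2) * ((1 + (u + y) ^ 2) * (1 + (u - y) ^ 2)))) := by
      field_simp
      ring
    have h4 : (1 + y ^ 2 - 3 * u ^ 2) /
        ((1 + u ^ 2) * ((1 + (u + y) ^ 2) * (1 + (u - y) ^ 2))) ≤ 1 := by
      rw [div_le_one (by positivity)]
      have e : (1 + (u + y) ^ 2) * (1 + (u - y) ^ 2) =
        1 + 2 * u ^ 2 + 2 * y ^ 2 + (u ^ 2 - y ^ 2) ^ 2 := by ring
      rw [e]
      nlinarith [sq_nonneg u, sq_nonneg y, sq_nonneg (u ^ 2 - y ^ 2), mul_nonneg (sq_nonneg u) (sq_nonneg y),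
        mul_nonneg (sq_nonneg u) (sq_nonneg (u ^ 2 - y ^ 2))]
    have h5 : 2 * y ^ 2 * ((1 + y ^ 2 - 3 * u ^ 2) /
        ((1 + u ^ 2) * ((1 + (u + y) ^ 2) * (1 + (u - y) ^ 2)))) ≤ 2 * y ^ 2 * 1 :=
      mul_le_mul_of_nonneg_left h4 (by positivity)
    linarith

variable (ν : Measure ℝ) [IsFiniteMeasure ν]

theorem integrable_min_one_sq : Integrable (fun y : ℝ => min 1 (y ^ 2)) ν :=
  Integrable.of_bound (by fun_prop) 1 (Eventually.of_forall fun y => by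
    rw [Real.norm_eq_abs, abs_of_nonneg (by positivity)]
    exact min_le_left _ _)

theorem genOp_bumpSq_le [ν.IsNegInvariant] {κ : ℝ} (hκ : ∫ y, min 1 (y ^ 2) ∂ν ≤ κ) (x z : ℝ) :
    genOp ν (bumpSq x) z ≤ κ := by
  have hi : Integrable (fun y => bumpSq x (z + y) - bumpSq x z) ν :=
    (integrable_comp_add ν _ z).sub (integrable_const _)
  have hi' : Integrable (fun y => bumpSq x (z + -y) - bumpSq x z) ν := hi.comp_neg
  have h1 : genOp ν (bumpSq x) z = ∫ y, (bumpSq x (z + -y) - bumpSq x z) ∂ν := by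
    rw [genOp_apply]
    exact (integral_neg_eq_self (fun y => bumpSq x (z + y) - bumpSq x z) ν).symm
  have h2 : genOp ν (bumpSq x) z + genOp ν (bumpSq x) z ≤ 2 * ∫ y, min 1 (y ^ 2) ∂ν := by
    conv_lhs => lhs; rw [genOp_apply]
    conv_lhs => rhs; rw [h1]
    rw [← integral_add hi hi', ← integral_const_mul]
    refine integral_mono (hi.add hi') ((integrable_min_one_sq ν).const_mul 2) fun y => ?_
    have := bumpSq_second_diff_le x z y
    simp only [← sub_eq_add_neg]
    linarith
  linarith

theorem hasDerivAt_jumpSemigroup_apply (f : ℝ →ᵇ ℝ) (x t : ℝ) :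
    HasDerivAt (fun s => jumpSemigroup ν s f x) (jumpSemigroup ν t (genOp ν f) x) t := by
  have h1 := hasDerivAt_jumpSemigroup ν t
  rw [(commute_genOp_jumpSemigroup ν t).eq] at h1
  have h2 : HasDerivAt (fun s => jumpSemigroup ν s f) (jumpSemigroup ν t (genOp ν f)) t := by
    have := h1.clm_apply (hasDerivAt_const t f)
    simpa using this
  exact ((BoundedContinuousFunction.evalCLM ℝ x).hasFDerivAt.comp_hasDerivAt t h2)

theorem jumpSemigroup_bumpSq_le [ν.IsNegInvariant] {κ : ℝ} (hκ : ∫ y, min 1 (y ^ 2) ∂ν ≤ κ)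
    {t : ℝ} (ht : 0 ≤ t) (x : ℝ) : jumpSemigroup ν t (bumpSq x) x ≤ κ * t := by
  have h := (convex_Icc 0 t).image_sub_le_mul_sub_of_deriv_le
    (f := fun s => jumpSemigroup ν s (bumpSq x) x) (C := κ)
    (fun s _ => (hasDerivAt_jumpSemigroup_apply ν _ x s).continuousAt.continuousWithinAt)
    (fun s _ => (hasDerivAt_jumpSemigroup_apply ν _ x s).differentiableAt.differentiableWithinAt)
    (fun s hs => ?_) 0 ⟨le_rfl, ht⟩ t ⟨ht, le_rfl⟩ ht
  · rw [jumpSemigroup_zero] at h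
    simpa [bumpSq_apply] using h
  · rw [(hasDerivAt_jumpSemigroup_apply ν _ x s).deriv]
    have hs0 : 0 ≤ s := (interior_subset hs).1
    have := jumpSemigroup_mono ν hs0 (g := BoundedContinuousFunction.const ℝ κ)
      (genOp_bumpSq_le ν hκ x) x
    rwa [jumpSemigroup_const] at this

theorem mul_le_bumpSq {F G p q x y : ℝ} (hp : |p| ≤ 2 * F) (hp' : |p| ≤ F * |y - x|)
    (hq : |q| ≤ 2 * G) (hq' : |q| ≤ G * |y - x|) (hF : 0 ≤ F) (hG : 0 ≤ G) :
    |p * q| ≤ 5 * F * G * bumpSq x y := by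
  rw [bumpSq_apply, ← sq_abs (y - x), abs_mul]
  set r := |y - x|
  have hr : 0 ≤ r := abs_nonneg _
  rw [mul_div_assoc', le_div_iff₀ (by positivity)]
  rcases le_total r 2 with h | h
  · have : |p| * |q| ≤ F * r * (G * r) := mul_le_mul hp' hq' (abs_nonneg _) (by positivity)
    have h2 : 1 + r ^ 2 ≤ 5 := by nlinarith
    calc |p| * |q| * (1 + r ^ 2) ≤ F * r * (G * r) * 5 :=
          mul_le_mul this h2 (by positivity) (by positivity)
      _ = 5 * F * G * r ^ 2 := by ring
  · have : |p| * |q| ≤ 2 * F * (2 * G) := mul_le_mul hp hq (abs_nonneg _) (by positivity)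
    have h2 : 4 * (1 + r ^ 2) ≤ 5 * r ^ 2 := by nlinarith
    calc |p| * |q| * (1 + r ^ 2) ≤ 2 * F * (2 * G) * (1 + r ^ 2) :=
          mul_le_mul_of_nonneg_right this (by positivity)
      _ = F * G * (4 * (1 + r ^ 2)) := by ring
      _ ≤ F * G * (5 * r ^ 2) := mul_le_mul_of_nonneg_left h2 (by positivity)
      _ = 5 * F * G * r ^ 2 := by ring

/-- The covariance of two Lipschitz functions under the semigroup is of order `t`. -/
theorem abs_cov_le [ν.IsNegInvariant] {κ : ℝ} (hκ : ∫ y, min 1 (y ^ 2) ∂ν ≤ κ)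
    {t : ℝ} (ht : 0 ≤ t) {f g : ℝ →ᵇ ℝ} {F G : ℝ} (hf : ∀ y, |f y| ≤ F)
    (hf' : ∀ y z, |f y - f z| ≤ F * |y - z|) (hg : ∀ y, |g y| ≤ G)
    (hg' : ∀ y z, |g y - g z| ≤ G * |y - z|) (x : ℝ) :
    |jumpSemigroup ν t (f * g) x - jumpSemigroup ν t f x * jumpSemigroup ν t g x| ≤
      10 * F * G * (κ * t) := by
  have hF : 0 ≤ F := (abs_nonneg _).trans (hf 0)
  have hG : 0 ≤ G := (abs_nonneg _).trans (hg 0)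
  set S := jumpSemigroup ν t with hS
  set q := κ * t with hq
  have hρ : S (bumpSq x) x ≤ q := jumpSemigroup_bumpSq_le ν hκ ht x
  have hρ0 : 0 ≤ S (bumpSq x) x := jumpSemigroup_nonneg ν ht (f := bumpSq x)
    (fun y => by change (0:ℝ) ≤ (y - x) ^ 2 / (1 + (y - x) ^ 2); positivity) x
  have hq0 : 0 ≤ q := hρ0.trans hρ
  have hconst : ∀ c : ℝ, S (BoundedContinuousFunction.const ℝ c) x = c := fun c => by
    rw [hS, jumpSemigroup_const]; rfl
  set p := f - BoundedContinuousFunction.const ℝ (f x) with hp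
  set r := g - BoundedContinuousFunction.const ℝ (g x) with hr
  have bp : ∀ y, |p y| ≤ 2 * F := fun y => by
    have : |f y - f x| ≤ |f y| + |f x| := abs_sub _ _
    change |f y - f x| ≤ _
    linarith [hf y, hf x]
  have br : ∀ y, |r y| ≤ 2 * G := fun y => by
    have : |g y - g x| ≤ |g y| + |g x| := abs_sub _ _
    change |g y - g x| ≤ _
    linarith [hg y, hg x]
  have bp' : ∀ y, |p y| ≤ F * |y - x| := fun y => hf' y x
  have br' : ∀ y, |r y| ≤ G * |y - x| := fun y => hg' y x
  have main : ∀ (u v : ℝ →ᵇ ℝ) (U V : ℝ), 0 ≤ U → 0 ≤ V → (∀ y, |u y| ≤ 2 * U) →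
      (∀ y, |u y| ≤ U * |y - x|) → (∀ y, |v y| ≤ 2 * V) → (∀ y, |v y| ≤ V * |y - x|) →
      |S (u * v) x| ≤ 5 * U * V * q := by
    intro u v U V hU hV h1 h2 h3 h4
    have k : ∀ y, |u y * v y| ≤ 5 * U * V * bumpSq x y := fun y =>
      mul_le_bumpSq (h1 y) (h2 y) (h3 y) (h4 y) hU hV
    have k1 := jumpSemigroup_mono ν ht (f := u * v) (g := (5 * U * V) • bumpSq x)
      (fun y => (le_abs_self _).trans (k y)) x
    have k2 := jumpSemigroup_mono ν ht (f := -(u * v)) (g := (5 * U * V) • bumpSq x)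
      (fun y => (neg_le_abs _).trans (k y)) x
    rw [map_smul] at k1 k2
    rw [map_neg] at k2
    have k3 : 5 * U * V * S (bumpSq x) x ≤ 5 * U * V * q :=
      mul_le_mul_of_nonneg_left hρ (by positivity)
    exact abs_le.2 ⟨by linarith [show -(S (u * v) x) ≤ 5 * U * V * S (bumpSq x) x from k2],
      le_trans k1 k3⟩
  have sq_le : ∀ u : ℝ →ᵇ ℝ, (S u x) ^ 2 ≤ S (u * u) x := by
    intro u
    set c := S u x with hc
    have h1 := jumpSemigroup_nonneg ν ht (f := u * u - (2 * c) • u +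
      BoundedContinuousFunction.const ℝ (c ^ 2)) (fun y => by
        change 0 ≤ u y * u y - 2 * c * u y + c ^ 2
        nlinarith [sq_nonneg (u y - c)]) x
    rw [map_add, map_sub, map_smul] at h1
    have h2 : 0 ≤ S (u * u) x - 2 * c * S u x +
      S (BoundedContinuousFunction.const ℝ (c ^ 2)) x := h1
    rw [hconst, ← hc] at h2
    nlinarith
  have e1 : S p x = S f x - f x := by
    rw [hp, map_sub]
    change S f x - S (BoundedContinuousFunction.const ℝ (f x)) x = _
    rw [hconst]
  have e2 : S r x = S g x - g x := by
    rw [hr, map_sub]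
    change S g x - S (BoundedContinuousFunction.const ℝ (g x)) x = _
    rw [hconst]
  have e3 : S (p * r) x = S (f * g) x - f x * S g x - g x * S f x + f x * g x := by
    have : p * r = f * g - f x • g - g x • f + BoundedContinuousFunction.const ℝ (f x * g x) := by
      ext y
      change (f y - f x) * (g y - g x) = f y * g y - f x * g y - g x * f y + f x * g x
      ring
    rw [this, map_add, map_sub, map_sub, map_smul, map_smul]
    change S (f * g) x - f x * S g x - g x * S f x +
      S (BoundedContinuousFunction.const ℝ (f x * g x)) x = _
    rw [hconst]
  have e4 : S (f * g) x - S f x * S g x = S (p * r) x - S p x * S r x := by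
    rw [e1, e2, e3]; ring
  have m1 := main p r F G hF hG bp bp' br br'
  have m2 := (sq_le p).trans ((le_abs_self _).trans (main p p F F hF hF bp bp' bp bp'))
  have m3 := (sq_le r).trans ((le_abs_self _).trans (main r r G G hG hG br br' br br'))
  have m4 : |S p x * S r x| ≤ 5 * F * G * q := by
    refine abs_le_of_sq_le_sq ?_ (by positivity)
    rw [mul_pow]
    calc (S p x) ^ 2 * (S r x) ^ 2 ≤ (5 * F * F * q) * (5 * G * G * q) :=
          mul_le_mul m2 m3 (sq_nonneg _) (by positivity)
      _ = (5 * F * G * q) ^ 2 := by ring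
  rw [e4]
  have := abs_sub (S (p * r) x) (S p x * S r x)
  linarith

end

theorem abs_second_sub_le {f f' : ℝ → ℝ} {M : ℝ} (hf : ∀ x, HasDerivAt f (f' x) x)
    (hM : ∀ x y, |f' x - f' y| ≤ M * |x - y|) (k y z : ℝ) :
    |f (y + k) - f y - (f (z + k) - f z)| ≤ M * |k| * |y - z| := by
  refine abs_sub_le_of_hasDerivAt (f := fun y => f (y + k) - f y)
    (f' := fun y => f' (y + k) - f' y)
    (fun x => ((hf (x + k)).comp_add_const x k).sub (hf x)) (fun x => ?_) y z
  simpa using hM (x + k) x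

/-- The covariance of two regular functions under the semigroup is Lipschitz with constant of
order `t`. -/
theorem abs_cov_sub_le (ν : Measure ℝ) [IsFiniteMeasure ν] [ν.IsNegInvariant] {κ : ℝ}
    (hκ : ∫ y, min 1 (y ^ 2) ∂ν ≤ κ)
    {t : ℝ} (ht : 0 ≤ t) {f g : ℝ →ᵇ ℝ} {F G : ℝ} (hf : ∀ y, |f y| ≤ F)
    (hf' : ∀ y z, |f y - f z| ≤ F * |y - z|)
    (hf2 : ∀ k y z, |f (y + k) - f y - (f (z + k) - f z)| ≤ F * |k| * |y - z|)
    (hg : ∀ y, |g y| ≤ G) (hg' : ∀ y z, |g y - g z| ≤ G * |y - z|)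
    (hg2 : ∀ k y z, |g (y + k) - g y - (g (z + k) - g z)| ≤ G * |k| * |y - z|) (x k : ℝ) :
    |(jumpSemigroup ν t (f * g) (x + k) -
        jumpSemigroup ν t f (x + k) * jumpSemigroup ν t g (x + k)) -
      (jumpSemigroup ν t (f * g) x - jumpSemigroup ν t f x * jumpSemigroup ν t g x)| ≤
      20 * F * G * (κ * t) * |k| := by
  have c1 := abs_cov_le ν hκ ht (f := shiftOp k f - f) (g := shiftOp k g) (F := F * |k|) (G := G)
    (fun y => by simpa using hf' (y + k) y) (fun y z => hf2 k y z) (fun y => hg (y + k))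
    (fun y z => by simpa using hg' (y + k) (z + k)) x
  have c2 := abs_cov_le ν hκ ht (f := f) (g := shiftOp k g - g) (F := F) (G := G * |k|)
    hf hf' (fun y => by simpa using hg' (y + k) y) (fun y z => hg2 k y z) x
  have e1 : (shiftOp k f - f) * shiftOp k g = shiftOp k (f * g) - f * shiftOp k g := by
    ext y; simp [sub_mul]
  rw [e1] at c1
  simp only [mul_sub, map_sub, BoundedContinuousFunction.sub_apply, jumpSemigroup_shiftOp] at c1 c2
  rw [abs_le] at c1 c2 ⊢
  constructor <;> nlinarith

/-- A curve of bounded continuous functions which is pointwise differentiable with uniformly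
continuous derivative is differentiable. -/
theorem hasDerivWithinAt_bcf {F G : ℝ → ℝ →ᵇ ℝ} {h : ℝ}
    (hF : ∀ t ∈ Icc 0 h, ∀ x, HasDerivWithinAt (fun s => F s x) (G t x) (Icc 0 h) t)
    (hG : ContinuousOn G (Icc 0 h)) {t : ℝ} (ht : t ∈ Icc 0 h) :
    HasDerivWithinAt F (G t) (Icc 0 h) t := by
  rw [hasDerivWithinAt_iff_isLittleO, Asymptotics.isLittleO_iff]
  intro ε hε
  obtain ⟨δ, hδ, hδ'⟩ := Metric.continuousOn_iff.1 hG t ht ε hε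
  filter_upwards [inter_mem_nhdsWithin (Icc 0 h) (Metric.ball_mem_nhds t hδ)] with s hs
  refine (BoundedContinuousFunction.norm_le (by positivity)).2 fun x => ?_
  have hsub : uIcc t s ⊆ Icc 0 h := (ordConnected_Icc.uIcc_subset ht hs.1)
  have h1 : ∀ u ∈ uIcc t s, HasDerivWithinAt (fun u => F u x - u * G t x) (G u x - G t x)
      (uIcc t s) u := fun u hu =>
    (((hF u (hsub hu) x).mono hsub).sub ((hasDerivWithinAt_id u _).mul_const (G t x))).congr_deriv
      (by simp)
  have h2 : ∀ u ∈ uIcc t s, ‖G u x - G t x‖ ≤ ε := fun u hu => by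
    have h3 : dist u t < δ := by
      have := abs_sub_left_of_mem_uIcc hu
      have h4 : |s - t| < δ := hs.2
      rw [Real.dist_eq]
      linarith
    exact ((BoundedContinuousFunction.dist_coe_le_dist x).trans
      (hδ' u (hsub hu) h3).le)
  have h3 := (convex_uIcc t s).norm_image_sub_le_of_norm_hasDerivWithin_le h1 h2
    left_mem_uIcc right_mem_uIcc
  refine le_trans (le_of_eq ?_) h3
  congr 1
  simp only [BoundedContinuousFunction.sub_apply, BoundedContinuousFunction.smul_apply, smul_eq_mul]
  ring

theorem exists_bcf_curve {u : ℝ → ℝ → ℝ} {h M : ℝ} (hc : ∀ t ∈ Icc 0 h, Continuous fun x => u x t)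
    (hb : ∀ t ∈ Icc 0 h, ∀ x, |u x t| ≤ M) :
    ∃ U : ℝ → ℝ →ᵇ ℝ, ∀ t ∈ Icc 0 h, ∀ x, U t x = u x t := by
  have : ∀ t, ∃ U : ℝ →ᵇ ℝ, t ∈ Icc 0 h → ∀ x, U x = u x t := fun t => by
    by_cases ht : t ∈ Icc 0 h
    · exact ⟨BoundedContinuousFunction.ofNormedAddCommGroup _ (hc t ht) M (hb t ht), fun _ _ => rfl⟩
    · exact ⟨0, fun h => absurd h ht⟩
  choose U hU using this
  exact ⟨U, hU⟩

theorem continuousOn_bcf_of_modulus {U : ℝ → ℝ →ᵇ ℝ} {u : ℝ → ℝ → ℝ} {h : ℝ} {m : ℝ → ℝ}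
    (hU : ∀ t ∈ Icc 0 h, ∀ x, U t x = u x t) (hm : Continuous m) (hm0 : m 0 = 0)
    (hm' : ∀ s, 0 ≤ m s)
    (hu : ∀ s ∈ Icc 0 h, ∀ t ∈ Icc 0 h, ∀ x, |u x t - u x s| ≤ m (t - s)) :
    ContinuousOn U (Icc 0 h) := by
  intro t ht
  have h1 : Tendsto (fun s => m (s - t)) (𝓝[Icc 0 h] t) (𝓝 0) := by
    have : Continuous fun s => m (s - t) := by fun_prop
    have h2 := this.tendsto t
    rw [sub_self, hm0] at h2
    exact h2.mono_left nhdsWithin_le_nhds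
  refine tendsto_iff_dist_tendsto_zero.2
    (squeeze_zero' (Eventually.of_forall fun s => dist_nonneg) ?_ h1)
  filter_upwards [self_mem_nhdsWithin] with s hs
  refine (BoundedContinuousFunction.dist_le (hm' _)).2 fun x => ?_
  rw [hU s hs, hU t ht]
  exact hu t ht s hs x

theorem C3Bound.lip0 {f : ℝ → ℝ} {M : ℝ} (hf : C3Bound f M) (x y : ℝ) :
    |f x - f y| ≤ M * |x - y| :=
  abs_sub_le_of_hasDerivAt (contDiff_three_hasDerivAt hf.contDiff).1 hf.b1 x y

theorem C3Bound.lip1 {f : ℝ → ℝ} {M : ℝ} (hf : C3Bound f M) (x y : ℝ) :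
    |deriv f x - deriv f y| ≤ M * |x - y| :=
  abs_sub_le_of_hasDerivAt (contDiff_three_hasDerivAt hf.contDiff).2.1 hf.b2 x y

theorem C3Bound.lip2 {f : ℝ → ℝ} {M : ℝ} (hf : C3Bound f M) (x y : ℝ) :
    |deriv (deriv f) x - deriv (deriv f) y| ≤ M * |x - y| :=
  abs_sub_le_of_hasDerivAt (contDiff_three_hasDerivAt hf.contDiff).2.2 hf.b3 x y

theorem C3Bound.continuous_deriv {f : ℝ → ℝ} {M : ℝ} (hf : C3Bound f M) : Continuous (deriv f) :=
  hf.contDiff.continuous_deriv (by norm_num)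

section

variable (ν : Measure ℝ) [IsFiniteMeasure ν] {θ Lθ w : ℝ → ℝ → ℝ} {per h M : ℝ}
  {W Wx : ℝ → ℝ →ᵇ ℝ}

theorem hasDerivWithinAt_jumpSemigroup_burgers (hw : IsSepBurgers w 0 h)
    (hwb : ∀ t ∈ Icc 0 h, C3Bound (fun x => w x t) M)
    (hW : ∀ t ∈ Icc 0 h, ∀ x, W t x = w x t)
    (hWx : ∀ t ∈ Icc 0 h, ∀ x, Wx t x = deriv (fun y => w y t) x) {t : ℝ} (ht : t ∈ Icc 0 h) :
    HasDerivWithinAt (fun s => jumpSemigroup ν s (W s))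
      (genOp ν (jumpSemigroup ν t (W t)) + jumpSemigroup ν t (W t * Wx t)) (Icc 0 h) t := by
  have hM : 0 ≤ M := (hwb t ht).nonneg
  have cW : ContinuousOn W (Icc 0 h) := by
    refine continuousOn_bcf_of_modulus hW (m := fun s => M ^ 2 * |s|) (by fun_prop) (by simp)
      (fun s => by positivity) fun s hs t ht x => hw.lipschitz_time hwb hs ht x
  have cWx : ContinuousOn Wx (Icc 0 h) := by
    refine continuousOn_bcf_of_modulus hWx (m := fun s => (2 * M ^ 2 + 2 * M) * Real.sqrt |s|)
      (by fun_prop) (by simp)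
      (fun s => by positivity) fun s hs t ht x => hw.abs_deriv_sub_le hwb hs ht x
  have h1 : HasDerivWithinAt W (W t * Wx t) (Icc 0 h) t := by
    refine hasDerivWithinAt_bcf (G := fun t => W t * Wx t) (fun s hs x => ?_) (cW.mul cWx) ht
    refine ((hw.hasDeriv x s hs).congr (fun u hu => hW u hu x) (hW s hs x)).congr_deriv ?_
    rw [BoundedContinuousFunction.mul_apply, hW s hs, hWx s hs]
  exact (hasDerivAt_jumpSemigroup ν t).hasDerivWithinAt.clm_apply h1

theorem splitting_nonlocalSol
    (hθc : ContinuousOn (fun p : ℝ × ℝ => θ p.1 p.2) (univ ×ˢ Icc 0 h))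
    (hθb : ∀ t ∈ Icc 0 h, C3Bound (fun x => θ x t) M)
    (hθp : ∀ t ∈ Icc 0 h, ∀ x, θ (x + per) t = θ x t)
    (hθt : ∀ x, ∀ t ∈ Icc 0 h, HasDerivWithinAt (fun s => θ x s)
      (θ x t * deriv (fun x' => θ x' t) x - Lθ x t) (Icc 0 h) t)
    (hw : IsSepBurgers w 0 h)
    (hwb : ∀ t ∈ Icc 0 h, C3Bound (fun x => w x t) M)
    (hwp : ∀ t ∈ Icc 0 h, ∀ x, w (x + per) t = w x t)
    (hw0 : ∀ x, w x 0 = θ x 0) (hh : 0 ≤ h)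
    (hW : ∀ t ∈ Icc 0 h, ∀ x, W t x = w x t)
    (hWx : ∀ t ∈ Icc 0 h, ∀ x, Wx t x = deriv (fun y => w y t) x) :
    NonlocalSol ν (fun x t => θ x t - jumpSemigroup ν t (W t) x)
      (fun x t => deriv (fun y => θ y t) x - jumpSemigroup ν t (Wx t) x) θ
      (fun x t => jumpSemigroup ν t (Wx t) x)
      (fun x t => (-Lθ x t - ∫ y, (θ (x + y) t - θ x t) ∂ν) -
        (jumpSemigroup ν t (W t * Wx t) x -
          jumpSemigroup ν t (W t) x * jumpSemigroup ν t (Wx t) x)) per h where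
  cont := by
    refine hθc.sub ?_
    have c1 : ContinuousOn (fun s => jumpSemigroup ν s (W s)) (Icc 0 h) := fun t ht =>
      (hasDerivWithinAt_jumpSemigroup_burgers ν hw hwb hW hWx ht).continuousWithinAt
    have c2 : ContinuousOn (fun p : ℝ × ℝ => (jumpSemigroup ν p.2 (W p.2), p.1))
        (univ ×ˢ Icc 0 h) :=
      (c1.comp continuousOn_snd fun p hp => hp.2).prodMk continuousOn_fst
    exact (continuous_eval (F := ℝ →ᵇ ℝ)).comp_continuousOn c2
  periodic t ht x := by
    have : shiftOp per (W t) = W t := by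
      ext y
      rw [shiftOp_apply, hW t ht, hW t ht, hwp t ht]
    rw [hθp t ht x, ← jumpSemigroup_shiftOp, this]
  init x := by
    rw [jumpSemigroup_zero, ← hw0 x, ← hW 0 ⟨le_rfl, hh⟩ x]
    exact sub_self _
  hasDeriv_space t ht x := by
    refine ((contDiff_three_hasDerivAt (hθb t ht).contDiff).1 x).sub
      (hasDerivAt_jumpSemigroup_space ν ht.1 (M := M) (fun x => ?_) (fun x y => ?_) x)
    · rw [hWx t ht]
      have : (W t : ℝ → ℝ) = fun x => w x t := funext (hW t ht)
      rw [this]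
      exact (contDiff_three_hasDerivAt (hwb t ht).contDiff).1 x
    · rw [hWx t ht, hWx t ht]
      exact (hwb t ht).lip1 x y
  hasDeriv_time t ht x := by
    have h1 : HasDerivWithinAt (fun s => jumpSemigroup ν s (W s) x)
        (genOp ν (jumpSemigroup ν t (W t)) x + jumpSemigroup ν t (W t * Wx t) x) (Icc 0 h) t := by
      have h2 := (BoundedContinuousFunction.evalCLM ℝ x : (ℝ →ᵇ ℝ) →L[ℝ] ℝ).hasFDerivAt
        |>.comp_hasDerivWithinAt t
        (hasDerivWithinAt_jumpSemigroup_burgers ν hw hwb hW hWx ht)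
      exact h2
    refine ((hθt x t ht).sub h1).congr_deriv ?_
    rw [genOp_apply]
    have e : ∫ y, (θ (x + y) t - jumpSemigroup ν t (W t) (x + y) -
          (θ x t - jumpSemigroup ν t (W t) x)) ∂ν =
        (∫ y, (θ (x + y) t - θ x t) ∂ν) -
          ∫ y, (jumpSemigroup ν t (W t) (x + y) - jumpSemigroup ν t (W t) x) ∂ν := by
      rw [← integral_sub]
      · congr 1; ext y; ring
      · exact (integrable_comp_add ν (BoundedContinuousFunction.ofNormedAddCommGroup _
          (hθb t ht).contDiff.continuous M (hθb t ht).b0) x).sub (integrable_const _)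
      · exact (integrable_comp_add ν _ x).sub (integrable_const _)
    rw [e]
    ring

/-- Stability estimate for the splitting scheme with a finite jump measure. -/
theorem splitting_bounds [ν.IsNegInvariant] {κ η : ℝ} (hκ : ∫ y, min 1 (y ^ 2) ∂ν ≤ κ)
    (hper : 0 < per)
    (hθc : ContinuousOn (fun p : ℝ × ℝ => θ p.1 p.2) (univ ×ˢ Icc 0 h))
    (hθb : ∀ t ∈ Icc 0 h, C3Bound (fun x => θ x t) M)
    (hθp : ∀ t ∈ Icc 0 h, ∀ x, θ (x + per) t = θ x t)
    (hθt : ∀ x, ∀ t ∈ Icc 0 h, HasDerivWithinAt (fun s => θ x s)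
      (θ x t * deriv (fun x' => θ x' t) x - Lθ x t) (Icc 0 h) t)
    (hr : ∀ t ∈ Icc 0 h, ∀ x, |-Lθ x t - ∫ y, (θ (x + y) t - θ x t) ∂ν| ≤ η)
    (hr' : ∀ t ∈ Icc 0 h, ∀ x k, |(-Lθ (x + k) t - ∫ y, (θ (x + k + y) t - θ (x + k) t) ∂ν) -
      (-Lθ x t - ∫ y, (θ (x + y) t - θ x t) ∂ν)| ≤ η * |k|)
    (hw : IsSepBurgers w 0 h)
    (hwb : ∀ t ∈ Icc 0 h, C3Bound (fun x => w x t) M)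
    (hwp : ∀ t ∈ Icc 0 h, ∀ x, w (x + per) t = w x t)
    (hw0 : ∀ x, w x 0 = θ x 0) (hh : 0 ≤ h) {V : ℝ →ᵇ ℝ} (hV : ∀ x, V x = w x h) {A : ℝ}
    (hA : A = Real.exp (M * h) * ((10 * M * M * (κ * h) + η) * h)) :
    (∀ x, |θ x h - jumpSemigroup ν h V x| ≤ A) ∧
      ∀ x, ∀ k ∈ Icc 0 per, |(θ (x + k) h - jumpSemigroup ν h V (x + k)) -
        (θ x h - jumpSemigroup ν h V x)| ≤
        Real.exp (M * h) * ((M * A + (20 * M * M * (κ * h) + η)) * Real.exp (M * h) * h * k) := by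
  have hhm : h ∈ Icc 0 h := ⟨hh, le_rfl⟩
  have hM : 0 ≤ M := (hwb h hhm).nonneg
  have hη : 0 ≤ η := (abs_nonneg _).trans (hr h hhm 0)
  have hκ0 : 0 ≤ κ := le_trans (integral_nonneg fun y => le_min zero_le_one (sq_nonneg y)) hκ
  obtain ⟨W, hW⟩ := exists_bcf_curve (u := w) (h := h) (M := M)
    (fun t ht => (hwb t ht).contDiff.continuous) (fun t ht => (hwb t ht).b0)
  obtain ⟨Wx, hWx⟩ := exists_bcf_curve (u := fun x t => deriv (fun y => w y t) x) (h := h) (M := M)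
    (fun t ht => (hwb t ht).continuous_deriv) (fun t ht => (hwb t ht).b1)
  have hd := splitting_nonlocalSol ν hθc hθb hθp hθt hw hwb hwp hw0 hh hW hWx
  have hWV : W h = V := by ext x; rw [hW h hhm, hV]
  have fW : ∀ t ∈ Icc 0 h, (W t : ℝ → ℝ) = fun x => w x t := fun t ht => funext (hW t ht)
  have fWx : ∀ t ∈ Icc 0 h, (Wx t : ℝ → ℝ) = deriv fun x => w x t := fun t ht => funext (hWx t ht)
  have hb : ∀ t ∈ Icc 0 h, ∀ x, |jumpSemigroup ν t (Wx t) x| ≤ M := fun t ht x =>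
    abs_jumpSemigroup_le ν ht.1 (fun y => by rw [hWx t ht]; exact (hwb t ht).b1 y) x
  have ha : ∀ t ∈ Icc 0 h, ∀ x k, |θ (x + k) t - θ x t| ≤ M * |k| := fun t ht x k => by
    simpa using (hθb t ht).lip0 (x + k) x
  have hbl : ∀ t ∈ Icc 0 h, ∀ x k,
      |jumpSemigroup ν t (Wx t) (x + k) - jumpSemigroup ν t (Wx t) x| ≤ M * |k| := by
    intro t ht x k
    have := abs_jumpSemigroup_le ν ht.1 (f := shiftOp k (Wx t) - Wx t) (M := M * |k|) (fun y => by
      rw [BoundedContinuousFunction.sub_apply, shiftOp_apply, hWx t ht, hWx t ht]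
      simpa using (hwb t ht).lip1 (y + k) y) x
    rwa [map_sub, BoundedContinuousFunction.sub_apply, jumpSemigroup_shiftOp] at this
  have hκt : ∀ t ∈ Icc 0 h, κ * t ≤ κ * h := fun t ht => mul_le_mul_of_nonneg_left ht.2 hκ0
  have hE : ∀ t ∈ Icc 0 h, ∀ x, |jumpSemigroup ν t (W t * Wx t) x -
      jumpSemigroup ν t (W t) x * jumpSemigroup ν t (Wx t) x| ≤ 10 * M * M * (κ * h) := by
    intro t ht x
    refine (abs_cov_le ν hκ ht.1 (F := M) (G := M) ?_ ?_ ?_ ?_ x).trans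
      (mul_le_mul_of_nonneg_left (hκt t ht) (by positivity))
    · rw [fW t ht]; exact (hwb t ht).b0
    · rw [fW t ht]; exact (hwb t ht).lip0
    · rw [fWx t ht]; exact (hwb t ht).b1
    · rw [fWx t ht]; exact (hwb t ht).lip1
  have hE' : ∀ t ∈ Icc 0 h, ∀ x k, |(jumpSemigroup ν t (W t * Wx t) (x + k) -
      jumpSemigroup ν t (W t) (x + k) * jumpSemigroup ν t (Wx t) (x + k)) -
      (jumpSemigroup ν t (W t * Wx t) x -
      jumpSemigroup ν t (W t) x * jumpSemigroup ν t (Wx t) x)| ≤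
      20 * M * M * (κ * h) * |k| := by
    intro t ht x k
    obtain ⟨w1, w2, w3⟩ := contDiff_three_hasDerivAt (hwb t ht).contDiff
    refine (abs_cov_sub_le ν hκ ht.1 (F := M) (G := M) ?_ ?_ ?_ ?_ ?_ ?_ x k).trans
      (mul_le_mul_of_nonneg_right (mul_le_mul_of_nonneg_left (hκt t ht) (by positivity))
        (abs_nonneg k))
    · rw [fW t ht]; exact (hwb t ht).b0
    · rw [fW t ht]; exact (hwb t ht).lip0
    · rw [fW t ht]; exact abs_second_sub_le w1 (hwb t ht).lip1
    · rw [fWx t ht]; exact (hwb t ht).b1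
    · rw [fWx t ht]; exact (hwb t ht).lip1
    · rw [fWx t ht]; exact abs_second_sub_le w2 (hwb t ht).lip2
  have hg : ∀ t ∈ Icc 0 h, ∀ x, |(-Lθ x t - ∫ y, (θ (x + y) t - θ x t) ∂ν) -
        (jumpSemigroup ν t (W t * Wx t) x -
          jumpSemigroup ν t (W t) x * jumpSemigroup ν t (Wx t) x)| ≤
        10 * M * M * (κ * h) + η := fun t ht x =>
    (abs_sub _ _).trans (by linarith [hE t ht x, hr t ht x])
  have hgl : ∀ t ∈ Icc 0 h, ∀ x k, |((-Lθ (x + k) t - ∫ y, (θ (x + k + y) t - θ (x + k) t) ∂ν) -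
        (jumpSemigroup ν t (W t * Wx t) (x + k) -
          jumpSemigroup ν t (W t) (x + k) * jumpSemigroup ν t (Wx t) (x + k))) -
        ((-Lθ x t - ∫ y, (θ (x + y) t - θ x t) ∂ν) -
        (jumpSemigroup ν t (W t * Wx t) x -
          jumpSemigroup ν t (W t) x * jumpSemigroup ν t (Wx t) x))| ≤
        (20 * M * M * (κ * h) + η) * |k| := by
    intro t ht x k
    rw [sub_sub_sub_comm]
    refine (abs_sub _ _).trans ?_
    linarith [hE' t ht x k, hr' t ht x k]
  have hG0 : 0 ≤ 10 * M * M * (κ * h) + η := by positivity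
  have hAt : ∀ t ∈ Icc 0 h, ∀ x, |θ x t - jumpSemigroup ν t (W t) x| ≤ A := by
    intro t ht x
    have u1 := hd.le hper hb (fun t ht x => (abs_le.1 (hg t ht x)).2) ht x hG0
    have u2 := hd.neg.le hper hb (fun t ht x => neg_le.1 (abs_le.1 (hg t ht x)).1) ht x hG0
    have u3 : Real.exp (M * t) * ((10 * M * M * (κ * h) + η) * t) ≤ A := by
      rw [hA]
      exact mul_le_mul (Real.exp_le_exp.2 (mul_le_mul_of_nonneg_left ht.2 hM))
        (mul_le_mul_of_nonneg_left ht.2 hG0) (mul_nonneg hG0 ht.1) (Real.exp_pos _).le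
    exact abs_le.2 ⟨by linarith, by linarith⟩
  refine ⟨fun x => hWV ▸ hAt h hhm x, fun x k hk => ?_⟩
  have u1 := hd.sub_le hper hb ha hbl hgl hAt hhm x hk
  have u2 := hd.neg.sub_le hper hb ha hbl (G := 20 * M * M * (κ * h) + η) (fun t ht x k => by
    rw [← neg_sub', abs_neg]; exact hgl t ht x k) (A := A)
    (fun t ht x => by rw [abs_neg]; exact hAt t ht x) hhm x hk
  rw [hWV] at u1 u2
  exact abs_le.2 ⟨by linarith, by linarith⟩

end

theorem integrable_of_even {f : ℝ → ℝ} (he : ∀ x, f (-x) = f x) (hf : IntegrableOn f (Ioi 0)) :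
    Integrable f := by
  rw [← integrableOn_univ, ← Iic_union_Ioi (a := (0 : ℝ))]
  refine IntegrableOn.union ?_ hf
  rw [integrableOn_Iic_iff_integrableOn_Iio]
  have := ((Measure.measurePreserving_neg (volume : Measure ℝ)).integrableOn_comp_preimage
    (Homeomorph.neg ℝ).measurableEmbedding (f := f) (s := Ioi 0)).2 hf
  have e : f ∘ Neg.neg = f := funext he
  rw [e] at this
  simpa using this

/-- The Lévy density weighted by `min 1 y²`. -/
def levyWeight (α y : ℝ) : ℝ := min 1 (y ^ 2) / |y| ^ (1 + 2 * α)

theorem levyWeight_nonneg (α y : ℝ) : 0 ≤ levyWeight α y :=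
  div_nonneg (le_min zero_le_one (sq_nonneg y)) (by positivity)

theorem integrable_levyWeight {α : ℝ} (h0 : 0 < α) (h1 : α < 1) : Integrable (levyWeight α) := by
  refine integrable_of_even (fun x => by simp [levyWeight]) ?_
  rw [← Ioo_union_Ici_eq_Ioi (zero_lt_one' ℝ)]
  refine IntegrableOn.union ?_ ?_
  · refine ((intervalIntegral.integrableOn_Ioo_rpow_iff (s := 1 - 2 * α) one_pos).2
      (by linarith)).congr_fun (fun y hy => ?_) measurableSet_Ioo
    have : y ^ 2 ≤ 1 := by nlinarith [hy.1, hy.2]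
    rw [levyWeight, min_eq_right this, abs_of_pos hy.1, ← Real.rpow_natCast y 2,
      ← Real.rpow_sub hy.1]
    norm_num
    ring_nf
  · rw [integrableOn_Ici_iff_integrableOn_Ioi]
    refine (integrableOn_Ioi_rpow_of_lt (a := -(1 + 2 * α)) (by linarith) one_pos).congr_fun
      (fun y hy => ?_) measurableSet_Ioi
    have hy1 : (1 : ℝ) < y := hy
    have hy0 : 0 < y := by linarith
    have : 1 ≤ y ^ 2 := by nlinarith
    change y ^ (-(1 + 2 * α)) = _
    rw [levyWeight, min_eq_left this, abs_of_pos hy0, Real.rpow_neg hy0.le, one_div]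

theorem measurableSet_lt_abs (ε : ℝ) : MeasurableSet {y : ℝ | ε < |y|} :=
  measurableSet_lt measurable_const (by fun_prop)

theorem tendsto_setIntegral_lt_abs {g : ℝ → ℝ} (hg : Integrable g) :
    Tendsto (fun ε => ∫ y in {y : ℝ | ε < |y|}, g y) (𝓝[>] 0) (𝓝 (∫ y, g y)) := by
  have : ∀ ε : ℝ, ∫ y in {y : ℝ | ε < |y|}, g y = ∫ y, ({y : ℝ | ε < |y|}.indicator g) y :=
    fun ε => (integral_indicator (measurableSet_lt_abs ε)).symm
  simp only [this]
  refine tendsto_integral_filter_of_dominated_convergence (fun y => ‖g y‖)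
    (Eventually.of_forall fun ε => hg.aestronglyMeasurable.indicator (measurableSet_lt_abs ε))
    (Eventually.of_forall fun ε => Eventually.of_forall fun y => norm_indicator_le_norm_self _ _)
    hg.norm ?_
  filter_upwards [compl_mem_ae_iff.2 (measure_singleton (0 : ℝ))] with y hy
  refine tendsto_const_nhds.congr' ?_
  filter_upwards [mem_nhdsWithin_of_mem_nhds (Iio_mem_nhds (abs_pos.2 hy))] with ε hε
  rw [indicator_of_mem]
  exact hε

/-- The tail of the Lévy weight near the origin. -/
def levyTail (α ε : ℝ) : ℝ := ∫ y in {y : ℝ | ε < |y|}ᶜ, levyWeight α y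

theorem tendsto_levyTail {α : ℝ} (h0 : 0 < α) (h1 : α < 1) :
    Tendsto (levyTail α) (𝓝[>] 0) (𝓝 0) := by
  have h := (tendsto_setIntegral_lt_abs (integrable_levyWeight h0 h1)).const_sub
    (∫ y, levyWeight α y)
  rw [sub_self] at h
  refine h.congr fun ε => ?_
  rw [levyTail, setIntegral_compl (measurableSet_lt_abs ε) (integrable_levyWeight h0 h1)]

theorem abs_second_diff_le {f f' : ℝ → ℝ} {B : ℝ} (hf : ∀ x, HasDerivAt f (f' x) x)
    (hb : ∀ x, |f x| ≤ B) (hlip : ∀ x y, |f' x - f' y| ≤ B * |x - y|) (x y : ℝ) :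
    |2 * f x - f (x + y) - f (x - y)| ≤ 4 * B * min 1 (y ^ 2) := by
  have hB : 0 ≤ B := (abs_nonneg _).trans (hb 0)
  rw [mul_min_of_nonneg _ _ (by positivity)]
  refine le_min ?_ ?_
  · have := abs_le.1 (hb x); have := abs_le.1 (hb (x + y)); have := abs_le.1 (hb (x - y))
    exact abs_le.2 ⟨by linarith, by linarith⟩
  · have h1 := abs_le.1 (abs_taylor_le hf hlip x y)
    have h2 := abs_le.1 (abs_taylor_le hf hlip x (-y))
    rw [← sub_eq_add_neg, neg_sq] at h2
    have : 0 ≤ B * y ^ 2 := by positivity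
    exact abs_le.2 ⟨by linarith, by linarith⟩

theorem integrable_div_rpow {α ε : ℝ} (h0 : 0 < α) (h1 : α < 1) (hε : 0 < ε) :
    IntegrableOn (fun y : ℝ => 1 / |y| ^ (1 + 2 * α)) {y : ℝ | ε < |y|} := by
  have hm : 0 < min 1 (ε ^ 2) := lt_min one_pos (by positivity)
  refine Integrable.mono' (((integrable_levyWeight h0 h1).const_mul
    (min 1 (ε ^ 2))⁻¹).integrableOn) (Measurable.aestronglyMeasurable (by fun_prop)) ?_
  filter_upwards [ae_restrict_mem (measurableSet_lt_abs ε)] with y hy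
  have hy : ε < |y| := hy
  rw [Real.norm_eq_abs, abs_of_nonneg (by positivity), levyWeight, ← mul_div_assoc]
  refine div_le_div_of_nonneg_right ?_ (by positivity)
  rw [← div_eq_inv_mul, le_div_iff₀ hm, one_mul]
  refine min_le_min le_rfl ?_
  rw [← sq_abs y]
  exact pow_le_pow_left₀ hε.le hy.le 2

theorem integrableOn_mul_div_rpow {α ε : ℝ} (h0 : 0 < α) (h1 : α < 1) (hε : 0 < ε) {u : ℝ → ℝ}
    (hu : Continuous u) {B : ℝ} (hB : ∀ y, |u y| ≤ B) :
    IntegrableOn (fun y : ℝ => u y / |y| ^ (1 + 2 * α)) {y : ℝ | ε < |y|} := by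
  refine Integrable.mono' ((integrable_div_rpow h0 h1 hε).const_mul B)
    (Measurable.aestronglyMeasurable (hu.measurable.div (by fun_prop))) ?_
  refine Eventually.of_forall fun y => ?_
  rw [Real.norm_eq_abs, abs_div, abs_of_nonneg (a := |y| ^ (1 + 2 * α)) (by positivity),
    mul_one_div]
  exact div_le_div_of_nonneg_right (hB y) (by positivity)

theorem setIntegral_lt_abs_neg (ε : ℝ) (u : ℝ → ℝ) :
    ∫ y in {y : ℝ | ε < |y|}, u (-y) = ∫ y in {y : ℝ | ε < |y|}, u y := by
  rw [← integral_indicator (measurableSet_lt_abs ε), ← integral_indicator (measurableSet_lt_abs ε),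
    ← integral_neg_eq_self ({y : ℝ | ε < |y|}.indicator u)]
  congr 1
  ext y
  simp [indicator, abs_neg]

theorem abs_pv_sub_le {α ε : ℝ} (h0 : 0 < α) (h1 : α < 1) (hε : 0 < ε) {f f' : ℝ → ℝ} {B : ℝ}
    (hf : ∀ x, HasDerivAt f (f' x) x) (hb : ∀ x, |f x| ≤ B)
    (hlip : ∀ x y, |f' x - f' y| ≤ B * |x - y|) {x l : ℝ}
    (hl : Tendsto (fun ε => ∫ y in {y : ℝ | ε < |y|}, (f x - f (x + y)) / |y| ^ (1 + 2 * α))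
      (𝓝[>] 0) (𝓝 l)) :
    |l - ∫ y in {y : ℝ | ε < |y|}, (f x - f (x + y)) / |y| ^ (1 + 2 * α)| ≤
      2 * B * levyTail α ε := by
  have fc : Continuous f := continuous_iff_continuousAt.2 fun x => (hf x).continuousAt
  set g : ℝ → ℝ := fun y => (2 * f x - f (x + y) - f (x - y)) / |y| ^ (1 + 2 * α) with hg
  have gle : ∀ y, |g y| ≤ 4 * B * levyWeight α y := fun y => by
    rw [hg, levyWeight]
    simp only
    rw [abs_div, abs_of_nonneg (a := |y| ^ (1 + 2 * α)) (by positivity), ← mul_div_assoc]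
    exact div_le_div_of_nonneg_right (abs_second_diff_le hf hb hlip x y) (by positivity)
  have gi : Integrable g := Integrable.mono' ((integrable_levyWeight h0 h1).const_mul (4 * B))
    (Measurable.aestronglyMeasurable (by fun_prop)) (Eventually.of_forall gle)
  have hD : ∀ ε > 0, ∫ y in {y : ℝ | ε < |y|}, (f x - f (x + y)) / |y| ^ (1 + 2 * α) =
      (∫ y in {y : ℝ | ε < |y|}, g y) / 2 := by
    intro ε hε
    have hi : IntegrableOn (fun y => (f x - f (x + y)) / |y| ^ (1 + 2 * α)) {y : ℝ | ε < |y|} :=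
      integrableOn_mul_div_rpow h0 h1 hε (by fun_prop) (B := 2 * B) fun y =>
        (abs_sub _ _).trans (by linarith [hb x, hb (x + y)])
    have hi' : IntegrableOn (fun y => (f x - f (x + -y)) / |y| ^ (1 + 2 * α)) {y : ℝ | ε < |y|} :=
      integrableOn_mul_div_rpow h0 h1 hε (by fun_prop) (B := 2 * B) fun y =>
        (abs_sub _ _).trans (by linarith [hb x, hb (x + -y)])
    have h3 := setIntegral_lt_abs_neg ε fun y => (f x - f (x + y)) / |y| ^ (1 + 2 * α)
    simp only [abs_neg] at h3
    have h4 : ∫ y in {y : ℝ | ε < |y|}, g y =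
        (∫ y in {y : ℝ | ε < |y|}, (f x - f (x + y)) / |y| ^ (1 + 2 * α)) +
        ∫ y in {y : ℝ | ε < |y|}, (f x - f (x + -y)) / |y| ^ (1 + 2 * α) := by
      rw [← integral_add hi hi']
      congr 1
      ext y
      rw [hg, ← add_div, ← sub_eq_add_neg]
      ring_nf
    rw [h4, h3]
    ring
  have hl' : l = (∫ y, g y) / 2 := by
    refine tendsto_nhds_unique hl (((tendsto_setIntegral_lt_abs gi).div_const 2).congr' ?_)
    filter_upwards [self_mem_nhdsWithin] with ε hε
    exact (hD ε hε).symm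
  rw [hD ε hε, hl', ← sub_div, ← setIntegral_compl (measurableSet_lt_abs ε) gi, abs_div, abs_two,
    div_le_iff₀ two_pos]
  have : |∫ y in {y : ℝ | ε < |y|}ᶜ, g y| ≤ ∫ y in {y : ℝ | ε < |y|}ᶜ, 4 * B * levyWeight α y :=
    norm_integral_le_of_norm_le (f := g)
      ((integrable_levyWeight h0 h1).const_mul (4 * B)).integrableOn (Eventually.of_forall gle)
  rw [integral_const_mul] at this
  rw [levyTail]
  linarith

/-- The truncated Lévy measure `1_{ε < |y|} |y|^{-1-2α} dy`. -/
def truncLevy (α ε : ℝ) : Measure ℝ :=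
  (volume.restrict {y : ℝ | ε < |y|}).withDensity fun y => ENNReal.ofReal (1 / |y| ^ (1 + 2 * α))

theorem isFiniteMeasure_truncLevy {α ε : ℝ} (h0 : 0 < α) (h1 : α < 1) (hε : 0 < ε) :
    IsFiniteMeasure (truncLevy α ε) :=
  isFiniteMeasure_withDensity_ofReal (integrable_div_rpow h0 h1 hε).hasFiniteIntegral

theorem integral_truncLevy (α ε : ℝ) (u : ℝ → ℝ) :
    ∫ y, u y ∂(truncLevy α ε) = ∫ y in {y : ℝ | ε < |y|}, u y / |y| ^ (1 + 2 * α) := by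
  rw [truncLevy, integral_withDensity_eq_integral_toReal_smul (by fun_prop)
    (Eventually.of_forall fun _ => ENNReal.ofReal_lt_top)]
  congr 1
  ext y
  rw [ENNReal.toReal_ofReal (by positivity), smul_eq_mul]
  ring

instance isNegInvariant_truncLevy (α ε : ℝ) : (truncLevy α ε).IsNegInvariant where
  neg_eq_self := by
    ext s hs
    rw [Measure.neg_apply, truncLevy, withDensity_apply _ hs.neg, withDensity_apply _ hs,
      Measure.restrict_restrict hs.neg, Measure.restrict_restrict hs,
      ← lintegral_indicator (hs.neg.inter (measurableSet_lt_abs ε)),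
      ← lintegral_indicator (hs.inter (measurableSet_lt_abs ε)), ← lintegral_neg_eq_self]
    congr 1
    ext y
    have hmem : -y ∈ -s ∩ {y : ℝ | ε < |y|} ↔ y ∈ s ∩ {y : ℝ | ε < |y|} := by simp
    by_cases h : y ∈ s ∩ {y : ℝ | ε < |y|}
    · rw [indicator_of_mem (hmem.2 h), indicator_of_mem h, abs_neg]
    · rw [indicator_of_notMem (mt hmem.1 h), indicator_of_notMem h]

theorem integral_min_truncLevy_le {α ε : ℝ} (h0 : 0 < α) (h1 : α < 1) :
    ∫ y, min 1 (y ^ 2) ∂(truncLevy α ε) ≤ ∫ y, levyWeight α y := by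
  rw [integral_truncLevy]
  exact setIntegral_le_integral (integrable_levyWeight h0 h1)
    (Eventually.of_forall (levyWeight_nonneg α))

theorem integral_gaussian_cos {δ : ℝ} (hδ : 0 < δ) (z : ℝ) :
    ∫ s : ℝ, Real.exp (-δ * s ^ 2) * Real.cos (z * s) =
      Real.sqrt (Real.pi / δ) * Real.exp (-z ^ 2 / (4 * δ)) := by
  have h := fourierIntegral_gaussian (b := (δ : ℂ)) (by simpa using hδ) (z : ℂ)
  have e : ∀ s : ℝ, Complex.exp (Complex.I * z * s) * Complex.exp (-δ * (s : ℂ) ^ 2) =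
      ((Real.exp (-δ * s ^ 2) : ℝ) : ℂ) * Complex.exp ((z * s : ℝ) * Complex.I) := fun s => by
    push_cast
    rw [mul_comm]
    ring_nf
  have hi : Integrable fun s : ℝ =>
      ((Real.exp (-δ * s ^ 2) : ℝ) : ℂ) * Complex.exp ((z * s : ℝ) * Complex.I) := by
    refine Integrable.mono' (integrable_exp_neg_mul_sq hδ) (by fun_prop)
      (Eventually.of_forall fun s => ?_)
    rw [norm_mul, Complex.norm_exp_ofReal_mul_I, mul_one, Complex.norm_real, Real.norm_eq_abs,
      abs_of_pos (Real.exp_pos _)]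
  simp only [e] at h
  have h2 := congrArg Complex.re h
  have h3 := integral_re hi
  simp only [RCLike.re_eq_complex_re] at h3
  rw [← h3] at h2
  simp only [Complex.re_ofReal_mul, Complex.exp_ofReal_mul_I_re] at h2
  rw [h2]
  have : ((Real.pi : ℂ) / δ) ^ (1 / 2 : ℂ) * Complex.exp (-(z : ℂ) ^ 2 / (4 * δ)) =
      ((Real.sqrt (Real.pi / δ) * Real.exp (-z ^ 2 / (4 * δ)) : ℝ) : ℂ) := by
    rw [Real.sqrt_eq_rpow, Complex.ofReal_mul, Complex.ofReal_cpow (by positivity)]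
    push_cast
    rfl
  rw [this, Complex.ofReal_re]

theorem integral_sin_eq_zero (ν : Measure ℝ) [ν.IsNegInvariant] (s : ℝ) :
    ∫ y, Real.sin (s * y) ∂ν = 0 := by
  have h := integral_neg_eq_self (fun y => Real.sin (s * y)) ν
  simp only [mul_neg, Real.sin_neg, integral_neg] at h
  linarith

section

variable (ν : Measure ℝ) [IsFiniteMeasure ν]

/-- The cosine transform of a finite measure. -/
def cosTransform (ν : Measure ℝ) (s : ℝ) : ℝ := ∫ y, Real.cos (s * y) ∂ν

theorem continuous_cosTransform : Continuous (cosTransform ν) :=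
  continuous_of_dominated (bound := fun _ => 1)
    (fun s => (by fun_prop : Continuous fun y => Real.cos (s * y)).aestronglyMeasurable)
    (fun s => Eventually.of_forall fun y => Real.abs_cos_le_one _) (integrable_const _)
    (Eventually.of_forall fun y => by fun_prop)

theorem abs_cosTransform_le (s : ℝ) : |cosTransform ν s| ≤ ν.real univ := by
  have := norm_integral_le_of_norm_le_const (μ := ν) (f := fun y => Real.cos (s * y)) (C := 1)
    (Eventually.of_forall fun y => Real.abs_cos_le_one _)
  rwa [one_mul] at this

theorem integrable_cos (s c : ℝ) : Integrable (fun y => Real.cos (s * y + c)) ν :=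
  Integrable.of_bound (by fun_prop) 1 (Eventually.of_forall fun y => Real.abs_cos_le_one _)

theorem integrable_sin (s : ℝ) : Integrable (fun y => Real.sin (s * y)) ν :=
  Integrable.of_bound (by fun_prop) 1 (Eventually.of_forall fun y => Real.abs_sin_le_one _)

variable [ν.IsNegInvariant]

theorem integral_cos_add (s c : ℝ) :
    ∫ y, Real.cos (s * y + c) ∂ν = Real.cos c * cosTransform ν s := by
  have h1 : ∀ y, Real.cos (s * y + c) =
      Real.cos (s * y) * Real.cos c - Real.sin (s * y) * Real.sin c := fun y => Real.cos_add _ _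
  simp only [h1]
  rw [integral_sub ((by simpa using integrable_cos ν s 0 : Integrable _ ν).mul_const _)
    ((integrable_sin ν s).mul_const _), integral_mul_const, integral_mul_const,
    integral_sin_eq_zero, cosTransform]
  ring

theorem gaussian_cosTransform_pow_nonneg {δ : ℝ} (hδ : 0 < δ) (k : ℕ) (z : ℝ) :
    0 ≤ ∫ s, Real.exp (-δ * s ^ 2) * cosTransform ν s ^ k * Real.cos (z * s) := by
  induction k generalizing z with
  | zero =>
    simp only [pow_zero, mul_one]
    rw [integral_gaussian_cos hδ]
    positivity
  | succ k ih =>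
    have hc := continuous_cosTransform ν
    have key : ∫ s, Real.exp (-δ * s ^ 2) * cosTransform ν s ^ (k + 1) * Real.cos (z * s) =
        ∫ y, (∫ s, Real.exp (-δ * s ^ 2) * cosTransform ν s ^ k * Real.cos ((z + y) * s)) ∂ν := by
      rw [integral_integral_swap]
      · congr 1
        ext s
        rw [integral_const_mul]
        have : ∀ y, Real.cos ((z + y) * s) = Real.cos (s * y + z * s) := fun y => by ring_nf
        simp only [this]
        rw [integral_cos_add]
        ring
      · have hi : Integrable (fun p : ℝ × ℝ =>
            (ν.real univ) ^ k * Real.exp (-δ * p.2 ^ 2)) (ν.prod volume) :=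
          (Integrable.mul_prod (integrable_const ((ν.real univ) ^ k))
            (integrable_exp_neg_mul_sq hδ))
        refine hi.mono' (Continuous.aestronglyMeasurable (by
          simp only [Function.uncurry_def]; fun_prop)) (Eventually.of_forall fun p => ?_)
        simp only [Function.uncurry_def]
        rw [Real.norm_eq_abs, abs_mul, abs_mul, abs_pow, abs_of_pos (Real.exp_pos _)]
        have h1 := pow_le_pow_left₀ (abs_nonneg _) (abs_cosTransform_le ν p.2) k
        have h2 := Real.abs_cos_le_one ((z + p.1) * p.2)
        have h3 := (Real.exp_pos (-δ * p.2 ^ 2)).le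
        calc Real.exp (-δ * p.2 ^ 2) * |cosTransform ν p.2| ^ k * |Real.cos ((z + p.1) * p.2)|
            ≤ Real.exp (-δ * p.2 ^ 2) * (ν.real univ) ^ k * 1 :=
              mul_le_mul (mul_le_mul_of_nonneg_left h1 h3) h2 (abs_nonneg _) (by positivity)
          _ = _ := by ring
    rw [key]
    exact integral_nonneg fun y => ih (z + y)

theorem gaussian_exp_cosTransform_nonneg {δ : ℝ} (hδ : 0 < δ) {t : ℝ} (ht : 0 ≤ t) (z : ℝ) :
    0 ≤ ∫ s, Real.exp (-δ * s ^ 2) * Real.exp (t * cosTransform ν s) * Real.cos (z * s) := by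
  have hc := continuous_cosTransform ν
  have hs : ∀ u : ℝ, HasSum (fun k : ℕ => (t * u) ^ k / k.factorial) (Real.exp (t * u)) := fun u => by
    rw [Real.exp_eq_exp_ℝ]
    exact NormedSpace.exp_series_hasSum_exp' (𝕂 := ℝ) (t * u) |>.congr_fun fun k => by
      rw [smul_eq_mul]; ring
  have h := hasSum_integral_of_dominated_convergence (μ := (volume : Measure ℝ))
    (F := fun (k : ℕ) s => Real.exp (-δ * s ^ 2) * ((t * cosTransform ν s) ^ k / k.factorial) *
      Real.cos (z * s))
    (f := fun s => Real.exp (-δ * s ^ 2) * Real.exp (t * cosTransform ν s) * Real.cos (z * s))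
    (fun k s => Real.exp (-δ * s ^ 2) * ((t * ν.real univ) ^ k / k.factorial))
    (fun k => Continuous.aestronglyMeasurable (by fun_prop))
    (fun k => Eventually.of_forall fun s => by
      rw [Real.norm_eq_abs, abs_mul, abs_mul, abs_of_pos (Real.exp_pos _), abs_div, abs_pow,
        abs_mul, abs_of_nonneg ht, Nat.abs_cast]
      have h1 := pow_le_pow_left₀ (mul_nonneg ht (abs_nonneg _))
        (mul_le_mul_of_nonneg_left (abs_cosTransform_le ν s) ht) k
      have h2 := Real.abs_cos_le_one (z * s)
      calc _ ≤ Real.exp (-δ * s ^ 2) * ((t * ν.real univ) ^ k / k.factorial) * 1 := by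
            refine mul_le_mul (mul_le_mul_of_nonneg_left ?_ (Real.exp_pos _).le) h2
              (abs_nonneg _) (by positivity)
            exact div_le_div_of_nonneg_right h1 (by positivity)
        _ = _ := mul_one _)
    (Eventually.of_forall fun s => (hs _).summable.mul_left _)
    (by
      simp only [tsum_mul_left]
      exact (integrable_exp_neg_mul_sq hδ).mul_const _)
    (Eventually.of_forall fun s => ((hs _).mul_left _).mul_right _)
  refine h.nonneg fun k => ?_
  have e : ∀ s, Real.exp (-δ * s ^ 2) * ((t * cosTransform ν s) ^ k / k.factorial) *
      Real.cos (z * s) = t ^ k / k.factorial *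
        (Real.exp (-δ * s ^ 2) * cosTransform ν s ^ k * Real.cos (z * s)) := fun s => by
    rw [mul_pow]; ring
  simp only [e]
  rw [integral_const_mul]
  exact mul_nonneg (by positivity) (gaussian_cosTransform_pow_nonneg ν hδ k z)

end

/-- Cosine transforms of limits of infinitely divisible symbols are nonnegative. -/
theorem integral_exp_neg_mul_cos_nonneg (μ : ℕ → Measure ℝ) [∀ n, IsFiniteMeasure (μ n)]
    [∀ n, (μ n).IsNegInvariant] {ψ : ℝ → ℝ}
    (hψ : ∀ s, Tendsto (fun n => ∫ y, (1 - Real.cos (s * y)) ∂(μ n)) atTop (𝓝 (ψ s)))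
    (hψc : Continuous ψ) {t : ℝ} (ht : 0 ≤ t) (hi : Integrable fun s => Real.exp (-(t * ψ s)))
    (z : ℝ) : 0 ≤ ∫ s, Real.exp (-(t * ψ s)) * Real.cos (z * s) := by
  have hψn : ∀ n s, ∫ y, (1 - Real.cos (s * y)) ∂(μ n) =
      (μ n).real univ - cosTransform (μ n) s := fun n s => by
    rw [integral_sub (integrable_const _) (by simpa using integrable_cos (μ n) s 0),
      integral_const, smul_eq_mul, mul_one, cosTransform]
  have hnn : ∀ n s, 0 ≤ ∫ y, (1 - Real.cos (s * y)) ∂(μ n) := fun n s =>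
    integral_nonneg fun y => by simpa using Real.cos_le_one (s * y)
  have step : ∀ δ > 0,
      0 ≤ ∫ s, Real.exp (-δ * s ^ 2) * Real.exp (-(t * ψ s)) * Real.cos (z * s) := by
    intro δ hδ
    have hlim : Tendsto (fun n => ∫ s, Real.exp (-δ * s ^ 2) *
        Real.exp (-(t * ∫ y, (1 - Real.cos (s * y)) ∂(μ n))) * Real.cos (z * s)) atTop
        (𝓝 (∫ s, Real.exp (-δ * s ^ 2) * Real.exp (-(t * ψ s)) * Real.cos (z * s))) := by
      refine tendsto_integral_of_dominated_convergence (fun s => Real.exp (-δ * s ^ 2))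
        (fun n => ?_) (integrable_exp_neg_mul_sq hδ) (fun n => Eventually.of_forall fun s => ?_)
        (Eventually.of_forall fun s => ?_)
      · simp only [hψn]
        have := continuous_cosTransform (μ n)
        exact Continuous.aestronglyMeasurable (by fun_prop)
      · rw [Real.norm_eq_abs, abs_mul, abs_mul, abs_of_pos (Real.exp_pos _),
          abs_of_pos (Real.exp_pos _)]
        have h1 : Real.exp (-(t * ∫ y, (1 - Real.cos (s * y)) ∂(μ n))) ≤ 1 :=
          Real.exp_le_one_iff.2 (neg_nonpos.2 (mul_nonneg ht (hnn n s)))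
        have h2 := Real.abs_cos_le_one (z * s)
        calc _ ≤ Real.exp (-δ * s ^ 2) * 1 * 1 :=
              mul_le_mul (mul_le_mul_of_nonneg_left h1 (Real.exp_pos _).le) h2 (abs_nonneg _)
                (by positivity)
          _ = _ := by ring
      · have h1 : Tendsto (fun n => Real.exp (-(t * ∫ y, (1 - Real.cos (s * y)) ∂(μ n)))) atTop
            (𝓝 (Real.exp (-(t * ψ s)))) :=
          (Real.continuous_exp.tendsto _).comp ((hψ s).const_mul t).neg
        exact (h1.const_mul _).mul_const _
    refine ge_of_tendsto' hlim fun n => ?_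
    have e : ∀ s, Real.exp (-δ * s ^ 2) *
        Real.exp (-(t * ∫ y, (1 - Real.cos (s * y)) ∂(μ n))) * Real.cos (z * s) =
        Real.exp (-(t * (μ n).real univ)) * (Real.exp (-δ * s ^ 2) *
          Real.exp (t * cosTransform (μ n) s) * Real.cos (z * s)) := fun s => by
      rw [hψn, show -(t * ((μ n).real univ - cosTransform (μ n) s)) =
        -(t * (μ n).real univ) + t * cosTransform (μ n) s by ring, Real.exp_add]
      ring
    simp only [e]
    rw [integral_const_mul]
    exact mul_nonneg (Real.exp_pos _).le (gaussian_exp_cosTransform_nonneg (μ n) hδ ht z)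
  have hlim : Tendsto (fun δ => ∫ s, Real.exp (-δ * s ^ 2) * Real.exp (-(t * ψ s)) *
      Real.cos (z * s)) (𝓝[>] 0) (𝓝 (∫ s, Real.exp (-(t * ψ s)) * Real.cos (z * s))) := by
    refine tendsto_integral_filter_of_dominated_convergence (fun s => Real.exp (-(t * ψ s)))
      (Eventually.of_forall fun δ => Continuous.aestronglyMeasurable (by fun_prop)) ?_ hi
      (Eventually.of_forall fun s => ?_)
    · filter_upwards [self_mem_nhdsWithin] with δ hδ
      have hδ : 0 < δ := hδ
      refine Eventually.of_forall fun s => ?_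
      rw [Real.norm_eq_abs, abs_mul, abs_mul, abs_of_pos (Real.exp_pos _),
        abs_of_pos (Real.exp_pos _)]
      have h1 : Real.exp (-δ * s ^ 2) ≤ 1 := Real.exp_le_one_iff.2 (by nlinarith [sq_nonneg s])
      have h2 := Real.abs_cos_le_one (z * s)
      calc _ ≤ 1 * Real.exp (-(t * ψ s)) * 1 :=
            mul_le_mul (mul_le_mul_of_nonneg_right h1 (Real.exp_pos _).le) h2 (abs_nonneg _)
              (by positivity)
        _ = _ := by ring
    · have hc : Continuous fun δ : ℝ => Real.exp (-δ * s ^ 2) * Real.exp (-(t * ψ s)) *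
          Real.cos (z * s) := by fun_prop
      have := hc.tendsto 0
      simp only [neg_zero, zero_mul, Real.exp_zero, one_mul] at this
      exact this.mono_left nhdsWithin_le_nhds
  refine ge_of_tendsto hlim ?_
  filter_upwards [self_mem_nhdsWithin] with δ hδ
  exact step δ hδ

theorem integral_even_mul_cexp {F : ℝ → ℝ} (hF : Integrable F) (he : ∀ x, F (-x) = F x) (a : ℝ) :
    ∫ v : ℝ, Complex.exp ((a * v : ℝ) * Complex.I) * (F v : ℂ) =
      ((∫ v, F v * Real.cos (a * v) : ℝ) : ℂ) := by
  have hc : Integrable fun v => F v * Real.cos (a * v) :=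
    hF.mono (hF.aestronglyMeasurable.mul (by fun_prop)) (Eventually.of_forall fun v => by
      rw [norm_mul]
      exact mul_le_of_le_one_right (norm_nonneg _) (Real.abs_cos_le_one _))
  have hs : Integrable fun v => F v * Real.sin (a * v) :=
    hF.mono (hF.aestronglyMeasurable.mul (by fun_prop)) (Eventually.of_forall fun v => by
      rw [norm_mul]
      exact mul_le_of_le_one_right (norm_nonneg _) (Real.abs_sin_le_one _))
  have h0 : ∫ v, F v * Real.sin (a * v) = 0 := by
    have h := integral_neg_eq_self (fun v => F v * Real.sin (a * v)) volume
    simp only [he, mul_neg, Real.sin_neg, integral_neg] at h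
    linarith
  have e : ∀ v : ℝ, Complex.exp ((a * v : ℝ) * Complex.I) * (F v : ℂ) =
      ((F v * Real.cos (a * v) : ℝ) : ℂ) + ((F v * Real.sin (a * v) : ℝ) : ℂ) * Complex.I :=
    fun v => by
      rw [Complex.exp_mul_I, ← Complex.ofReal_cos, ← Complex.ofReal_sin]
      push_cast
      ring
  simp only [e]
  rw [integral_add hc.ofReal (hs.ofReal.mul_const _), integral_mul_const, integral_complex_ofReal,
    integral_complex_ofReal, h0]
  simp

theorem continuous_cos_integral {F : ℝ → ℝ} (hF : Integrable F) :
    Continuous fun x => ∫ s, F s * Real.cos (x * s) :=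
  continuous_of_dominated (bound := fun s => ‖F s‖)
    (fun x => hF.aestronglyMeasurable.mul (by fun_prop))
    (fun x => Eventually.of_forall fun s => by
      rw [norm_mul]
      exact mul_le_of_le_one_right (norm_nonneg _) (Real.abs_cos_le_one _)) hF.norm
    (Eventually.of_forall fun s => by fun_prop)

theorem integrable_cos_integral {F : ℝ → ℝ} (hF : Integrable F)
    (h1 : ∀ s, F s ≤ 1) (hK : ∀ x, 0 ≤ ∫ s, F s * Real.cos (x * s)) :
    Integrable fun x => ∫ s, F s * Real.cos (x * s) := by
  set K : ℝ → ℝ := fun x => ∫ s, F s * Real.cos (x * s) with hKdef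
  have Kc : Continuous K := continuous_cos_integral hF
  have Kb : ∀ x, |K x| ≤ ∫ s, ‖F s‖ := fun x =>
    norm_integral_le_of_norm_le (f := fun s => F s * Real.cos (x * s)) hF.norm
      (Eventually.of_forall fun s => by
      rw [norm_mul]
      exact mul_le_of_le_one_right (norm_nonneg _) (Real.abs_cos_le_one _))
  have gi : ∀ δ > 0, Integrable fun x => K x * Real.exp (-δ * x ^ 2) := fun δ hδ =>
    (integrable_exp_neg_mul_sq hδ).bdd_mul Kc.aestronglyMeasurable (Eventually.of_forall Kb)
  have gle : ∀ δ > 0, ∫ x, K x * Real.exp (-δ * x ^ 2) ≤ 2 * Real.pi := by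
    intro δ hδ
    have e1 : ∫ x, K x * Real.exp (-δ * x ^ 2) =
        ∫ s, ∫ x, F s * Real.cos (x * s) * Real.exp (-δ * x ^ 2) := by
      rw [← integral_integral_swap]
      · congr 1
        ext x
        rw [hKdef, ← integral_mul_const]
      · have hi : Integrable (fun p : ℝ × ℝ => Real.exp (-δ * p.1 ^ 2) * F p.2)
            ((volume : Measure ℝ).prod volume) :=
          Integrable.mul_prod (integrable_exp_neg_mul_sq hδ) hF
        have hi2 : Integrable (fun p : ℝ × ℝ => Real.cos (p.1 * p.2) *
            (Real.exp (-δ * p.1 ^ 2) * F p.2)) ((volume : Measure ℝ).prod volume) :=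
          hi.bdd_mul (c := 1) (Continuous.aestronglyMeasurable (by fun_prop))
            (Eventually.of_forall fun p => Real.abs_cos_le_one _)
        refine hi2.congr (Eventually.of_forall fun p => ?_)
        simp only [Function.uncurry_def]
        ring
    have e2 : ∀ s, ∫ x, F s * Real.cos (x * s) * Real.exp (-δ * x ^ 2) =
        F s * (Real.sqrt (Real.pi / δ) * Real.exp (-s ^ 2 / (4 * δ))) := fun s => by
      rw [← integral_gaussian_cos hδ, ← integral_const_mul]
      congr 1
      ext x
      rw [mul_comm x s]
      ring
    rw [e1]
    simp only [e2]
    have hδ' : 0 < 1 / (4 * δ) := by positivity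
    have e3 : ∀ s : ℝ, -s ^ 2 / (4 * δ) = -(1 / (4 * δ)) * s ^ 2 := fun s => by ring
    simp only [e3]
    have gi2 := (integrable_exp_neg_mul_sq hδ').const_mul (Real.sqrt (Real.pi / δ))
    calc ∫ s, F s * (Real.sqrt (Real.pi / δ) * Real.exp (-(1 / (4 * δ)) * s ^ 2))
        ≤ ∫ s, Real.sqrt (Real.pi / δ) * Real.exp (-(1 / (4 * δ)) * s ^ 2) := by
          refine integral_mono (hF.mul_bdd (c := Real.sqrt (Real.pi / δ))
            (Continuous.aestronglyMeasurable (by fun_prop))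
            (Eventually.of_forall fun s => ?_)) gi2 fun s => ?_
          · rw [Real.norm_eq_abs, abs_of_nonneg (by positivity)]
            refine mul_le_of_le_one_right (Real.sqrt_nonneg _) (Real.exp_le_one_iff.2 ?_)
            rw [neg_mul]
            exact neg_nonpos.2 (mul_nonneg hδ'.le (sq_nonneg s))
          · exact mul_le_of_le_one_left (by positivity) (h1 s)
      _ = 2 * Real.pi := by
          rw [integral_const_mul, integral_gaussian, ← Real.sqrt_mul (by positivity),
            show Real.pi / δ * (Real.pi / (1 / (4 * δ))) = (2 * Real.pi) ^ 2 by field_simp; ring,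
            Real.sqrt_sq (by positivity)]
  refine ⟨Kc.aestronglyMeasurable, ?_⟩
  rw [hasFiniteIntegral_iff_ofReal (Eventually.of_forall hK)]
  have hlim := lintegral_tendsto_of_tendsto_of_monotone (μ := (volume : Measure ℝ))
    (f := fun n x => ENNReal.ofReal (K x * Real.exp (-(1 / ((n : ℝ) + 1)) * x ^ 2)))
    (F := fun x => ENNReal.ofReal (K x))
    (fun n => (ENNReal.continuous_ofReal.comp (by fun_prop)).measurable.aemeasurable)
    (Eventually.of_forall fun x n m hnm => by
      refine ENNReal.ofReal_le_ofReal (mul_le_mul_of_nonneg_left (Real.exp_le_exp.2 ?_) (hK x))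
      have : 1 / ((m : ℝ) + 1) ≤ 1 / ((n : ℝ) + 1) := by
        apply one_div_le_one_div_of_le (by positivity)
        have : (n : ℝ) ≤ m := by exact_mod_cast hnm
        linarith
      nlinarith [sq_nonneg x])
    (Eventually.of_forall fun x => by
      refine (ENNReal.continuous_ofReal.tendsto _).comp ?_
      have hc : Continuous fun d : ℝ => K x * Real.exp (-d * x ^ 2) := by fun_prop
      have h2 := (hc.tendsto 0).comp tendsto_one_div_add_atTop_nhds_zero_nat
      simpa [Function.comp_def] using h2)
  refine lt_of_le_of_lt (le_of_tendsto' hlim fun n => ?_) (ENNReal.ofReal_lt_top (r := 2 * Real.pi))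
  have hn : 0 < 1 / ((n : ℝ) + 1) := by positivity
  rw [← ofReal_integral_eq_lintegral_ofReal (gi _ hn)
    (Eventually.of_forall fun x => mul_nonneg (hK x) (Real.exp_pos _).le)]
  exact ENNReal.ofReal_le_ofReal (gle _ hn)

/-- Inversion of the cosine transform of an even function. -/
theorem integral_cos_integral_mul_cos {F : ℝ → ℝ} (hF : Integrable F) (hFc : Continuous F)
    (he : ∀ x, F (-x) = F x) (hi : Integrable fun x => ∫ s, F s * Real.cos (x * s)) (s : ℝ) :
    ∫ y, (∫ v, F v * Real.cos (y * v)) * Real.cos (s * y) = 2 * Real.pi * F s := by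
  set K : ℝ → ℝ := fun x => ∫ s, F s * Real.cos (x * s) with hKdef
  have hπ : (2 * Real.pi : ℝ) ≠ 0 := by positivity
  have Ke : ∀ x, K (-x) = K x := fun x => by simp [hKdef]
  have hfour : FourierTransform.fourier (fun x : ℝ => (F x : ℂ)) =
      fun w : ℝ => (K (2 * Real.pi * w) : ℂ) := by
    ext w
    rw [Real.fourier_eq', ← Ke, hKdef]
    simp only
    rw [← integral_even_mul_cexp hF he]
    congr 1
    ext v
    rw [smul_eq_mul]
    congr 4
    simp [mul_comm]
    ring
  have hKi : Integrable fun w : ℝ => (K (2 * Real.pi * w) : ℂ) := (hi.comp_mul_left' hπ).ofReal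
  have hinv := Continuous.fourierInv_fourier_eq (f := fun x : ℝ => (F x : ℂ)) (by fun_prop)
    hF.ofReal (by rw [hfour]; exact hKi)
  have h := congrFun hinv s
  rw [hfour, Real.fourierInv_eq'] at h
  have e : ∀ v : ℝ, Complex.exp (((2 * Real.pi * inner ℝ v s : ℝ) : ℂ) * Complex.I) •
      (K (2 * Real.pi * v) : ℂ) =
      (fun y : ℝ => Complex.exp ((s * y : ℝ) * Complex.I) * (K y : ℂ)) (2 * Real.pi * v) :=
    fun v => by
      simp only [smul_eq_mul]
      congr 4
      simp
      ring
  simp only [e] at h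
  rw [Measure.integral_comp_mul_left
    (fun y : ℝ => Complex.exp ((s * y : ℝ) * Complex.I) * (K y : ℂ)), integral_even_mul_cexp hi Ke,
    Complex.real_smul,
    ← Complex.ofReal_mul, Complex.ofReal_inj, abs_of_pos (by positivity)] at h
  rw [← h, mul_inv_cancel_left₀ hπ]

theorem one_sub_cos_le (s y : ℝ) : 1 - Real.cos (s * y) ≤ (2 + s ^ 2) * min 1 (y ^ 2) := by
  rw [mul_min_of_nonneg _ _ (by positivity)]
  refine le_min ?_ ?_
  · nlinarith [Real.neg_one_le_cos (s * y), sq_nonneg s]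
  · have := Real.one_sub_sq_div_two_le_cos (x := s * y)
    nlinarith [sq_nonneg (s * y), sq_nonneg y, mul_pow s y 2]

theorem integrable_one_sub_cos {α : ℝ} (h0 : 0 < α) (h1 : α < 1) (s : ℝ) :
    Integrable fun y : ℝ => (1 - Real.cos (s * y)) / |y| ^ (1 + 2 * α) := by
  refine Integrable.mono' ((integrable_levyWeight h0 h1).const_mul (2 + s ^ 2))
    (Measurable.aestronglyMeasurable (by fun_prop)) (Eventually.of_forall fun y => ?_)
  have : 0 ≤ 1 - Real.cos (s * y) := by linarith [Real.cos_le_one (s * y)]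
  rw [Real.norm_eq_abs, abs_of_nonneg (by positivity), levyWeight, ← mul_div_assoc]
  exact div_le_div_of_nonneg_right (one_sub_cos_le s y) (by positivity)

theorem integral_one_sub_cos {α : ℝ} (h0 : 0 < α) (s : ℝ) :
    ∫ y : ℝ, (1 - Real.cos (s * y)) / |y| ^ (1 + 2 * α) = fracNormConst α * |s| ^ (2 * α) := by
  rcases eq_or_ne s 0 with rfl | hs
  · simp [Real.zero_rpow (by positivity : (2 * α) ≠ 0)]
  have hs' : 0 < |s| := abs_pos.2 hs
  have e : ∀ y : ℝ, (1 - Real.cos (s * y)) / |y| ^ (1 + 2 * α) =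
      |s| ^ (1 + 2 * α) * (fun u : ℝ => (1 - Real.cos u) / |u| ^ (1 + 2 * α)) (s * y) := fun y => by
    simp only
    rw [abs_mul, Real.mul_rpow (abs_nonneg _) (abs_nonneg _)]
    have : |s| ^ (1 + 2 * α) ≠ 0 := (Real.rpow_pos_of_pos hs' _).ne'
    rw [← mul_div_assoc, mul_div_mul_left _ _ this]
  simp only [e]
  rw [integral_const_mul,
    Measure.integral_comp_mul_left (fun u : ℝ => (1 - Real.cos u) / |u| ^ (1 + 2 * α)),
    fracNormConst, smul_eq_mul, abs_inv, Real.rpow_add hs', Real.rpow_one]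
  field_simp

theorem fracNormConst_pos {α : ℝ} (h0 : 0 < α) (h1 : α < 1) : 0 < fracNormConst α := by
  have hi := integrable_one_sub_cos h0 h1 1
  simp only [one_mul] at hi
  rw [fracNormConst, integral_pos_iff_support_of_nonneg _ hi]
  · refine lt_of_lt_of_le (b := volume (Ioo 0 Real.pi)) (by simp [Real.pi_pos])
      (measure_mono fun u hu => ?_)
    have h2 : Real.cos u < 1 := by
      rw [← Real.cos_zero]
      exact Real.cos_lt_cos_of_nonneg_of_le_pi le_rfl hu.2.le hu.1
    have h3 : 0 < |u| ^ (1 + 2 * α) := Real.rpow_pos_of_pos (abs_pos.2 hu.1.ne') _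
    exact (div_pos (by linarith) h3).ne'
  · intro u
    exact div_nonneg (by simpa using Real.cos_le_one u) (by positivity)

theorem tendsto_truncLevy_symbol {α : ℝ} (h0 : 0 < α) (h1 : α < 1) (s : ℝ) :
    Tendsto (fun ε => ∫ y, (1 - Real.cos (s * y)) ∂(truncLevy α ε)) (𝓝[>] 0)
      (𝓝 (fracNormConst α * |s| ^ (2 * α))) := by
  simp only [integral_truncLevy]
  rw [← integral_one_sub_cos h0 s]
  exact tendsto_setIntegral_lt_abs (integrable_one_sub_cos h0 h1 s)

theorem integrable_exp_neg_symbol {α t : ℝ} (h0 : 0 < α) (h1 : α < 1) (ht : 0 < t) :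
    Integrable fun s : ℝ => Real.exp (-(t * (fracNormConst α * |s| ^ (2 * α)))) := by
  have hc := fracNormConst_pos h0 h1
  refine integrable_of_even (fun x => by simp) ?_
  refine (integrableOn_rpow_mul_exp_neg_mul_rpow (p := 2 * α) (s := 0)
    (b := t * fracNormConst α) (by norm_num) (by positivity) (by positivity)).congr_fun
    (fun s hs => ?_) measurableSet_Ioi
  have hs : 0 < s := hs
  rw [abs_of_pos hs]
  simp only [Real.rpow_zero, one_mul]
  congr 1
  ring

theorem continuous_symbol {α : ℝ} (h0 : 0 < α) :
    Continuous fun s : ℝ => fracNormConst α * |s| ^ (2 * α) :=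
  continuous_const.mul (continuous_abs.rpow_const fun _ => Or.inr (by positivity))

theorem fracSemigroupKernel_eq {α t : ℝ} (h0 : 0 < α) (h1 : α < 1) (ht : 0 < t) (x : ℝ) :
    fracSemigroupKernel α t x = (1 / (2 * Real.pi)) *
      ∫ s : ℝ, Real.exp (-(t * (fracNormConst α * |s| ^ (2 * α)))) * Real.cos (x * s) := by
  rw [fracSemigroupKernel]
  congr 1
  have e : ∀ s : ℝ, Complex.exp (((x * s : ℝ) : ℂ) * Complex.I
      - ((fracNormConst α * t * |s| ^ (2*α) : ℝ) : ℂ)) =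
      Complex.exp ((x * s : ℝ) * Complex.I) *
        (Real.exp (-(t * (fracNormConst α * |s| ^ (2 * α)))) : ℝ) := fun s => by
    rw [sub_eq_add_neg, Complex.exp_add, ← Complex.ofReal_neg, ← Complex.ofReal_exp]
    ring_nf
  simp only [e]
  rw [integral_even_mul_cexp (integrable_exp_neg_symbol h0 h1 ht) (fun s => by simp),
    Complex.ofReal_re]

theorem fracSemigroupKernel_neg {α t : ℝ} (h0 : 0 < α) (h1 : α < 1) (ht : 0 < t) (x : ℝ) :
    fracSemigroupKernel α t (-x) = fracSemigroupKernel α t x := by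
  rw [fracSemigroupKernel_eq h0 h1 ht, fracSemigroupKernel_eq h0 h1 ht]
  simp

theorem integrable_cos_integral_symbol {α t : ℝ} (h0 : 0 < α) (h1 : α < 1) (ht : 0 < t) :
    Integrable fun x : ℝ =>
      ∫ s : ℝ, Real.exp (-(t * (fracNormConst α * |s| ^ (2 * α)))) * Real.cos (x * s) := by
  have hc := fracNormConst_pos h0 h1
  refine integrable_cos_integral (integrable_exp_neg_symbol h0 h1 ht)
    (fun s => Real.exp_le_one_iff.2 (neg_nonpos.2 (by positivity))) fun x => ?_
  have hε : Tendsto (fun n : ℕ => 1 / ((n : ℝ) + 1)) atTop (𝓝[>] 0) :=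
    tendsto_nhdsWithin_iff.2 ⟨tendsto_one_div_add_atTop_nhds_zero_nat,
      Eventually.of_forall fun n => by simp only [mem_Ioi]; positivity⟩
  have : ∀ n : ℕ, IsFiniteMeasure (truncLevy α (1 / ((n : ℝ) + 1))) := fun n =>
    isFiniteMeasure_truncLevy h0 h1 (by positivity)
  exact integral_exp_neg_mul_cos_nonneg (fun n : ℕ => truncLevy α (1 / ((n : ℝ) + 1)))
    (fun s => (tendsto_truncLevy_symbol h0 h1 s).comp hε) (continuous_symbol h0) ht.le
    (integrable_exp_neg_symbol h0 h1 ht) x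

theorem integrable_fracSemigroupKernel {α t : ℝ} (h0 : 0 < α) (h1 : α < 1) (ht : 0 < t) :
    Integrable (fracSemigroupKernel α t) :=
  ((integrable_cos_integral_symbol h0 h1 ht).const_mul (1 / (2 * Real.pi))).congr
    (Eventually.of_forall fun x => (fracSemigroupKernel_eq h0 h1 ht x).symm)

theorem integral_fracSemigroupKernel_mul_cos {α t : ℝ} (h0 : 0 < α) (h1 : α < 1) (ht : 0 < t)
    (s : ℝ) : ∫ y, fracSemigroupKernel α t y * Real.cos (s * y) =
      Real.exp (-(t * (fracNormConst α * |s| ^ (2 * α)))) := by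
  have hsc := continuous_symbol h0
  simp only [fracSemigroupKernel_eq h0 h1 ht, mul_assoc]
  rw [integral_const_mul]
  simp only [← mul_assoc]
  have := integral_cos_integral_mul_cos (integrable_exp_neg_symbol h0 h1 ht) (by fun_prop)
    (fun x => by simp) (integrable_cos_integral_symbol h0 h1 ht) s
  simp only [mul_assoc] at this ⊢
  rw [this]
  field_simp

theorem integral_fracSemigroupKernel_mul_cos_sub {α t : ℝ} (h0 : 0 < α) (h1 : α < 1) (ht : 0 < t)
    (s c x : ℝ) : ∫ y, fracSemigroupKernel α t y * Real.cos (s * (x - y) + c) =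
      Real.exp (-(t * (fracNormConst α * |s| ^ (2 * α)))) * Real.cos (s * x + c) := by
  have hi := integrable_fracSemigroupKernel h0 h1 ht
  have hsin : ∫ y, fracSemigroupKernel α t y * Real.sin (s * y) = 0 := by
    have h := integral_neg_eq_self (fun y => fracSemigroupKernel α t y * Real.sin (s * y)) volume
    simp only [fracSemigroupKernel_neg h0 h1 ht, mul_neg, Real.sin_neg, integral_neg] at h
    linarith
  have e : ∀ y, fracSemigroupKernel α t y * Real.cos (s * (x - y) + c) =
      fracSemigroupKernel α t y * Real.cos (s * y) * Real.cos (s * x + c) +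
      fracSemigroupKernel α t y * Real.sin (s * y) * Real.sin (s * x + c) := fun y => by
    rw [show s * (x - y) + c = (s * x + c) - s * y by ring, Real.cos_sub]
    ring
  simp only [e]
  rw [integral_add, integral_mul_const, integral_mul_const, hsin,
    integral_fracSemigroupKernel_mul_cos h0 h1 ht]
  · ring
  · exact (hi.mul_bdd (c := 1) (Continuous.aestronglyMeasurable (by fun_prop))
      (Eventually.of_forall fun y => Real.abs_cos_le_one _)).mul_const _
  · exact (hi.mul_bdd (c := 1) (Continuous.aestronglyMeasurable (by fun_prop))
      (Eventually.of_forall fun y => Real.abs_sin_le_one _)).mul_const _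

/-- Pointwise convergence of `T n V` to the convolution `φ ∗ V`. -/
def TendstoConv (T : ℕ → BEnd (ℝ →ᵇ ℝ)) (φ : ℝ → ℝ) (V : ℝ →ᵇ ℝ) : Prop :=
  ∀ x, Tendsto (fun n => T n V x) atTop (𝓝 (∫ y, φ y * V (x - y)))

theorem integrable_mul_comp_sub {φ : ℝ → ℝ} (hφ : Integrable φ) (V : ℝ →ᵇ ℝ) (x : ℝ) :
    Integrable fun y => φ y * V (x - y) :=
  hφ.mul_bdd (c := ‖V‖) (Continuous.aestronglyMeasurable (by fun_prop))
    (Eventually.of_forall fun y => V.norm_coe_le_norm _)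

theorem TendstoConv.add {T : ℕ → BEnd (ℝ →ᵇ ℝ)} {φ : ℝ → ℝ} (hφ : Integrable φ)
    {V W : ℝ →ᵇ ℝ} (hV : TendstoConv T φ V) (hW : TendstoConv T φ W) :
    TendstoConv T φ (V + W) := fun x => by
  simp only [map_add, BoundedContinuousFunction.coe_add, Pi.add_apply, mul_add]
  rw [integral_add (integrable_mul_comp_sub hφ V x) (integrable_mul_comp_sub hφ W x)]
  exact (hV x).add (hW x)

theorem TendstoConv.smul {T : ℕ → BEnd (ℝ →ᵇ ℝ)} {φ : ℝ → ℝ}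
    {V : ℝ →ᵇ ℝ} (hV : TendstoConv T φ V) (c : ℝ) : TendstoConv T φ (c • V) := fun x => by
  simp only [map_smul, BoundedContinuousFunction.coe_smul, smul_eq_mul, mul_left_comm _ c]
  rw [integral_const_mul]
  exact (hV x).const_mul c

theorem TendstoConv.of_approx {T : ℕ → BEnd (ℝ →ᵇ ℝ)} {φ : ℝ → ℝ} (hφ : Integrable φ)
    (hT : ∀ n (f : ℝ →ᵇ ℝ) M, (∀ x, |f x| ≤ M) → ∀ x, |T n f x| ≤ M) {V : ℝ →ᵇ ℝ}
    (h : ∀ δ > 0, ∃ W, TendstoConv T φ W ∧ ∀ x, |V x - W x| ≤ δ) : TendstoConv T φ V := by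
  intro x
  have hI : 0 ≤ ∫ y, |φ y| := integral_nonneg fun y => abs_nonneg _
  rw [Metric.tendsto_atTop]
  intro ε hε
  obtain ⟨W, hW, hVW⟩ := h (ε / 2 / (2 + ∫ y, |φ y|)) (by positivity)
  set δ := ε / 2 / (2 + ∫ y, |φ y|) with hδ
  have hδ0 : 0 < δ := by positivity
  obtain ⟨n₀, hn₀⟩ := Metric.tendsto_atTop.1 (hW x) δ hδ0
  refine ⟨n₀, fun n hn => ?_⟩
  have a1 : |T n V x - T n W x| ≤ δ := by
    have := hT n (V - W) δ hVW x
    rwa [map_sub] at this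
  have a2 := hn₀ n hn
  rw [Real.dist_eq] at a2 ⊢
  have a3 : |(∫ y, φ y * W (x - y)) - ∫ y, φ y * V (x - y)| ≤ δ * ∫ y, |φ y| := by
    rw [← integral_sub (integrable_mul_comp_sub hφ W x) (integrable_mul_comp_sub hφ V x),
      ← integral_const_mul]
    refine norm_integral_le_of_norm_le (f := fun y => φ y * W (x - y) - φ y * V (x - y))
      (hφ.abs.const_mul δ) (Eventually.of_forall fun y => ?_)
    rw [← mul_sub, Real.norm_eq_abs, abs_mul, mul_comm, abs_sub_comm]
    exact mul_le_mul_of_nonneg_right (hVW _) (abs_nonneg _)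
  have a4 : δ * (2 + ∫ y, |φ y|) = ε / 2 := by rw [hδ]; field_simp
  calc |T n V x - ∫ y, φ y * V (x - y)|
      = |(T n V x - T n W x) + (T n W x - ∫ y, φ y * W (x - y)) +
          ((∫ y, φ y * W (x - y)) - ∫ y, φ y * V (x - y))| := by congr 1; ring
    _ ≤ |T n V x - T n W x| + |T n W x - ∫ y, φ y * W (x - y)| +
          |(∫ y, φ y * W (x - y)) - ∫ y, φ y * V (x - y)| := abs_add_three _ _ _
    _ < ε := by nlinarith

/-- The bounded continuous function `x ↦ cos (s * x + c)`. -/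
def cosBCF (s c : ℝ) : ℝ →ᵇ ℝ :=
  BoundedContinuousFunction.ofNormedAddCommGroup (fun x => Real.cos (s * x + c)) (by fun_prop) 1
    fun _ => Real.abs_cos_le_one _

theorem cosBCF_apply (s c x : ℝ) : cosBCF s c x = Real.cos (s * x + c) := rfl

/-- The real part of `z * p`, for `p` a continuous function on the circle, as a function on the
line. -/
def circleRe {per : ℝ} [Fact (0 < per)] (z : ℂ) (p : C(AddCircle per, ℂ)) : ℝ →ᵇ ℝ :=
  BoundedContinuousFunction.ofNormedAddCommGroup (fun x : ℝ => (z * p (x : AddCircle per)).re)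
    (by
      have := AddCircle.continuous_mk' per
      exact Complex.continuous_re.comp (continuous_const.mul (p.continuous.comp this)))
    (‖z‖ * ‖p‖) fun x => (Complex.abs_re_le_norm _).trans (by
      rw [norm_mul]
      exact mul_le_mul_of_nonneg_left (p.norm_coe_le_norm _) (norm_nonneg _))

theorem circleRe_apply {per : ℝ} [Fact (0 < per)] (z : ℂ) (p : C(AddCircle per, ℂ)) (x : ℝ) :
    circleRe z p x = (z * p (x : AddCircle per)).re := rfl

theorem circleRe_fourier {per : ℝ} [Fact (0 < per)] (z : ℂ) (n : ℤ) :
    circleRe z (fourier n : C(AddCircle per, ℂ)) =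
      z.re • cosBCF (2 * Real.pi * n / per) 0 +
        z.im • cosBCF (2 * Real.pi * n / per) (Real.pi / 2) := by
  ext x
  have e : (2 * Real.pi * Complex.I * n * x / per : ℂ) =
      ((2 * Real.pi * n / per * x : ℝ) : ℂ) * Complex.I := by
    push_cast
    ring
  rw [circleRe_apply, fourier_coe_apply, e, Complex.mul_re, Complex.exp_ofReal_mul_I_re,
    Complex.exp_ofReal_mul_I_im]
  simp only [BoundedContinuousFunction.coe_add, BoundedContinuousFunction.coe_smul, Pi.add_apply,
    smul_eq_mul, cosBCF_apply, Real.cos_add_pi_div_two, add_zero]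
  ring

theorem TendstoConv.circleRe_of_mem_span {per : ℝ} [Fact (0 < per)] {T : ℕ → BEnd (ℝ →ᵇ ℝ)}
    {φ : ℝ → ℝ} (hφ : Integrable φ) (hcos : ∀ s c, TendstoConv T φ (cosBCF s c))
    {p : C(AddCircle per, ℂ)} (hp : p ∈ Submodule.span ℂ (range <| @fourier per)) :
    ∀ z : ℂ, TendstoConv T φ (circleRe z p) := by
  induction hp using Submodule.span_induction with
  | mem p hp =>
    obtain ⟨n, rfl⟩ := hp
    intro z
    rw [circleRe_fourier]
    exact ((hcos _ _).smul _).add hφ ((hcos _ _).smul _)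
  | zero =>
    intro z
    have e : circleRe z (0 : C(AddCircle per, ℂ)) = (0 : ℝ) • cosBCF 0 0 := by
      ext x
      simp [circleRe_apply]
    rw [e]
    exact (hcos _ _).smul _
  | add p q _ _ hp hq =>
    intro z
    have e : circleRe z (p + q) = circleRe z p + circleRe z q := by
      ext x
      simp only [circleRe_apply, ContinuousMap.add_apply, mul_add, Complex.add_re,
        BoundedContinuousFunction.coe_add, Pi.add_apply]
    rw [e]
    exact (hp z).add hφ (hq z)
  | smul a p _ hp =>
    intro z
    have e : circleRe z (a • p) = circleRe (z * a) p := by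
      ext x
      simp only [circleRe_apply, ContinuousMap.smul_apply, smul_eq_mul, mul_assoc]
    rw [e]
    exact hp _

theorem TendstoConv.of_periodic {per : ℝ} (hper : 0 < per) {T : ℕ → BEnd (ℝ →ᵇ ℝ)}
    {φ : ℝ → ℝ} (hφ : Integrable φ)
    (hT : ∀ n (f : ℝ →ᵇ ℝ) M, (∀ x, |f x| ≤ M) → ∀ x, |T n f x| ≤ M)
    (hcos : ∀ s c, TendstoConv T φ (cosBCF s c)) {V : ℝ →ᵇ ℝ} (hV : ∀ x, V (x + per) = V x) :
    TendstoConv T φ V := by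
  have : Fact (0 < per) := ⟨hper⟩
  have hVp : Function.Periodic (fun x : ℝ => (V x : ℂ)) per := fun x => by simp [hV]
  let P : C(AddCircle per, ℂ) := ⟨hVp.lift, by
    refine continuous_coinduced_dom.2 ?_
    exact Complex.continuous_ofReal.comp V.continuous⟩
  have hP : P ∈ (Submodule.span ℂ (range <| @fourier per)).topologicalClosure := by
    rw [span_fourier_closure_eq_top]
    trivial
  refine TendstoConv.of_approx hφ hT fun δ hδ => ?_
  obtain ⟨p, hp, hd⟩ := Metric.mem_closure_iff.1 hP δ hδ
  refine ⟨circleRe 1 p, TendstoConv.circleRe_of_mem_span hφ hcos hp 1, fun x => ?_⟩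
  have e : V x - circleRe 1 p x = ((P - p) (x : AddCircle per)).re := by
    rw [circleRe_apply, one_mul, ContinuousMap.sub_apply, Complex.sub_re]
    rfl
  rw [e]
  rw [dist_eq_norm] at hd
  exact (Complex.abs_re_le_norm _).trans (((P - p).norm_coe_le_norm _).trans hd.le)

theorem genOp_cosBCF (ν : Measure ℝ) [IsFiniteMeasure ν] [ν.IsNegInvariant] (s c : ℝ) :
    genOp ν (cosBCF s c) = (-∫ y, (1 - Real.cos (s * y)) ∂ν) • cosBCF s c := by
  ext x
  have i1 : Integrable (fun y => Real.cos (s * y)) ν := by simpa using integrable_cos ν s 0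
  have i2 : Integrable (fun y => Real.cos (s * y + (s * x + c))) ν := integrable_cos ν s _
  have e : ∀ y, Real.cos (s * (x + y) + c) = Real.cos (s * y + (s * x + c)) := fun y => by
    congr 1; ring
  rw [genOp_apply]
  simp only [cosBCF_apply, BoundedContinuousFunction.coe_smul, smul_eq_mul, e]
  rw [integral_sub i2 (integrable_const _), integral_sub (integrable_const _) i1,
    integral_cos_add, cosTransform]
  simp only [integral_const, smul_eq_mul]
  ring

theorem tendsto_jumpSemigroup_truncLevy {α h per : ℝ} (h0 : 0 < α) (h1 : α < 1) (hh : 0 < h)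
    (hper : 0 < per) {ε : ℕ → ℝ} (hε : Tendsto ε atTop (𝓝[>] 0))
    [∀ n, IsFiniteMeasure (truncLevy α (ε n))] {V : ℝ →ᵇ ℝ} (hV : ∀ x, V (x + per) = V x)
    (x : ℝ) :
    Tendsto (fun n => jumpSemigroup (truncLevy α (ε n)) h V x) atTop
      (𝓝 (∫ y, fracSemigroupKernel α h y * V (x - y))) := by
  refine TendstoConv.of_periodic hper (T := fun n => jumpSemigroup (truncLevy α (ε n)) h)
    (integrable_fracSemigroupKernel h0 h1 hh)
    (fun n f M hf x => abs_jumpSemigroup_le _ hh.le hf x) (fun s c x => ?_) hV x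
  simp only [jumpSemigroup_of_eigen _ h (genOp_cosBCF _ s c), cosBCF_apply,
    BoundedContinuousFunction.coe_smul, smul_eq_mul,
    integral_fracSemigroupKernel_mul_cos_sub h0 h1 hh]
  refine Tendsto.mul_const _ ((Real.continuous_exp.tendsto _).comp ?_)
  have := (((tendsto_truncLevy_symbol h0 h1 s).comp hε).neg).mul_const h
  rw [neg_mul, mul_comm _ h] at this
  exact this

theorem abs_deriv_le_of_increment {f : ℝ → ℝ} {x r K : ℝ} (hr : 0 < r) (hK : 0 ≤ K)
    (h : ∀ k ∈ Icc 0 r, |f (x + k) - f x| ≤ K * k) : |deriv f x| ≤ K := by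
  by_cases hd : DifferentiableAt ℝ f x
  · refine le_of_tendsto hd.hasDerivAt.tendsto_slope_zero_right.abs ?_
    filter_upwards [Ioo_mem_nhdsGT hr] with k hk
    rw [smul_eq_mul, abs_mul, abs_inv, abs_of_pos hk.1, inv_mul_le_iff₀ hk.1, mul_comm]
    exact h k ⟨hk.1.le, hk.2.le⟩
  · rwa [deriv_zero_of_not_differentiableAt hd, abs_zero]

theorem C3Bound.mono {f : ℝ → ℝ} {M M' : ℝ} (hf : C3Bound f M) (h : M ≤ M') : C3Bound f M' where
  contDiff := hf.contDiff
  b0 x := (hf.b0 x).trans h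
  b1 x := (hf.b1 x).trans h
  b2 x := (hf.b2 x).trans h
  b3 x := (hf.b3 x).trans h

theorem C3Bound.continuous {f : ℝ → ℝ} {M : ℝ} (hf : C3Bound f M) : Continuous f :=
  hf.contDiff.continuous

theorem neg_integral_truncLevy (α ε : ℝ) (f : ℝ → ℝ) (x : ℝ) :
    ∫ y, (f (x + y) - f x) ∂(truncLevy α ε) =
      -∫ y in {y : ℝ | ε < |y|}, (f x - f (x + y)) / |y| ^ (1 + 2 * α) := by
  rw [integral_truncLevy, ← integral_neg]
  congr 1
  ext y
  rw [← neg_div, neg_sub]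

theorem C3Bound.abs_pv_remainder_le {α ε : ℝ} (h0 : 0 < α) (h1 : α < 1) (hε : 0 < ε)
    {f l : ℝ → ℝ} {M : ℝ} (hf : C3Bound f M)
    (hl : ∀ x, Tendsto (fun ε => ∫ y in {y : ℝ | ε < |y|}, (f x - f (x + y)) / |y| ^ (1 + 2 * α))
      (𝓝[>] 0) (𝓝 (l x))) (x : ℝ) :
    |-l x - ∫ y, (f (x + y) - f x) ∂(truncLevy α ε)| ≤ 2 * M * levyTail α ε := by
  have := abs_pv_sub_le h0 h1 hε (contDiff_three_hasDerivAt hf.contDiff).1 hf.b0 hf.lip1 (hl x)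
  rw [neg_integral_truncLevy, ← abs_neg]
  convert this using 2
  ring

theorem C3Bound.abs_pv_remainder_sub_le {α ε : ℝ} (h0 : 0 < α) (h1 : α < 1) (hε : 0 < ε)
    {f l : ℝ → ℝ} {M : ℝ} (hf : C3Bound f M)
    (hl : ∀ x, Tendsto (fun ε => ∫ y in {y : ℝ | ε < |y|}, (f x - f (x + y)) / |y| ^ (1 + 2 * α))
      (𝓝[>] 0) (𝓝 (l x))) (x k : ℝ) :
    |(-l (x + k) - ∫ y, (f (x + k + y) - f (x + k)) ∂(truncLevy α ε)) -
      (-l x - ∫ y, (f (x + y) - f x) ∂(truncLevy α ε))| ≤ 2 * M * levyTail α ε * |k| := by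
  obtain ⟨f1, f2, -⟩ := contDiff_three_hasDerivAt hf.contDiff
  set g : ℝ → ℝ := fun y => f (y + k) - f y with hg
  have fi : ∀ x, ∀ ε > 0, IntegrableOn
      (fun y : ℝ => (f x - f (x + y)) / |y| ^ (1 + 2 * α)) {y : ℝ | ε < |y|} := fun x ε hε => by
    have hc := hf.continuous
    exact integrableOn_mul_div_rpow h0 h1 hε (u := fun y => f x - f (x + y)) (B := M + M)
      (by fun_prop) fun y => (abs_sub _ _).trans (add_le_add (hf.b0 _) (hf.b0 _))
  have gI : ∀ ε > 0, ∫ y in {y : ℝ | ε < |y|}, (g x - g (x + y)) / |y| ^ (1 + 2 * α) =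
      (∫ y in {y : ℝ | ε < |y|}, (f (x + k) - f (x + k + y)) / |y| ^ (1 + 2 * α)) -
      ∫ y in {y : ℝ | ε < |y|}, (f x - f (x + y)) / |y| ^ (1 + 2 * α) := fun ε hε => by
    rw [← integral_sub (fi _ ε hε) (fi _ ε hε)]
    congr 1
    ext y
    simp only [hg, add_right_comm x y k]
    ring
  have gl : Tendsto (fun ε => ∫ y in {y : ℝ | ε < |y|}, (g x - g (x + y)) / |y| ^ (1 + 2 * α))
      (𝓝[>] 0) (𝓝 (l (x + k) - l x)) := by
    refine ((hl (x + k)).sub (hl x)).congr' ?_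
    filter_upwards [self_mem_nhdsWithin] with ε hε using (gI ε hε).symm
  have := abs_pv_sub_le h0 h1 hε (f := g) (f' := fun y => deriv f (y + k) - deriv f y)
    (B := M * |k|) (fun y => ((f1 (y + k)).comp_add_const y k).sub (f1 y))
    (fun y => by simpa using hf.lip0 (y + k) y)
    (fun y z => abs_second_sub_le f2 hf.lip2 k y z) gl
  rw [gI ε hε] at this
  rw [neg_integral_truncLevy, neg_integral_truncLevy, ← abs_neg]
  refine (le_of_eq ?_).trans (this.trans (le_of_eq ?_))
  · congr 1
    ring
  · ring

/-- The splitting bounds for the principal value operator, obtained from finite jump measures by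
removing the truncation. -/
theorem pv_splitting_bounds {α h per M : ℝ} {θ Lθ w : ℝ → ℝ → ℝ} (h0 : 0 < α) (h1 : α < 1)
    (hh : 0 < h) (hper : 0 < per)
    (hθc : ContinuousOn (fun p : ℝ × ℝ => θ p.1 p.2) (univ ×ˢ Icc 0 h))
    (hθb : ∀ t ∈ Icc 0 h, C3Bound (fun x => θ x t) M)
    (hθp : ∀ t ∈ Icc 0 h, ∀ x, θ (x + per) t = θ x t)
    (hθl : ∀ t ∈ Icc (0:ℝ) h, ∀ x,
        Tendsto (fun ε => ∫ y in {y : ℝ | ε < |y|}, (θ x t - θ (x + y) t) / |y| ^ (1 + 2*α))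
          (𝓝[>] 0) (𝓝 (Lθ x t)))
    (hθt : ∀ x, ∀ t ∈ Icc 0 h, HasDerivWithinAt (fun s => θ x s)
      (θ x t * deriv (fun x' => θ x' t) x - Lθ x t) (Icc 0 h) t)
    (hw : IsSepBurgers w 0 h)
    (hwb : ∀ t ∈ Icc 0 h, C3Bound (fun x => w x t) M)
    (hwp : ∀ t ∈ Icc 0 h, ∀ x, w (x + per) t = w x t)
    (hw0 : ∀ x, w x 0 = θ x 0) {A : ℝ}
    (hA : A = Real.exp (M * h) * (10 * M * M * ((∫ y, levyWeight α y) * h) * h)) :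
    (∀ x, |θ x h - ∫ y, fracSemigroupKernel α h y * w (x - y) h| ≤ A) ∧
      ∀ x, ∀ k ∈ Icc 0 per,
        |(θ (x + k) h - ∫ y, fracSemigroupKernel α h y * w (x + k - y) h) -
        (θ x h - ∫ y, fracSemigroupKernel α h y * w (x - y) h)| ≤
        Real.exp (M * h) * ((M * A + 20 * M * M * ((∫ y, levyWeight α y) * h)) *
          Real.exp (M * h) * h * k) := by
  have hhm : h ∈ Icc 0 h := ⟨hh.le, le_rfl⟩
  set κ := ∫ y, levyWeight α y with hκ
  set ε : ℕ → ℝ := fun n => 1 / ((n : ℝ) + 1) with hεd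
  have ε0 : ∀ n, 0 < ε n := fun n => by rw [hεd]; positivity
  have hε : Tendsto ε atTop (𝓝[>] 0) := tendsto_nhdsWithin_iff.2
    ⟨tendsto_one_div_add_atTop_nhds_zero_nat, Eventually.of_forall fun n => ε0 n⟩
  have : ∀ n, IsFiniteMeasure (truncLevy α (ε n)) := fun n => isFiniteMeasure_truncLevy h0 h1 (ε0 n)
  let V : ℝ →ᵇ ℝ := BoundedContinuousFunction.ofNormedAddCommGroup (fun x => w x h)
    (hwb h hhm).continuous M (hwb h hhm).b0
  have hV : ∀ x, V x = w x h := fun x => rfl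
  have lim := tendsto_jumpSemigroup_truncLevy h0 h1 hh hper hε (V := V) (hwp h hhm)
  simp only [hV] at lim
  have hη : Tendsto (fun n => 2 * M * levyTail α (ε n)) atTop (𝓝 0) := by
    simpa using ((tendsto_levyTail h0 h1).comp hε).const_mul (2 * M)
  have key := fun n => splitting_bounds (truncLevy α (ε n)) (θ := θ) (Lθ := Lθ) (w := w)
    (integral_min_truncLevy_le h0 h1)
    hper hθc hθb hθp hθt
    (fun t ht => (hθb t ht).abs_pv_remainder_le h0 h1 (ε0 n) (l := fun x => Lθ x t) (hθl t ht))
    (fun t ht => (hθb t ht).abs_pv_remainder_sub_le h0 h1 (ε0 n) (l := fun x => Lθ x t) (hθl t ht))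
    hw hwb hwp hw0 hh.le hV rfl
  have hAn : Tendsto (fun n => Real.exp (M * h) *
      ((10 * M * M * (κ * h) + 2 * M * levyTail α (ε n)) * h)) atTop (𝓝 A) := by
    have := ((hη.const_add (10 * M * M * (κ * h))).mul_const h).const_mul (Real.exp (M * h))
    rwa [add_zero, ← hA] at this
  refine ⟨fun x => ?_, fun x k hk => ?_⟩
  · exact le_of_tendsto_of_tendsto' ((lim x).const_sub _).abs hAn fun n => (key n).1 x
  · have hB := (((((hAn.const_mul M).add (hη.const_add (20 * M * M * (κ * h)))).mul_const
      (Real.exp (M * h))).mul_const h).mul_const k).const_mul (Real.exp (M * h))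
    rw [add_zero] at hB
    exact le_of_tendsto_of_tendsto'
      (((lim (x + k)).const_sub _).sub ((lim x).const_sub _)).abs hB fun n => (key n).2 x k hk

/-- **Time-splitting approximation for the fractional Burgers equation (Prop. timesplit).**
For `0 < α < 1`, `N > 0` there are `h₀, C > 0` such that for `0 < h ≤ h₀`: if `θ` is a smooth
periodic solution of `∂_t θ = θ ∂_x θ − L_α θ` on `[0,h]` with `‖θ(·,t)‖_{C³} ≤ N`, `w` solves
the inviscid Burgers equation with `w(·,0) = θ(·,0)`, and `v(·,h) = Φ_h ∗ w(·,h)`, then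
`‖θ(·,h) − v(·,h)‖_{C¹} ≤ C h²`. -/
theorem burgers_time_splitting (α N : ℝ) (hα0 : 0 < α) (hα1 : α < 1) (hN : 0 < N) :
    ∃ h₀ > (0:ℝ), ∃ C > (0:ℝ), ∀ h per : ℝ, 0 < h → h ≤ h₀ → 0 < per →
      ∀ θ Lθ w : ℝ → ℝ → ℝ,
      ContDiffOn ℝ (⊤ : ℕ∞) (fun p : ℝ × ℝ => θ p.1 p.2) (univ ×ˢ Icc 0 h) →
      (∀ t ∈ Icc (0:ℝ) h, ∀ x, θ (x + per) t = θ x t) →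
      (∀ t ∈ Icc (0:ℝ) h, ∀ j ≤ 3, ∀ x, |iteratedDeriv j (fun x' => θ x' t) x| ≤ N) →
      (∀ t ∈ Icc (0:ℝ) h, ∀ x,
        Tendsto (fun ε => ∫ y in {y : ℝ | ε < |y|}, (θ x t - θ (x + y) t) / |y| ^ (1 + 2*α))
          (nhdsWithin 0 (Ioi 0)) (nhds (Lθ x t))) →
      (∀ x, ∀ t ∈ Icc (0:ℝ) h,
        HasDerivWithinAt (fun s => θ x s)
          (θ x t * deriv (fun x' => θ x' t) x - Lθ x t) (Icc 0 h) t) →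
      (∀ t ∈ Icc (0:ℝ) h, ContDiff ℝ 3 (fun x => w x t)) →
      (∀ x, w x 0 = θ x 0) →
      (∀ x, ∀ t ∈ Icc (0:ℝ) h,
        HasDerivWithinAt (fun s => w x s)
          (w x t * deriv (fun x' => w x' t) x) (Icc 0 h) t) →
      ∀ j ≤ 1, ∀ x,
        |iteratedDeriv j
          (fun x' => θ x' h - ∫ y : ℝ, fracSemigroupKernel α h y * w (x' - y) h) x|
          ≤ C * h ^ (2:ℕ) := by
  set κ := ∫ y, levyWeight α y with hκ
  have hκ0 : 0 ≤ κ := le_trans (integral_nonneg fun y => le_min zero_le_one (sq_nonneg y))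
    (integral_min_truncLevy_le (ε := 1) hα0 hα1)
  set M := 64 * N with hM
  have hM0 : 0 < M := by positivity
  set E := Real.exp 1 with hE
  have hE1 : 1 ≤ E := Real.one_le_exp zero_le_one
  refine ⟨1 / M, by positivity, E * E * (10 * E + 20) * (M * M * κ) + 1, by positivity,
    fun h per hh hh₀ hper θ Lθ w hθ hθp hθb hθl hθt hwc hw0 hwt => ?_⟩
  have hMh : M * h ≤ 1 := by rw [mul_comm]; exact (le_div_iff₀ hM0).1 hh₀
  have hexp : Real.exp (M * h) ≤ E := Real.exp_le_exp.2 hMh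
  have h0m : (0:ℝ) ∈ Icc 0 h := ⟨le_rfl, hh.le⟩
  have θb : ∀ t ∈ Icc (0:ℝ) h, C3Bound (fun x => θ x t) N := fun t ht => by
    refine C3Bound.of_iteratedDeriv ?_ (hθb t ht)
    have hc : ContDiff ℝ 3 fun x : ℝ => (x, t) := by fun_prop
    exact contDiffOn_univ.1 ((hθ.of_le (WithTop.coe_le_coe.2 (le_top : (3 : ℕ∞) ≤ ⊤))).comp
      hc.contDiffOn
      fun x _ => ⟨mem_univ x, ht⟩)
  have hw : IsSepBurgers w 0 h := ⟨fun t ht => (hwc t ht).of_le (by norm_num), hwt⟩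
  have hNt : ∀ t ∈ Icc (0:ℝ) h, N * t ≤ 1 / 2 := fun t ht => by
    nlinarith [mul_le_mul_of_nonneg_left ht.2 hN.le]
  have w0 : (fun x => w x 0) = fun x => θ x 0 := funext hw0
  have w0b : C3Bound (fun x => w x 0) N := w0 ▸ θb 0 h0m
  have hwb : ∀ t ∈ Icc (0:ℝ) h, C3Bound (fun x => w x t) M := fun t ht =>
    C3Bound.of_implicit (hwc t ht) w0b ht.1 (hNt t ht) fun x => hw.eq_initial x ht
  have hwp : ∀ t ∈ Icc (0:ℝ) h, ∀ x, w (x + per) t = w x t := fun t ht =>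
    periodic_of_implicit (f := fun x => w x t) w0b ht.1 (hNt t ht)
      (fun x => hw.eq_initial x ht) fun x => by simp only [hw0]; exact hθp 0 h0m x
  obtain ⟨b0, b1⟩ := pv_splitting_bounds hα0 hα1 hh hper hθ.continuousOn
    (fun t ht => (θb t ht).mono (by linarith)) hθp hθl hθt hw hwb hwp hw0 rfl
  rw [← hκ] at b0 b1
  set e := Real.exp (M * h) with he
  have he0 : 0 < e := Real.exp_pos _
  have hA : e * (10 * M * M * (κ * h) * h) ≤ E * (10 * (M * M * κ)) * h ^ 2 := by
    calc e * (10 * M * M * (κ * h) * h) ≤ E * (10 * M * M * (κ * h) * h) := by gcongr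
      _ = _ := by ring
  have hMA : M * (e * (10 * M * M * (κ * h) * h)) ≤ 10 * E * (M * M * κ) * h := by
    calc M * (e * (10 * M * M * (κ * h) * h)) ≤ M * (E * (10 * (M * M * κ)) * h ^ 2) := by gcongr
      _ = (10 * E * (M * M * κ) * h) * (M * h) := by ring
      _ ≤ (10 * E * (M * M * κ) * h) * 1 := by gcongr
      _ = _ := mul_one _
  intro j hj x
  interval_cases j
  · rw [iteratedDeriv_zero]
    refine (b0 x).trans (hA.trans ?_)
    gcongr
    have : E * 10 ≤ E * E * (10 * E + 20) := by
      nlinarith [mul_nonneg (zero_le_one.trans hE1) (zero_le_one.trans hE1)]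
    nlinarith [mul_le_mul_of_nonneg_right this (by positivity : 0 ≤ M * M * κ)]
  · rw [iteratedDeriv_one]
    refine (abs_deriv_le_of_increment hper (K := E * E * (10 * E + 20) * (M * M * κ) * h ^ 2)
      (by positivity) fun k hk => (b1 x k hk).trans ?_).trans (by gcongr; linarith)
    have hk0 := hk.1
    calc _ ≤ E * ((10 * E * (M * M * κ) * h + 20 * M * M * (κ * h)) * E * h * k) := by gcongr
      _ = _ := by ring

end
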